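/- Let q be a prime power, let G = SL(2, 𝔽_q) be the special linear group of degree 2 over the field with q elements, let p be any prime, and let P be a Sylow p-subgroup of G. Then for every irreducible complex character χ of G, the restriction χ_P is a sum of characters of the form λ^P induced from irreducible characters λ of subgroups Q ≤ P with χ(1)_p = |P : Q|. -/

import Mathlib

open scoped Classical

/-- The induced character (as a class function formula): for `f` a function on a
subgroup `H` of a finite group `G`, `inducedChar H f g = (1/|H|) ∑_{x ∈ G, xgx⁻¹ ∈ H} f (xgx⁻¹)`. -/
noncomputable def inducedChar {G : Type*} [Group G] [Fintype G] (H : Subgroup G)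
    (f : H → ℂ) : G → ℂ :=
  fun g => (Fintype.card H : ℂ)⁻¹ *
    ∑ x : G, if h : x * g * x⁻¹ ∈ H then f ⟨x * g * x⁻¹, h⟩ else 0

/-- `χ` is the character of an irreducible complex representation of `G`. -/
def IsIrreducibleCharacter {G : Type} [Group G] (χ : G → ℂ) : Prop :=
  ∃ V : FDRep ℂ G, CategoryTheory.Simple V ∧ χ = FDRep.character V

/-- The restriction of `χ` (a character of degree `d` of the ambient group `G`) to the
subgroup `P` is a sum of characters `λ^P` induced from irreducible characters `λ` of
subgroups `Q ≤ P` satisfying `d_p = |P : Q|` (the `p`-part of the degree equals the index). -/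
def SumInducedProperty (p : ℕ) {G : Type} [Group G] [Fintype G] (P : Subgroup G)
    (χ : G → ℂ) (d : ℕ) : Prop :=
  ∃ (n : ℕ) (Q : Fin n → Subgroup ↥P) (lam : (i : Fin n) → ↥(Q i) → ℂ),
    (∀ i, IsIrreducibleCharacter (lam i)) ∧
    (∀ i, p ^ (d.factorization p) = (Q i).index) ∧
    (∀ x : ↥P, χ ↑x = ∑ i, inducedChar (Q i) (lam i) x)

/-!
If `p` does not divide `χ(1)`, the irreducible constituents of `χ_P` themselves give the required
decomposition. Otherwise only a few character values matter, and these follow from numerical data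
without constructing any representation. By the Gelfand trick for the anti-automorphism exchanging
the diagonal entries, a nontrivial character of the unipotent subgroup `U` occurs at most once
in `χ_U`. Weighing `|χ|²` by fixed points on the projective line and using `∑ |χ|² = |G|` then
bounds the mass of `χ` on the elliptic elements, and nonnegativity of this mass leaves four cases:
linear, cuspidal (degree `q - 1` or `(q - 1) / 2`, zero on noncentral diagonal matrices), Steinberg
(degree `q`, zero on nontrivial unipotents) and principal series (degree `q + 1` or `(q + 1) / 2`,
zero on elliptic elements).

If `p` is odd or `p ∣ q`, this says that `χ` vanishes on `P` away from `1`, so `χ_P` is a multiple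
of the regular character. If `p = 2` and `q` is odd, `P` is a generalized quaternion subgroup of
the normalizer of a torus of order `q - 1` or `q + 1`, whichever is divisible by `4`. If `χ`
vanishes on `P` away from `±1`, then `χ_P` is a multiple of a character induced from `{±1}` or from
a cyclic subgroup of order four. In the remaining cases with `χ(1)` even, `χ(1) ≡ 2 (mod 4)`, all
`y` with `y² = -1` are conjugate, and `|χ(y)| ≤ 2`: on the cyclic part of `P` the constituents pair
off into characters induced from index two, and the bound on `χ(y)` lets the linear characters
of `P` pair off as well.
-/

section Irreducibility

variable {k G : Type} [Field k] [Group G]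

theorem isIrreducible_of_simple (V : FDRep k G) [CategoryTheory.Simple V] :
    Representation.IsIrreducible (V.ρ : Representation k G V) := by
  have : Nontrivial (Subrepresentation (V.ρ : Representation k G V)) := by
    refine ⟨⊥, ⊤, fun h => CategoryTheory.id_nonzero V ?_⟩
    have htop (v : V) : v ∈ (⊥ : Subrepresentation (V.ρ : Representation k G V)) := h ▸ trivial
    ext v
    exact htop v
  refine { eq_bot_or_eq_top := fun W => ?_ }
  let ι : FDRep.of W.toRepresentation ⟶ V :=
    ⟨CategoryTheory.InducedCategory.homMk (ModuleCat.ofHom W.toSubmodule.subtype), fun _ => rfl⟩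
  have : CategoryTheory.Mono ι :=
    CategoryTheory.ConcreteCategory.mono_of_injective ι Subtype.val_injective
  rcases eq_or_ne ι 0 with hzero | hne
  · refine Or.inl (eq_bot_iff.2 fun v hv => ?_)
    exact congrArg (fun f : FDRep.of W.toRepresentation ⟶ V => f.hom.hom.hom ⟨v, hv⟩) hzero
  · have : CategoryTheory.IsIso ι := CategoryTheory.isIso_of_mono_of_nonzero hne
    refine Or.inr (eq_top_iff.2 fun v _ => ?_)
    have hv : W.toSubmodule.subtype ((CategoryTheory.inv ι).hom.hom.hom v) = v :=
      congrArg (fun f : V ⟶ V => f.hom.hom.hom v) (CategoryTheory.IsIso.inv_hom_id ι)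
    exact hv ▸ ((CategoryTheory.inv ι).hom.hom.hom v).2

end Irreducibility

section Decomposition

variable {G : Type} [Group G] {V : Type} [AddCommGroup V] [Module ℂ V]
  (ρ : Representation ℂ G V)

theorem exists_isCompl_toSubmodule [Finite G] (W : Subrepresentation ρ) :
    ∃ W' : Subrepresentation ρ, IsCompl W.toSubmodule W'.toSubmodule := by
  have : NeZero (Nat.card G : ℂ) := ⟨Nat.cast_ne_zero.2 Nat.card_pos.ne'⟩
  obtain ⟨W', hdisjoint, hcodisjoint⟩ := exists_isCompl W
  exact ⟨W',
    disjoint_iff.2 (congrArg Subrepresentation.toSubmodule (disjoint_iff.1 hdisjoint)),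
    codisjoint_iff.2 (congrArg Subrepresentation.toSubmodule (codisjoint_iff.1 hcodisjoint))⟩

theorem exists_ne_bot_ne_top_of_not_isIrreducible [Nontrivial V] (hρ : ¬ ρ.IsIrreducible) :
    ∃ W : Subrepresentation ρ, W ≠ ⊥ ∧ W ≠ ⊤ := by
  by_contra! htrivial
  have : Nontrivial (Subrepresentation ρ) :=
    ⟨⊥, ⊤, fun h => bot_ne_top (α := Submodule ℂ V) (congrArg Subrepresentation.toSubmodule h)⟩
  exact hρ { eq_bot_or_eq_top := fun W => or_iff_not_imp_left.2 (htrivial W) }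

variable [FiniteDimensional ℂ V]

theorem character_eq_add_of_isCompl {W W' : Subrepresentation ρ}
    (hW : IsCompl W.toSubmodule W'.toSubmodule) :
    ρ.character = W.toRepresentation.character + W'.toRepresentation.character := by
  let N : Bool → Submodule ℂ V := fun b => bif b then W.toSubmodule else W'.toSubmodule
  have hN : DirectSum.IsInternal N :=
    (DirectSum.isInternal_submodule_iff_isCompl N (i := true) (j := false) (by simp)
      (by ext b; cases b <;> simp)).2 hW
  funext g
  have hmaps : ∀ b, Set.MapsTo (ρ g) (N b) (N b)
    | true => W.apply_mem_toSubmodule g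
    | false => W'.apply_mem_toSubmodule g
  exact (LinearMap.trace_eq_sum_trace_restrict hN hmaps).trans (Fintype.sum_bool _)

theorem isIrreducibleCharacter_character [Finite G] [ρ.IsIrreducible] :
    IsIrreducibleCharacter ρ.character := by
  have := Fintype.ofFinite G
  have hcard : (Nat.card G : ℂ) ≠ 0 := Nat.cast_ne_zero.2 Nat.card_pos.ne'
  have := invertibleOfNonzero hcard
  refine ⟨FDRep.of ρ, (FDRep.simple_iff_char_is_norm_one _).2 ?_, rfl⟩
  have hnorm := Representation.char_orthonormal ρ ρ
  rw [if_pos ⟨Representation.Equiv.refl ρ⟩, inv_mul_eq_iff_eq_mul₀ hcard, mul_one] at hnorm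
  exact hnorm

theorem isIrreducibleCharacter_monoidHom [Finite G] (l : G →* ℂ) : IsIrreducibleCharacter l := by
  have := Fintype.ofFinite G
  let σ : Representation ℂ G ℂ := ((Algebra.lmul ℂ ℂ : ℂ →ₐ[ℂ] Module.End ℂ ℂ) : ℂ →* _).comp l
  have hσ (g : G) : (FDRep.of σ).character g = l g := by
    have hscalar : (FDRep.of σ).ρ g = l g • LinearMap.id := rfl
    rw [FDRep.character, hscalar, map_smul, LinearMap.trace_id]
    simp
  refine ⟨FDRep.of σ, (FDRep.simple_iff_char_is_norm_one _).2 ?_, funext fun g => (hσ g).symm⟩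
  simp_rw [hσ, ← map_mul, mul_inv_cancel, map_one]
  simp

theorem character_mem_closure_isIrreducibleCharacter [Finite G] :
    ρ.character ∈ AddSubmonoid.closure {f | IsIrreducibleCharacter f} := by
  induction hn : Module.finrank ℂ V using Nat.strong_induction_on generalizing V with
  | _ n ih =>
  rcases subsingleton_or_nontrivial V with hV | hV
  · have hzero : ρ.character = 0 := by
      funext g
      simp [Representation.character, Subsingleton.elim (ρ g) 0]
    exact hzero ▸ zero_mem _
  by_cases hρ : ρ.IsIrreducible
  · exact AddSubmonoid.subset_closure (isIrreducibleCharacter_character ρ)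
  obtain ⟨W, hbot, htop⟩ := exists_ne_bot_ne_top_of_not_isIrreducible ρ hρ
  obtain ⟨W', hW⟩ := exists_isCompl_toSubmodule ρ W
  have hfinrank := Submodule.finrank_add_eq_of_isCompl hW
  have hlt : Module.finrank ℂ W.toSubmodule < Module.finrank ℂ V :=
    Submodule.finrank_lt fun h => htop (Subrepresentation.toSubmodule_injective h)
  have hpos : 0 < Module.finrank ℂ W.toSubmodule :=
    Submodule.one_le_finrank_iff.2 fun h => hbot (Subrepresentation.toSubmodule_injective h)
  rw [character_eq_add_of_isCompl ρ hW]
  exact add_mem (ih _ (by omega) W.toRepresentation rfl) (ih _ (by omega) W'.toRepresentation rfl)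

end Decomposition

section InducedSums

/-- The functions on `P` that are sums of characters induced from irreducible characters of
subgroups of index `m`. -/
def inducedSums (P : Type) [Group P] [Fintype P] (m : ℕ) : AddSubmonoid (P → ℂ) :=
  AddSubmonoid.closure
    {f | ∃ (Q : Subgroup P) (l : Q → ℂ), IsIrreducibleCharacter l ∧ Q.index = m ∧
      f = inducedChar Q l}

theorem sumInducedProperty_of_mem_inducedSums {p : ℕ} {G : Type} [Group G] [Fintype G]
    {P : Subgroup G} {χ : G → ℂ} {d : ℕ}
    (h : (fun x : P => χ x) ∈ inducedSums P (p ^ d.factorization p)) :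
    SumInducedProperty p P χ d := by
  obtain ⟨L, hL, hsum⟩ := AddSubmonoid.exists_list_of_mem_closure h
  choose Q l hirr hindex hind using fun i : Fin L.length => hL (L.get i) (L.get_mem i)
  refine ⟨L.length, Q, l, hirr, fun i => (hindex i).symm, fun x => ?_⟩
  have hx := congrFun hsum x
  rw [← L.ofFn_get, List.sum_ofFn, Finset.sum_apply] at hx
  exact hx.symm.trans (Finset.sum_congr rfl fun i _ => congrFun (hind i) x)

variable {P : Type} [Group P] [Fintype P]

theorem inducedChar_zero (Q : Subgroup P) : inducedChar Q 0 = 0 := by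
  funext g
  simp [inducedChar]

theorem inducedChar_add (Q : Subgroup P) (f f' : Q → ℂ) :
    inducedChar Q (f + f') = inducedChar Q f + inducedChar Q f' := by
  funext g
  simp only [inducedChar, Pi.add_apply, ← mul_add, ← Finset.sum_add_distrib]
  congr! 2 with x
  split_ifs <;> simp

theorem inducedChar_top {f : P → ℂ} (hf : ∀ g x, f (x * g * x⁻¹) = f g) :
    inducedChar ⊤ (fun x : (⊤ : Subgroup P) => f x) = f := by
  funext g
  simp [inducedChar, hf]

theorem inducedChar_mem_inducedSums {Q : Subgroup P} {l : Q → ℂ} (hl : IsIrreducibleCharacter l) :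
    inducedChar Q l ∈ inducedSums P Q.index :=
  AddSubmonoid.subset_closure ⟨Q, l, hl, rfl, rfl⟩

variable {V : Type} [AddCommGroup V] [Module ℂ V] [FiniteDimensional ℂ V]

theorem inducedChar_character_mem_inducedSums {Q : Subgroup P} (σ : Representation ℂ Q V) :
    inducedChar Q σ.character ∈ inducedSums P Q.index := by
  refine AddSubmonoid.closure_induction (motive := fun f _ => inducedChar Q f ∈ _)
    (fun l hl => inducedChar_mem_inducedSums hl) ?_ (fun f f' _ _ hf hf' => ?_)
    (character_mem_closure_isIrreducibleCharacter σ)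
  · exact inducedChar_zero Q ▸ zero_mem _
  · exact inducedChar_add Q f f' ▸ add_mem hf hf'

theorem character_mem_inducedSums_one (ρ : Representation ℂ P V) :
    ρ.character ∈ inducedSums P 1 := by
  rw [← inducedChar_top (f := ρ.character) ρ.char_conj, ← Subgroup.index_top (G := P)]
  exact inducedChar_character_mem_inducedSums (ρ.comp (⊤ : Subgroup P).subtype)

end InducedSums

section LinearMultiplicity

variable {H : Type} [Group H] [Fintype H] {V : Type} [AddCommGroup V] [Module ℂ V]
  (ρ : Representation ℂ H V) (l : H →* ℂ)

/-- The projection `|H|⁻¹ ∑ l(h⁻¹) ρ(h)` onto the isotypic component of the linear character `l`. -/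
noncomputable def isotypicProjection : Module.End ℂ V :=
  (Fintype.card H : ℂ)⁻¹ • ∑ h, l h⁻¹ • ρ h

theorem mul_isotypicProjection (h : H) :
    ρ h * isotypicProjection ρ l = l h • isotypicProjection ρ l := by
  rw [isotypicProjection, mul_smul_comm, smul_comm (l h), Finset.mul_sum,
    Finset.smul_sum (r := l h)]
  congr 1
  refine Fintype.sum_equiv (Equiv.mulLeft h) _ _ fun x => ?_
  have hl : l h * l (h * x)⁻¹ = l x⁻¹ := by
    rw [mul_comm, ← map_mul, mul_inv_rev, inv_mul_cancel_right]
  rw [Equiv.coe_mulLeft, smul_smul, hl, map_mul, mul_smul_comm]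

theorem isotypicProjection_mul (h : H) :
    isotypicProjection ρ l * ρ h = l h • isotypicProjection ρ l := by
  rw [isotypicProjection, smul_mul_assoc, smul_comm (l h), Finset.sum_mul,
    Finset.smul_sum (r := l h)]
  congr 1
  refine Fintype.sum_equiv (Equiv.mulRight h) _ _ fun x => ?_
  simp [smul_smul, ← map_mul]

theorem isIdempotentElem_isotypicProjection : IsIdempotentElem (isotypicProjection ρ l) := by
  rw [IsIdempotentElem]
  nth_rewrite 1 [isotypicProjection]
  simp only [smul_mul_assoc, Finset.sum_mul, mul_isotypicProjection, smul_smul, ← map_mul,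
    inv_mul_cancel, map_one, one_smul]
  simp [← Nat.cast_smul_eq_nsmul ℂ]

/-- The multiplicity of the linear character `l` in `ρ`. -/
noncomputable def linearMultiplicity : ℕ :=
  Module.finrank ℂ (LinearMap.range (isotypicProjection ρ l))

theorem linearMultiplicity_eq_sum_character [FiniteDimensional ℂ V] :
    (linearMultiplicity ρ l : ℂ) = (Fintype.card H : ℂ)⁻¹ * ∑ h, l h⁻¹ * ρ.character h := by
  have htrace := (LinearMap.IsIdempotentElem.isProj_range _
    (isIdempotentElem_isotypicProjection ρ l)).trace
  rw [linearMultiplicity, ← htrace]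
  simp [isotypicProjection, Representation.character]

theorem exists_sum_trace_mul_eq_natCast [FiniteDimensional ℂ V] {e : Module.End ℂ V}
    (he : IsIdempotentElem e) (hcomm : ∀ h, Commute (ρ h) e) :
    ∃ m : ℕ, (Fintype.card H : ℂ)⁻¹ * ∑ h, l h⁻¹ * LinearMap.trace ℂ V (ρ h * e) = m := by
  have hcomm' : Commute (isotypicProjection ρ l) e :=
    (Commute.sum_left _ _ _ fun h _ => (hcomm h).smul_left _).smul_left _
  have hidem := (isIdempotentElem_isotypicProjection ρ l).mul_of_commute hcomm' he
  refine ⟨_, Eq.trans ?_ (LinearMap.IsIdempotentElem.isProj_range _ hidem).trace⟩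
  simp [isotypicProjection, Finset.sum_mul]

end LinearMultiplicity

section Fourier

variable {A : Type} [AddCommGroup A] [Fintype A]

/-- The coefficient of the character `ψ` in the Fourier expansion of `f` on the finite abelian
group `A`, normalised so that `f = ∑ ψ, finiteFourierCoeff f ψ * ψ`. -/
noncomputable def finiteFourierCoeff (f : A → ℂ) (ψ : AddChar A ℂ) : ℂ :=
  (Fintype.card A : ℂ)⁻¹ * ∑ a, ψ (-a) * f a

theorem eq_sum_finiteFourierCoeff (f : A → ℂ) (a : A) :
    f a = ∑ ψ, finiteFourierCoeff f ψ * ψ a := by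
  have hA : (Fintype.card A : ℂ) ≠ 0 := Nat.cast_ne_zero.2 Fintype.card_ne_zero
  have hterm (ψ : AddChar A ℂ) : finiteFourierCoeff f ψ * ψ a =
      ∑ b, (Fintype.card A : ℂ)⁻¹ * f b * ψ (a - b) := by
    rw [finiteFourierCoeff, Finset.mul_sum, Finset.sum_mul]
    refine Finset.sum_congr rfl fun b _ => ?_
    rw [sub_eq_add_neg, AddChar.map_add_eq_mul]
    ring
  simp_rw [hterm]
  rw [Finset.sum_comm]
  simp_rw [← Finset.mul_sum, AddChar.sum_apply_eq_ite, sub_eq_zero, mul_ite, mul_zero]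
  rw [Finset.sum_ite_eq Finset.univ a, if_pos (Finset.mem_univ a)]
  field_simp

theorem sum_norm_sq_eq_finiteFourierCoeff (f : A → ℂ) :
    ∑ a, ‖f a‖ ^ 2 = Fintype.card A * ∑ ψ, ‖finiteFourierCoeff f ψ‖ ^ 2 := by
  have hcoeff (ψ : AddChar A ℂ) :
      ∑ a, ψ (-a) * f a = Fintype.card A * finiteFourierCoeff f ψ := by
    simp [finiteFourierCoeff]
  apply Complex.ofReal_injective
  push_cast
  simp_rw [← Complex.conj_mul']
  calc ∑ a, starRingEnd ℂ (f a) * f a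
      = ∑ a, ∑ ψ, starRingEnd ℂ (finiteFourierCoeff f ψ) * (ψ (-a) * f a) := by
        refine Finset.sum_congr rfl fun a _ => ?_
        conv_lhs => enter [1]; rw [eq_sum_finiteFourierCoeff f a]
        rw [map_sum, Finset.sum_mul]
        simp [AddChar.map_neg_eq_conj, mul_assoc]
    _ = Fintype.card A * ∑ ψ, starRingEnd ℂ (finiteFourierCoeff f ψ) * finiteFourierCoeff f ψ := by
        rw [Finset.sum_comm, Finset.mul_sum]
        exact Finset.sum_congr rfl fun ψ _ => by rw [← Finset.mul_sum, hcoeff, mul_left_comm]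

theorem norm_le_sum_norm_finiteFourierCoeff (f : A → ℂ) (a : A) :
    ‖f a‖ ≤ ∑ ψ, ‖finiteFourierCoeff f ψ‖ := by
  rw [eq_sum_finiteFourierCoeff f a]
  exact (norm_sum_le _ _).trans (Finset.sum_le_sum fun ψ _ => by simp)

theorem norm_le_of_natCast_finiteFourierCoeff {f : A → ℂ}
    (hf : ∀ ψ, ∃ m : ℕ, finiteFourierCoeff f ψ = m) (a : A) : ‖f a‖ ≤ ‖f 0‖ := by
  choose m hm using hf
  refine (norm_le_sum_norm_finiteFourierCoeff f a).trans_eq ?_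
  rw [eq_sum_finiteFourierCoeff f 0]
  simp only [hm, AddChar.map_zero_eq_one, mul_one, Complex.norm_natCast]
  exact_mod_cast (Complex.norm_natCast (∑ ψ, m ψ)).symm

theorem card_mul_norm_le_of_intCast_finiteFourierCoeff {f : A → ℂ}
    (hf : ∀ ψ, ∃ m : ℤ, finiteFourierCoeff f ψ = m) (a : A) :
    Fintype.card A * ‖f a‖ ≤ ∑ b, ‖f b‖ ^ 2 := by
  rw [sum_norm_sq_eq_finiteFourierCoeff]
  refine mul_le_mul_of_nonneg_left ((norm_le_sum_norm_finiteFourierCoeff f a).trans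
    (Finset.sum_le_sum fun ψ _ => ?_)) (Nat.cast_nonneg _)
  obtain ⟨m, hm⟩ := hf ψ
  rw [hm, Complex.norm_intCast]
  exact_mod_cast Int.le_self_sq _

theorem finiteFourierCoeff_sub_single (f : A → ℂ) (b : A) (c : ℂ) (ψ : AddChar A ℂ) :
    finiteFourierCoeff (f - Pi.single b (Fintype.card A * c)) ψ =
      finiteFourierCoeff f ψ - c * ψ (-b) := by
  have hA : (Fintype.card A : ℂ) ≠ 0 := Nat.cast_ne_zero.2 Fintype.card_ne_zero
  simp only [finiteFourierCoeff, Pi.sub_apply, mul_sub, Finset.sum_sub_distrib, Pi.single_apply,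
    mul_ite, mul_zero, Finset.sum_ite_eq', Finset.mem_univ, if_true]
  field_simp

theorem exists_finiteFourierCoeff_sub_single_eq_intCast {f : A → ℂ}
    (hf : ∀ ψ, ∃ m : ℤ, finiteFourierCoeff f ψ = m) {b : A} (hb : b + b = 0) {c : ℂ}
    (hc : c = 1 ∨ c = -1) (ψ : AddChar A ℂ) :
    ∃ m : ℤ, finiteFourierCoeff (f - Pi.single b (Fintype.card A * c)) ψ = m := by
  obtain ⟨m, hm⟩ := hf ψ
  have hψb : ψ (-b) * ψ (-b) = 1 := by
    rw [← AddChar.map_add_eq_mul, ← neg_add, hb, neg_zero, AddChar.map_zero_eq_one]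
  obtain ⟨k, hk⟩ : ∃ k : ℤ, c * ψ (-b) = k := by
    rcases hc with rfl | rfl <;> rcases mul_self_eq_one_iff.1 hψb with h | h <;> rw [h]
    exacts [⟨1, by simp⟩, ⟨-1, by simp⟩, ⟨-1, by simp⟩, ⟨1, by simp⟩]
  exact ⟨m - k, by rw [finiteFourierCoeff_sub_single, hm, hk, Int.cast_sub]⟩

theorem norm_le_two_of_intCast_finiteFourierCoeff {f : A → ℂ}
    (hf : ∀ ψ, ∃ m : ℤ, finiteFourierCoeff f ψ = m) {z : A} (hz : z ≠ 0) (hzz : z + z = 0) {ζ : ℂ}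
    (hζ : ζ = 1 ∨ ζ = -1) (hf0 : f 0 = Fintype.card A - 2) (hfz : f z = ζ * f 0)
    (hsum : ∑ a with a ≠ 0 ∧ a ≠ z, ‖f a‖ ^ 2 ≤ 2 * (Fintype.card A - 4)) {a : A} (ha0 : a ≠ 0)
    (haz : a ≠ z) : ‖f a‖ ≤ 2 := by
  -- Subtracting `|A| • (δ₀ + ζ δ_z)` keeps the Fourier coefficients integral and makes `f` small.
  set g : A → ℂ := f - Pi.single 0 ((Fintype.card A : ℂ) * 1) -
    Pi.single z ((Fintype.card A : ℂ) * ζ) with hg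
  have hint := exists_finiteFourierCoeff_sub_single_eq_intCast
    (exists_finiteFourierCoeff_sub_single_eq_intCast hf (add_zero 0) (.inl rfl)) hzz hζ
  have hgf {b : A} (hb : b ≠ 0 ∧ b ≠ z) : g b = f b := by simp [hg, hb.1, hb.2]
  have hg0 : ‖g 0‖ ^ 2 = 4 := by
    have : g 0 = -2 := by
      simp [hg, hf0, hz.symm]
    rw [this]
    norm_num
  have hgz : ‖g z‖ ^ 2 = 4 := by
    have : g z = -(2 * ζ) := by
      simp [hg, hfz, hf0, hz]
      ring
    rw [this]
    rcases hζ with rfl | rfl <;> norm_num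
  have hpair : (Finset.univ.filter fun b => ¬ (b ≠ 0 ∧ b ≠ z)) = {0, z} := by
    ext b
    simp [or_iff_not_imp_left]
  have hcard : (0 : ℝ) < Fintype.card A := Nat.cast_pos.2 Fintype.card_pos
  refine le_of_mul_le_mul_left ?_ hcard
  calc Fintype.card A * ‖f a‖ = Fintype.card A * ‖g a‖ := by rw [hgf ⟨ha0, haz⟩]
    _ ≤ ∑ b, ‖g b‖ ^ 2 := card_mul_norm_le_of_intCast_finiteFourierCoeff hint a
    _ = ∑ b with b ≠ 0 ∧ b ≠ z, ‖f b‖ ^ 2 + (4 + 4) := by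
        rw [← Finset.sum_filter_add_sum_filter_not Finset.univ fun b => b ≠ 0 ∧ b ≠ z, hpair,
          Finset.sum_pair hz.symm, hg0, hgz]
        congr 1
        exact Finset.sum_congr rfl fun b hb => by rw [hgf ((Finset.mem_filter_univ b).1 hb)]
    _ ≤ Fintype.card A * 2 := by linarith

end Fourier

section CharacterFourier

open scoped IsMulCommutative

variable {G : Type} [Group G] {V : Type} [AddCommGroup V] [Module ℂ V] [FiniteDimensional ℂ V]
  (ρ : Representation ℂ G V)

theorem finiteFourierCoeff_character {A : Type} [AddCommGroup A] [Fintype A]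
    (φ : Multiplicative A →* G) (ψ : AddChar A ℂ) :
    finiteFourierCoeff (fun a => ρ.character (φ (Multiplicative.ofAdd a))) ψ =
      linearMultiplicity (ρ.comp φ) ψ.toMonoidHom := by
  rw [linearMultiplicity_eq_sum_character, finiteFourierCoeff, Fintype.card_multiplicative]
  exact congrArg _ (Fintype.sum_equiv Multiplicative.ofAdd _ _ fun a => rfl)

theorem exists_finiteFourierCoeff_character_eq_natCast {B : Type} [CommGroup B] [Fintype B]
    (φ : B →* G) (ψ : AddChar (Additive B) ℂ) :
    ∃ m : ℕ, finiteFourierCoeff (fun b => ρ.character (φ b.toMul)) ψ = m :=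
  ⟨_, finiteFourierCoeff_character ρ (φ.comp (MulEquiv.multiplicativeAdditive B).toMonoidHom) ψ⟩

theorem character_inv_eq_conj [Finite G] (g : G) :
    ρ.character g⁻¹ = starRingEnd ℂ (ρ.character g) := by
  have := Fintype.ofFinite (Subgroup.zpowers g)
  let f : Additive (Subgroup.zpowers g) → ℂ := fun c => ρ.character c.toMul
  choose m hm using exists_finiteFourierCoeff_character_eq_natCast (B := Subgroup.zpowers g) ρ
    (Subgroup.zpowers g).subtype
  have hf (c : Additive (Subgroup.zpowers g)) : f (-c) = starRingEnd ℂ (f c) := by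
    rw [eq_sum_finiteFourierCoeff f, eq_sum_finiteFourierCoeff f c, map_sum]
    refine Finset.sum_congr rfl fun ψ _ => ?_
    rw [show finiteFourierCoeff f ψ = m ψ from hm ψ, map_mul, map_natCast, AddChar.map_neg_eq_conj]
  exact hf (Additive.ofMul ⟨g, Subgroup.mem_zpowers g⟩)

theorem sum_norm_sq_character [Fintype G] [ρ.IsIrreducible] :
    ∑ g, ‖ρ.character g‖ ^ 2 = Fintype.card G := by
  have hcard : (Nat.card G : ℂ) ≠ 0 := Nat.cast_ne_zero.2 Nat.card_pos.ne'
  have := invertibleOfNonzero hcard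
  have hnorm := Representation.char_orthonormal ρ ρ
  rw [if_pos ⟨Representation.Equiv.refl ρ⟩, inv_mul_eq_iff_eq_mul₀ hcard, mul_one,
    Nat.card_eq_fintype_card] at hnorm
  apply Complex.ofReal_injective
  push_cast
  rw [← hnorm]
  exact Finset.sum_congr rfl fun g _ => by
    rw [← Complex.mul_conj', character_inv_eq_conj]

end CharacterFourier

section Gelfand

variable {G : Type} [Group G] {V : Type} [AddCommGroup V] [Module ℂ V]
  (ρ : Representation ℂ G V) [ρ.IsIrreducible]

theorem range_le_of_stable (e : Module.End ℂ V) {K : Submodule ℂ V} (hK : K ≠ ⊥)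
    (hstable : ∀ g, ∀ v ∈ K, e (ρ g v) ∈ K) : LinearMap.range e ≤ K := by
  let W : Subrepresentation ρ :=
    { toSubmodule := ⨅ g, K.comap (e ∘ₗ ρ g)
      apply_mem_toSubmodule := fun g v hv => by
        simp only [Submodule.mem_iInf, Submodule.mem_comap, LinearMap.comp_apply] at hv ⊢
        exact fun h => by simpa using hv (h * g) }
  have hKW : K ≤ W.toSubmodule := fun v hv => by
    simpa [W] using fun g => hstable g v hv
  have hW : W = ⊤ := (eq_bot_or_eq_top W).resolve_left fun h =>
    hK (le_bot_iff.1 (hKW.trans_eq (congrArg Subrepresentation.toSubmodule h)))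
  rintro _ ⟨v, rfl⟩
  have hv : v ∈ W.toSubmodule := hW ▸ Submodule.mem_top
  simpa using (Submodule.mem_iInf _).1 hv 1

variable [FiniteDimensional ℂ V]

theorem exists_eq_smul_on_range_of_commute {e : Module.End ℂ V} (he : IsIdempotentElem e)
    (hcomm : ∀ g h, Commute (e * ρ g * e) (e * ρ h * e)) (g : G) :
    ∃ c : ℂ, ∀ v ∈ LinearMap.range e, e (ρ g v) = c • v := by
  have hfix {v : V} (hv : v ∈ LinearMap.range e) : e v = v :=
    (LinearMap.IsIdempotentElem.mem_range_iff he).1 hv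
  rcases subsingleton_or_nontrivial (LinearMap.range e) with hsub | hnontrivial
  · have hbot := (LinearMap.range e).eq_bot_of_subsingleton
    exact ⟨0, fun v hv => by simp [(Submodule.mem_bot ℂ).1 (hbot ▸ hv)]⟩
  obtain ⟨c, hc⟩ := Module.End.exists_eigenvalue
    ((e * ρ g).restrict (p := LinearMap.range e) fun v _ => ⟨ρ g v, rfl⟩)
  obtain ⟨⟨w, hwe⟩, hw, hw0⟩ := hc.exists_hasEigenvector
  have hw : e (ρ g w) = c • w := congrArg Subtype.val (Module.End.mem_eigenspace_iff.1 hw)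
  let K := LinearMap.range e ⊓ Module.End.eigenspace (e * ρ g * e) c
  have hwK : w ∈ K := ⟨hwe, Module.End.mem_eigenspace_iff.2 (by simpa [hfix hwe] using hw)⟩
  have hK : K ≠ ⊥ := fun h => hw0 (Subtype.ext ((Submodule.mem_bot ℂ).1 (h ▸ hwK)))
  have hstable (h : G) (x : V) (hx : x ∈ K) : e (ρ h x) ∈ K := by
    have hx' : e (ρ h x) = (e * ρ h * e) x := by simp [hfix hx.1]
    refine ⟨⟨_, rfl⟩, hx' ▸ Module.End.mem_eigenspace_iff.2 ?_⟩
    rw [← Module.End.mul_apply, (hcomm g h).eq, Module.End.mul_apply,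
      Module.End.mem_eigenspace_iff.1 hx.2, map_smul]
  refine ⟨c, fun v hv => ?_⟩
  have hvK := range_le_of_stable ρ e hK hstable hv
  simpa [hfix hv] using Module.End.mem_eigenspace_iff.1 hvK.2

theorem finrank_range_le_one_of_commute {e : Module.End ℂ V} (he : IsIdempotentElem e)
    (hcomm : ∀ g h, Commute (e * ρ g * e) (e * ρ h * e)) :
    Module.finrank ℂ (LinearMap.range e) ≤ 1 := by
  choose c hc using exists_eq_smul_on_range_of_commute ρ he hcomm
  rcases eq_or_ne (LinearMap.range e) ⊥ with hbot | hne
  · rw [hbot, finrank_bot]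
    exact zero_le_one
  obtain ⟨v, hv, hv0⟩ := Submodule.exists_mem_ne_zero_of_ne_bot hne
  have hle : LinearMap.range e ≤ ℂ ∙ v := by
    refine range_le_of_stable ρ e (by simpa using hv0) fun g w hw => ?_
    obtain ⟨a, rfl⟩ := Submodule.mem_span_singleton.1 hw
    exact Submodule.mem_span_singleton.2 ⟨a * c g, by simp [hc g v hv, mul_smul]⟩
  exact (Submodule.finrank_mono hle).trans (finrank_span_singleton hv0).le

variable {H : Type} [Group H] [Fintype H] (φ : H →* G) (l : H →* ℂ)

theorem linearMultiplicity_le_one_of_antiautomorphism (σ : G → G)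
    (hσ_mul : ∀ g h, σ (g * h) = σ h * σ g) (hσ_fix : ∀ h, σ (φ h) = φ h)
    (hσ : ∀ g, isotypicProjection (ρ.comp φ) l * ρ g * isotypicProjection (ρ.comp φ) l =
      isotypicProjection (ρ.comp φ) l * ρ (σ g) * isotypicProjection (ρ.comp φ) l) :
    linearMultiplicity (ρ.comp φ) l ≤ 1 := by
  set e := isotypicProjection (ρ.comp φ) l with he_def
  have he : e * e = e := isIdempotentElem_isotypicProjection (ρ.comp φ) l
  have hprod (g h : G) : e * ρ g * e * (e * ρ h * e) =
      (Fintype.card H : ℂ)⁻¹ • ∑ x, l x⁻¹ • (e * ρ (g * φ x * h) * e) := by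
    calc e * ρ g * e * (e * ρ h * e) = e * ρ g * (e * e) * ρ h * e := by noncomm_ring
      _ = e * ρ g * e * ρ h * e := by rw [he]
      _ = _ := by
        conv_lhs => enter [1, 1, 2]; rw [he_def, isotypicProjection]
        simp only [mul_smul_comm, smul_mul_assoc, Finset.mul_sum, Finset.sum_mul, map_mul,
          MonoidHom.comp_apply, mul_assoc]
  refine finrank_range_le_one_of_commute ρ he fun g h => ?_
  calc e * ρ g * e * (e * ρ h * e)
      = (Fintype.card H : ℂ)⁻¹ • ∑ x, l x⁻¹ • (e * ρ (σ h * φ x * σ g) * e) := by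
        rw [hprod]
        refine congrArg _ (Finset.sum_congr rfl fun x _ => ?_)
        rw [hσ, hσ_mul, hσ_mul, hσ_fix, ← mul_assoc (σ h)]
    _ = e * ρ h * e * (e * ρ g * e) := by rw [← hprod, ← hσ, ← hσ]

end Gelfand

section VanishingCharacters

theorem exists_conj_mem_of_not_dvd_index {G : Type} [Group G] [Finite G] {p : ℕ} [Fact p.Prime]
    {P H : Subgroup G} (hP : IsPGroup p P) (hH : ¬ p ∣ H.index) :
    ∃ g : G, ∀ x ∈ P, g⁻¹ * x * g ∈ H := by
  obtain ⟨a, ha⟩ := hP.nonempty_fixed_point_of_prime_not_dvd_card (G ⧸ H) hH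
  obtain ⟨g, rfl⟩ := QuotientGroup.mk_surjective a
  refine ⟨g, fun x hx => ?_⟩
  have hfix : (QuotientGroup.mk g : G ⧸ H) = QuotientGroup.mk (x * g) := (ha ⟨x, hx⟩).symm
  simpa [mul_assoc] using QuotientGroup.eq.1 hfix

variable {P : Type} [Group P] [Fintype P]

theorem inducedChar_eq_zero {Q : Subgroup P} (hQ : Q.Normal) (f : Q → ℂ) {x : P} (hx : x ∉ Q) :
    inducedChar Q f x = 0 := by
  have hconj (y : P) : y * x * y⁻¹ ∉ Q := fun h =>
    hx (by simpa [mul_assoc] using hQ.conj_mem _ h y⁻¹)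
  simp [inducedChar, hconj]

theorem inducedChar_eq_index_mul {Q : Subgroup P} (hQ : Q.Normal) {f : Q → ℂ} {x : P} (hx : x ∈ Q)
    (hf : ∀ y, f ⟨y * x * y⁻¹, hQ.conj_mem x hx y⟩ = f ⟨x, hx⟩) :
    inducedChar Q f x = Q.index * f ⟨x, hx⟩ := by
  have hcard : (Fintype.card P : ℂ) = Fintype.card Q * Q.index := by
    rw [← Nat.card_eq_fintype_card, ← Nat.card_eq_fintype_card, ← Nat.cast_mul, Q.card_mul_index]
  have hQ0 : (Fintype.card Q : ℂ) ≠ 0 := Nat.cast_ne_zero.2 Fintype.card_ne_zero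
  simp only [inducedChar, hQ.conj_mem x hx, dif_pos, hf]
  simp [hcard, hQ0, mul_assoc]

theorem mem_inducedSums_of_eq_mul {Q : Subgroup P} (hQ : Q.Normal) {l : Q →* ℂ}
    (hl : ∀ (x : Q) (y : P), l ⟨y * x * y⁻¹, hQ.conj_mem x x.2 y⟩ = l x) {f : P → ℂ} {r : ℕ}
    (hf : ∀ x : Q, f x = r * Q.index * l x) (hzero : ∀ x ∉ Q, f x = 0) :
    f ∈ inducedSums P Q.index := by
  have hsum : f = r • inducedChar Q l := by
    funext x
    rw [Pi.smul_apply, nsmul_eq_mul]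
    by_cases hx : x ∈ Q
    · rw [inducedChar_eq_index_mul hQ hx (hl ⟨x, hx⟩), ← mul_assoc]
      exact hf ⟨x, hx⟩
    · rw [hzero x hx, inducedChar_eq_zero hQ _ hx, mul_zero]
  rw [hsum]
  exact nsmul_mem (inducedChar_mem_inducedSums (isIrreducibleCharacter_monoidHom l)) r

variable {V : Type} [AddCommGroup V] [Module ℂ V] [FiniteDimensional ℂ V]

theorem card_dvd_finrank_of_character_eq_zero {H : Type} [Group H] [Finite H]
    (ρ : Representation ℂ H V) (hρ : ∀ x ≠ 1, ρ.character x = 0) :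
    Nat.card H ∣ Module.finrank ℂ V := by
  have := Fintype.ofFinite H
  have hmult := linearMultiplicity_eq_sum_character ρ 1
  have hH : (Fintype.card H : ℂ) ≠ 0 := Nat.cast_ne_zero.2 Fintype.card_ne_zero
  simp only [MonoidHom.one_apply, one_mul] at hmult
  rw [Fintype.sum_eq_single 1 hρ, ρ.char_one, eq_inv_mul_iff_mul_eq₀ hH] at hmult
  exact ⟨_, by rw [Nat.card_eq_fintype_card]; exact_mod_cast hmult.symm⟩

theorem character_mem_inducedSums_card (ρ : Representation ℂ P V)
    (hρ : ∀ x ≠ 1, ρ.character x = 0) : ρ.character ∈ inducedSums P (Nat.card P) := by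
  obtain ⟨r, hr⟩ := card_dvd_finrank_of_character_eq_zero ρ hρ
  rw [← Subgroup.index_bot]
  refine mem_inducedSums_of_eq_mul (l := 1) (r := r) inferInstance (fun _ _ => rfl) ?_
    fun x hx => hρ x (by simpa using hx)
  rintro ⟨_, rfl⟩
  simp [hr, mul_comm]

end VanishingCharacters

section SylowRestriction

variable {G : Type} [Group G] [Fintype G] {p : ℕ} {V : Type} [AddCommGroup V] [Module ℂ V]
  [FiniteDimensional ℂ V] (ρ : Representation ℂ G V)

theorem sumInducedProperty_of_not_dvd (P : Subgroup G) (hp : ¬ p ∣ Module.finrank ℂ V) :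
    SumInducedProperty p P ρ.character (Module.finrank ℂ V) := by
  apply sumInducedProperty_of_mem_inducedSums
  rw [Nat.factorization_eq_zero_of_not_dvd hp, pow_zero]
  exact character_mem_inducedSums_one (ρ.comp P.subtype)

theorem sumInducedProperty_of_character_eq_zero [Fact p.Prime] (P : Sylow p G)
    (hdvd : Module.finrank ℂ V ∣ Nat.card G) (hzero : ∀ x ∈ P, x ≠ 1 → ρ.character x = 0) :
    SumInducedProperty p (P : Subgroup G) ρ.character (Module.finrank ℂ V) := by
  have hzero' (x : (P : Subgroup G)) (hx : x ≠ 1) :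
      Representation.character (ρ.comp (P : Subgroup G).subtype) x = 0 :=
    hzero x x.2 (by simpa using hx)
  have hfinrank : Module.finrank ℂ V ≠ 0 := ne_zero_of_dvd_ne_zero Nat.card_pos.ne' hdvd
  have hcard : p ^ (Module.finrank ℂ V).factorization p = Nat.card P := by
    refine Nat.dvd_antisymm ?_ ?_
    · rw [P.card_eq_multiplicity]
      exact pow_dvd_pow p ((Nat.factorization_le_iff_dvd hfinrank Nat.card_pos.ne').2 hdvd p)
    · have hdvd' := card_dvd_finrank_of_character_eq_zero _ hzero'
      rw [P.card_eq_multiplicity] at hdvd' ⊢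
      exact pow_dvd_pow p ((Fact.out : p.Prime).pow_dvd_iff_le_factorization hfinrank |>.1 hdvd')
  apply sumInducedProperty_of_mem_inducedSums
  rw [hcard]
  exact character_mem_inducedSums_card (ρ.comp (P : Subgroup G).subtype) hzero'

end SylowRestriction

/-! ### Special linear groups of degree two -/

/-- The group `SL(2, F)`. -/
abbrev SL2 (F : Type) [Field F] := Matrix.SpecialLinearGroup (Fin 2) F

section Matrices

variable {F : Type} [Field F]

theorem eq_of_entries_eq {g h : SL2 F} (h00 : g 0 0 = h 0 0) (h01 : g 0 1 = h 0 1)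
    (h10 : g 1 0 = h 1 0) (h11 : g 1 1 = h 1 1) : g = h := by
  ext i j
  fin_cases i <;> fin_cases j <;> assumption

theorem entries_det (g : SL2 F) : g 0 0 * g 1 1 - g 0 1 * g 1 0 = 1 := by
  rw [← Matrix.det_fin_two, g.det_coe]

@[simp]
theorem mul_entry (g h : SL2 F) (i j : Fin 2) : (g * h) i j = g i 0 * h 0 j + g i 1 * h 1 j := by
  rw [Matrix.SpecialLinearGroup.coe_mul, Matrix.mul_apply, Fin.sum_univ_two]

/-- The unipotent matrix `!![1, x; 0, 1]`. -/
def unipotent (x : F) : SL2 F := ⟨!![1, x; 0, 1], by simp⟩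

/-- The diagonal matrix with entries `a` and `a⁻¹`. -/
def diagonal (a : Fˣ) : SL2 F := ⟨!![(a : F), 0; 0, (a : F)⁻¹], by simp⟩

@[simp]
theorem coe_unipotent (x : F) :
    (unipotent x : Matrix (Fin 2) (Fin 2) F) = !![1, x; 0, 1] := rfl

@[simp]
theorem coe_diagonal (a : Fˣ) :
    (diagonal a : Matrix (Fin 2) (Fin 2) F) = !![(a : F), 0; 0, (a : F)⁻¹] := rfl

/-- The homomorphism from the additive group of `F` onto the upper unipotent subgroup. -/
def unipotentHom : Multiplicative F →* SL2 F where
  toFun x := unipotent x.toAdd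
  map_one' := by apply eq_of_entries_eq <;> simp
  map_mul' x y := by apply eq_of_entries_eq <;> simp [add_comm]

/-- The homomorphism from the multiplicative group of `F` onto the diagonal subgroup. -/
def diagonalHom : Fˣ →* SL2 F where
  toFun := diagonal
  map_one' := by apply eq_of_entries_eq <;> simp
  map_mul' a b := by apply eq_of_entries_eq <;> simp [mul_comm]

theorem diagonal_neg_one : diagonal (-1 : Fˣ) = -1 := by
  apply eq_of_entries_eq <;> simp

theorem unipotent_mul_sq (a : Fˣ) (x : F) :
    unipotent (x * a ^ 2) = diagonal a * unipotent x * (diagonal a)⁻¹ := by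
  apply eq_of_entries_eq <;> simp [Matrix.adjugate_fin_two]
  ring

/-- The anti-automorphism of `SL(2, F)` exchanging the two diagonal entries. -/
def swapDiagonal (g : SL2 F) : SL2 F :=
  ⟨!![g 1 1, g 0 1; g 1 0, g 0 0], by rw [Matrix.det_fin_two_of, mul_comm, entries_det]⟩

@[simp]
theorem coe_swapDiagonal (g : SL2 F) :
    (swapDiagonal g : Matrix (Fin 2) (Fin 2) F) = !![g 1 1, g 0 1; g 1 0, g 0 0] := rfl

theorem swapDiagonal_mul (g h : SL2 F) :
    swapDiagonal (g * h) = swapDiagonal h * swapDiagonal g := by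
  apply eq_of_entries_eq <;> simp <;> ring

theorem swapDiagonal_unipotent (x : F) : swapDiagonal (unipotent x) = unipotent x := by
  apply eq_of_entries_eq <;> simp

theorem exists_bruhat_of_ne_zero {g : SL2 F} (hc : g 1 0 ≠ 0) : ∃ (w : SL2 F) (x y : F),
    swapDiagonal w = w ∧ g = unipotent x * w * unipotent y := by
  obtain ⟨w, hw⟩ : ∃ w : SL2 F, (w : Matrix (Fin 2) (Fin 2) F) = !![0, -(g 1 0)⁻¹; g 1 0, 0] :=
    ⟨⟨_, by simp [hc]⟩, rfl⟩
  refine ⟨w, g 0 0 / g 1 0, g 1 1 / g 1 0, ?_, ?_⟩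
  · apply eq_of_entries_eq <;> simp [hw]
  · apply eq_of_entries_eq <;> simp [hw] <;> field_simp
    linear_combination -entries_det g

end Matrices

section WhittakerModels

variable {F : Type} [Field F] [Fintype F] {V : Type} [AddCommGroup V] [Module ℂ V]
  (ρ : Representation ℂ (SL2 F) V) (ψ : AddChar F ℂ)

/-- The projection onto the vectors on which the upper unipotent subgroup acts through `ψ`. -/
noncomputable def whittakerProjection : Module.End ℂ V :=
  isotypicProjection (ρ.comp unipotentHom) ψ.toMonoidHom

theorem whittakerProjection_sandwich (x y : F) (g : SL2 F) :
    whittakerProjection ρ ψ * ρ (unipotent x * g * unipotent y) * whittakerProjection ρ ψ =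
      (ψ x * ψ y) • (whittakerProjection ρ ψ * ρ g * whittakerProjection ρ ψ) := by
  have hleft : ρ (unipotent y) * whittakerProjection ρ ψ = ψ y • whittakerProjection ρ ψ :=
    mul_isotypicProjection (ρ.comp unipotentHom) ψ.toMonoidHom (.ofAdd y)
  have hright : whittakerProjection ρ ψ * ρ (unipotent x) = ψ x • whittakerProjection ρ ψ :=
    isotypicProjection_mul (ρ.comp unipotentHom) ψ.toMonoidHom (.ofAdd x)
  rw [map_mul, map_mul, mul_assoc, mul_assoc _ _ (whittakerProjection ρ ψ), hleft, ← mul_assoc,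
    ← mul_assoc, hright]
  simp only [smul_mul_assoc, mul_smul_comm, smul_smul, mul_comm (ψ y)]

theorem whittakerProjection_sandwich_eq_zero (hψ : ψ ≠ 0) {g : SL2 F} (hc : g 1 0 = 0)
    (had : g 0 0 ≠ g 1 1) : whittakerProjection ρ ψ * ρ g * whittakerProjection ρ ψ = 0 := by
  obtain ⟨w, hw⟩ := AddChar.ne_zero_iff.1 hψ
  have hne : g 0 0 - g 1 1 ≠ 0 := sub_ne_zero.2 had
  have hfix : unipotent (g 0 0 * w / (g 0 0 - g 1 1)) * g *
      unipotent (-(w * g 1 1 / (g 0 0 - g 1 1))) = g := by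
    apply eq_of_entries_eq <;> simp [hc]
    field_simp
    ring
  have heig := whittakerProjection_sandwich ρ ψ (g 0 0 * w / (g 0 0 - g 1 1))
    (-(w * g 1 1 / (g 0 0 - g 1 1))) g
  have hsum : g 0 0 * w / (g 0 0 - g 1 1) + -(w * g 1 1 / (g 0 0 - g 1 1)) = w := by
    field_simp
    ring
  rw [hfix, ← AddChar.map_add_eq_mul, hsum] at heig
  by_contra hzero
  exact hw (smul_left_injective ℂ hzero (by simpa only [one_smul] using heig.symm))

theorem whittakerProjection_sandwich_swapDiagonal (hψ : ψ ≠ 0) (g : SL2 F) :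
    whittakerProjection ρ ψ * ρ g * whittakerProjection ρ ψ =
      whittakerProjection ρ ψ * ρ (swapDiagonal g) * whittakerProjection ρ ψ := by
  by_cases hc : g 1 0 = 0
  · by_cases had : g 0 0 = g 1 1
    · have hg : swapDiagonal g = g := by apply eq_of_entries_eq <;> simp [had]
      rw [hg]
    · rw [whittakerProjection_sandwich_eq_zero ρ ψ hψ hc had,
        whittakerProjection_sandwich_eq_zero ρ ψ hψ (by simpa using hc)
          (by simpa using Ne.symm had)]
  · obtain ⟨w, x, y, hw, hg⟩ := exists_bruhat_of_ne_zero hc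
    rw [hg, swapDiagonal_mul, swapDiagonal_mul, swapDiagonal_unipotent, swapDiagonal_unipotent, hw,
      ← mul_assoc, whittakerProjection_sandwich, whittakerProjection_sandwich, mul_comm (ψ x)]

/-- The multiplicity of `ψ` in the restriction of `ρ` to the upper unipotent subgroup. -/
noncomputable def whittakerMultiplicity : ℕ :=
  linearMultiplicity (ρ.comp unipotentHom) ψ.toMonoidHom

theorem whittakerMultiplicity_le_one [FiniteDimensional ℂ V] [ρ.IsIrreducible]
    (hψ : ψ ≠ 0) : whittakerMultiplicity ρ ψ ≤ 1 :=
  linearMultiplicity_le_one_of_antiautomorphism ρ unipotentHom ψ.toMonoidHom swapDiagonal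
    swapDiagonal_mul (fun x => swapDiagonal_unipotent x.toAdd)
    (whittakerProjection_sandwich_swapDiagonal ρ ψ hψ)

end WhittakerModels

section SquareClasses

variable {F : Type} [Field F]

theorem eq_apply_one_of_isSquare {μ : F → ℕ} (hμ : ∀ s a, a ≠ 0 → μ (s * a ^ 2) = μ s) {s : F}
    (hs : s ≠ 0) (hsq : IsSquare s) : μ s = μ 1 := by
  obtain ⟨a, rfl⟩ := hsq
  rw [← hμ 1 a (left_ne_zero_of_mul hs), one_mul, sq]

variable [Fintype F]

theorem sum_erase_zero_of_ringChar_eq_two (hF : ringChar F = 2) {μ : F → ℕ}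
    (hμ : ∀ s a, a ≠ 0 → μ (s * a ^ 2) = μ s) :
    ∑ s ∈ Finset.univ.erase 0, μ s = (Fintype.card F - 1) * μ 1 := by
  rw [Finset.sum_congr rfl fun s hs => eq_apply_one_of_isSquare hμ (Finset.ne_of_mem_erase hs)
    (FiniteField.isSquare_of_char_two hF s), Finset.sum_const,
    Finset.card_erase_of_mem (Finset.mem_univ _), Finset.card_univ, smul_eq_mul]

theorem exists_two_mul_sum_erase_zero (hF : ringChar F ≠ 2) {μ : F → ℕ}
    (hμ : ∀ s a, a ≠ 0 → μ (s * a ^ 2) = μ s) :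
    ∃ ε ≠ 0, 2 * ∑ s ∈ Finset.univ.erase 0, μ s = (Fintype.card F - 1) * (μ 1 + μ ε) := by
  obtain ⟨ε, hε⟩ := FiniteField.exists_nonsquare hF
  have hε0 : ε ≠ 0 := fun h => hε (h ▸ IsSquare.zero)
  have hnonsquare {s : F} (hs : s ≠ 0) (hsq : ¬ IsSquare s) : μ s = μ ε := by
    have hprod : IsSquare (s * ε) := by
      rw [← quadraticChar_one_iff_isSquare (mul_ne_zero hs hε0), map_mul,
        quadraticChar_neg_one_iff_not_isSquare.2 hsq, quadraticChar_neg_one_iff_not_isSquare.2 hε,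
        neg_mul_neg, one_mul]
    obtain ⟨a, ha⟩ := hprod
    have ha0 : a ≠ 0 := left_ne_zero_of_mul (ha ▸ mul_ne_zero hs hε0)
    rw [← hμ ε (a / ε) (div_ne_zero ha0 hε0)]
    congr 1
    field_simp
    linear_combination ha
  have hterm : ∀ s ∈ Finset.univ.erase (0 : F),
      (2 * μ s : ℤ) = (μ 1 + μ ε) + quadraticChar F s * (μ 1 - μ ε) := fun s hs => by
    have hs0 := Finset.ne_of_mem_erase hs
    by_cases hsq : IsSquare s
    · rw [eq_apply_one_of_isSquare hμ hs0 hsq, (quadraticChar_one_iff_isSquare hs0).2 hsq]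
      ring
    · rw [hnonsquare hs0 hsq, quadraticChar_neg_one_iff_not_isSquare.2 hsq]
      ring
  have hsum : ∑ s ∈ Finset.univ.erase (0 : F), quadraticChar F s = 0 := by
    rw [Finset.sum_erase _ (quadraticChar_zero (F := F)), quadraticChar_sum_zero hF]
  refine ⟨ε, hε0, ?_⟩
  have htotal := Finset.sum_congr rfl hterm
  rw [Finset.sum_add_distrib, ← Finset.sum_mul, hsum, zero_mul, add_zero, ← Finset.mul_sum,
    Finset.sum_const, Finset.card_erase_of_mem (Finset.mem_univ _), Finset.card_univ,
    nsmul_eq_mul] at htotal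
  exact_mod_cast htotal

end SquareClasses

section WhittakerMultiplicities

variable {F : Type} [Field F] [Fintype F] {V : Type} [AddCommGroup V] [Module ℂ V]
  (ρ : Representation ℂ (SL2 F) V)

/-- The dimension of the space of vectors fixed by the upper unipotent subgroup. -/
noncomputable def invariantDim : ℕ := whittakerMultiplicity ρ 0

/-- The total multiplicity of the nontrivial characters of the upper unipotent subgroup. -/
noncomputable def genericDim : ℕ := ∑ ψ ∈ Finset.univ.erase 0, whittakerMultiplicity ρ ψ

theorem exists_genericDim_eq_sum : ∃ ψ : AddChar F ℂ, (∀ s ≠ 0, ψ.mulShift s ≠ 0) ∧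
    genericDim ρ = ∑ s ∈ Finset.univ.erase 0, whittakerMultiplicity ρ (ψ.mulShift s) := by
  have : Nontrivial (AddChar F ℂ) := by
    rw [← Fintype.one_lt_card_iff_nontrivial, AddChar.card_eq]
    exact Fintype.one_lt_card
  obtain ⟨ψ, hψ⟩ := exists_ne (1 : AddChar F ℂ)
  have hinj := AddChar.to_mulShift_inj_of_isPrimitive (AddChar.IsPrimitive.of_ne_one hψ)
  have hbij : Function.Bijective ψ.mulShift :=
    (Fintype.bijective_iff_injective_and_card _).2 ⟨hinj, AddChar.card_eq.symm⟩
  have hzero : ψ.mulShift 0 = 0 := by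
    ext x
    simp
  refine ⟨ψ, fun s hs h => hs (hinj (h.trans hzero.symm)), ?_⟩
  have hsum := hbij.sum_comp (whittakerMultiplicity ρ)
  rw [← Finset.add_sum_erase _ _ (Finset.mem_univ (0 : F)),
    ← Finset.add_sum_erase _ (whittakerMultiplicity ρ) (Finset.mem_univ 0), hzero] at hsum
  exact (Nat.add_left_cancel hsum).symm

variable [FiniteDimensional ℂ V]

theorem finiteFourierCoeff_character_unipotent (ψ : AddChar F ℂ) :
    finiteFourierCoeff (fun x => ρ.character (unipotent x)) ψ = whittakerMultiplicity ρ ψ :=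
  finiteFourierCoeff_character ρ unipotentHom ψ

theorem character_unipotent (x : F) :
    ρ.character (unipotent x) =
      invariantDim ρ + ∑ ψ ∈ Finset.univ.erase 0, whittakerMultiplicity ρ ψ * ψ x := by
  rw [eq_sum_finiteFourierCoeff (fun x => ρ.character (unipotent x)) x,
    ← Finset.add_sum_erase _ _ (Finset.mem_univ 0)]
  simp only [finiteFourierCoeff_character_unipotent, invariantDim, AddChar.zero_apply, mul_one]

theorem finrank_eq_invariantDim_add_genericDim :
    Module.finrank ℂ V = invariantDim ρ + genericDim ρ := by
  have hone : unipotent (0 : F) = 1 := unipotentHom.map_one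
  have hchar := character_unipotent ρ 0
  simp only [hone, Representation.char_one, AddChar.map_zero_eq_one, mul_one] at hchar
  exact_mod_cast hchar

theorem sum_character_unipotent :
    ∑ x : F, ρ.character (unipotent x) = Fintype.card F * invariantDim ρ := by
  have hcoeff := finiteFourierCoeff_character_unipotent ρ 0
  simp only [finiteFourierCoeff, AddChar.zero_apply, one_mul] at hcoeff
  rwa [inv_mul_eq_iff_eq_mul₀ (Nat.cast_ne_zero.2 Fintype.card_ne_zero)] at hcoeff

theorem whittakerMultiplicity_mulShift_mul_sq (ψ : AddChar F ℂ) (s : F) {a : F} (ha : a ≠ 0) :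
    whittakerMultiplicity ρ (ψ.mulShift (s * a ^ 2)) = whittakerMultiplicity ρ (ψ.mulShift s) := by
  rw [← Nat.cast_inj (R := ℂ), ← finiteFourierCoeff_character_unipotent,
    ← finiteFourierCoeff_character_unipotent, finiteFourierCoeff, finiteFourierCoeff]
  congr 1
  refine Fintype.sum_equiv (Equiv.mulRight₀ (a ^ 2) (pow_ne_zero 2 ha)) _ _ fun x => ?_
  have hconj : ρ.character (unipotent (x * a ^ 2)) = ρ.character (unipotent x) := by
    have hsq := unipotent_mul_sq (Units.mk0 a ha) x
    rw [Units.val_mk0] at hsq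
    rw [hsq, Representation.char_conj]
  rw [Equiv.mulRight₀_apply, AddChar.mulShift_apply, AddChar.mulShift_apply, hconj]
  ring_nf

variable [ρ.IsIrreducible]

theorem sum_norm_sq_character_unipotent :
    ∑ x : F, ‖ρ.character (unipotent x)‖ ^ 2 =
      Fintype.card F * ((invariantDim ρ : ℝ) ^ 2 + genericDim ρ) := by
  have hsq : ∀ ψ ∈ Finset.univ.erase 0,
      (whittakerMultiplicity ρ ψ : ℝ) ^ 2 = whittakerMultiplicity ρ ψ := fun ψ hψ => by
    have hle := whittakerMultiplicity_le_one ρ ψ (Finset.ne_of_mem_erase hψ)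
    interval_cases whittakerMultiplicity ρ ψ <;> simp
  rw [sum_norm_sq_eq_finiteFourierCoeff (fun x => ρ.character (unipotent x)),
    ← Finset.add_sum_erase _ _ (Finset.mem_univ 0)]
  simp only [finiteFourierCoeff_character_unipotent, Complex.norm_natCast]
  rw [Finset.sum_congr rfl hsq, invariantDim, genericDim, Nat.cast_sum]

theorem character_unipotent_of_genericDim_eq (hgen : genericDim ρ = Fintype.card F - 1) {x : F}
    (hx : x ≠ 0) : ρ.character (unipotent x) = invariantDim ρ - 1 := by
  have hone : ∀ ψ ∈ Finset.univ.erase (0 : AddChar F ℂ), whittakerMultiplicity ρ ψ = 1 := by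
    refine (Finset.sum_eq_sum_iff_of_le fun ψ hψ =>
      whittakerMultiplicity_le_one ρ ψ (Finset.ne_of_mem_erase hψ)).1 ?_
    rw [← genericDim, hgen, Finset.sum_const, Finset.card_erase_of_mem (Finset.mem_univ _),
      Finset.card_univ, AddChar.card_eq, smul_eq_mul, mul_one]
  have horth := AddChar.sum_apply_eq_ite x
  rw [if_neg hx, ← Finset.add_sum_erase _ _ (Finset.mem_univ 0), AddChar.zero_apply] at horth
  rw [character_unipotent,
    Finset.sum_congr rfl fun ψ hψ => by rw [hone ψ hψ, Nat.cast_one, one_mul]]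
  linear_combination horth

theorem genericDim_of_ringChar_eq_two (hF : ringChar F = 2) :
    genericDim ρ = 0 ∨ genericDim ρ = Fintype.card F - 1 := by
  obtain ⟨ψ, hψ, hgen⟩ := exists_genericDim_eq_sum ρ
  have hle := whittakerMultiplicity_le_one ρ _ (hψ 1 one_ne_zero)
  rw [hgen, sum_erase_zero_of_ringChar_eq_two hF
    fun s a ha => whittakerMultiplicity_mulShift_mul_sq ρ ψ s ha]
  interval_cases whittakerMultiplicity ρ (ψ.mulShift 1) <;> simp

theorem genericDim_of_ringChar_ne_two (hF : ringChar F ≠ 2) :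
    genericDim ρ = 0 ∨ 2 * genericDim ρ = Fintype.card F - 1 ∨
      genericDim ρ = Fintype.card F - 1 := by
  obtain ⟨ψ, hψ, hgen⟩ := exists_genericDim_eq_sum ρ
  obtain ⟨ε, hε, hsum⟩ := exists_two_mul_sum_erase_zero hF
    (μ := fun s => whittakerMultiplicity ρ (ψ.mulShift s))
    fun s a ha => whittakerMultiplicity_mulShift_mul_sq ρ ψ s ha
  have hle_one := whittakerMultiplicity_le_one ρ _ (hψ 1 one_ne_zero)
  have hle_eps := whittakerMultiplicity_le_one ρ _ (hψ ε hε)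
  rw [← hgen] at hsum
  interval_cases whittakerMultiplicity ρ (ψ.mulShift 1) <;>
    interval_cases whittakerMultiplicity ρ (ψ.mulShift ε) <;> omega

end WhittakerMultiplicities

section CentralInvolution

variable {G : Type} [Group G] {V : Type} [AddCommGroup V] [Module ℂ V] [FiniteDimensional ℂ V]
  (ρ : Representation ℂ G V) [ρ.IsIrreducible]

theorem nontrivial_of_isIrreducible {k G V : Type} [Field k] [Group G] [AddCommGroup V]
    [Module k V] (ρ : Representation k G V) [ρ.IsIrreducible] : Nontrivial V := by
  by_contra hV
  rw [not_nontrivial_iff_subsingleton] at hV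
  refine bot_ne_top (α := Subrepresentation ρ) (SetLike.ext fun v => ?_)
  rw [Subsingleton.elim v 0]
  exact iff_of_true (zero_mem (⊥ : Subrepresentation ρ).toSubmodule)
    (zero_mem (⊤ : Subrepresentation ρ).toSubmodule)

theorem exists_eq_smul_one_of_mem_center {z : G} (hz : z ∈ Submonoid.center G) :
    ∃ c : ℂ, ρ z = c • 1 := by
  obtain ⟨c, hc⟩ := Representation.IsIrreducible.algebraMap_intertwiningMap_bijective_of_isAlgClosed
    (ρ := ρ) |>.2 (.centralMul ρ z hz)
  exact ⟨c, LinearMap.ext fun v => congrArg (fun f : Representation.IntertwiningMap ρ ρ => f v)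
    hc.symm⟩

theorem exists_sign_of_mem_center {z : G} (hz : z ∈ Submonoid.center G) (hz2 : z * z = 1) :
    ∃ ζ : ℂ, (ζ = 1 ∨ ζ = -1) ∧ ∀ g, ρ.character (z * g) = ζ * ρ.character g := by
  have := nontrivial_of_isIrreducible ρ
  obtain ⟨ζ, hζ⟩ := exists_eq_smul_one_of_mem_center ρ hz
  have hsq : (ζ * ζ) • (1 : Module.End ℂ V) = (1 : ℂ) • 1 := by
    rw [mul_smul, ← mul_one (1 : Module.End ℂ V), ← mul_smul_comm, ← smul_mul_assoc, ← hζ,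
      ← map_mul, hz2, map_one, one_smul, one_mul]
  refine ⟨ζ, mul_self_eq_one_iff.1 (smul_left_injective ℂ one_ne_zero hsq), fun g => ?_⟩
  rw [Representation.character, map_mul, hζ, smul_mul_assoc, one_mul, map_smul, smul_eq_mul,
    Representation.character]

end CentralInvolution

section TorusCharacter

variable {F : Type} [Field F] {V : Type} [AddCommGroup V] [Module ℂ V]
  (ρ : Representation ℂ (SL2 F) V)

theorem character_diagonal_mul_unipotent {a : Fˣ} (ha : a ^ 2 ≠ 1) (x : F) :
    ρ.character (diagonal a * unipotent x) = ρ.character (diagonal a) := by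
  have ha' : (1 : F) - a ^ 2 ≠ 0 := sub_ne_zero.2 fun h => ha (Units.ext (by simpa using h.symm))
  have hconj : diagonal a * unipotent x = unipotent (x * a ^ 2 / (1 - a ^ 2)) * diagonal a *
      (unipotent (x * a ^ 2 / (1 - a ^ 2)))⁻¹ := by
    apply eq_of_entries_eq <;> simp [Matrix.adjugate_fin_two]
    field_simp
    ring
  rw [hconj, Representation.char_conj]

variable [Fintype F]

theorem commute_diagonal_whittakerProjection_zero (a : Fˣ) :
    Commute (ρ (diagonal a)) (whittakerProjection ρ 0) := by
  rw [whittakerProjection, isotypicProjection, Commute, SemiconjBy, mul_smul_comm, smul_mul_assoc,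
    Finset.mul_sum, Finset.sum_mul]
  congr 1
  have ha : (a : F) ^ 2 ≠ 0 := pow_ne_zero 2 a.ne_zero
  refine Fintype.sum_equiv (Multiplicative.toAdd.trans <|
    (Equiv.mulRight₀ ((a : F) ^ 2) ha).trans Multiplicative.ofAdd) _ _ fun x => ?_
  have hconj : diagonal a * unipotent x.toAdd = unipotent (x.toAdd * a ^ 2) * diagonal a := by
    rw [unipotent_mul_sq, inv_mul_cancel_right]
  have hmap := congrArg ρ hconj
  rw [map_mul, map_mul] at hmap
  simpa [unipotentHom] using hmap

/-- The character of the diagonal subgroup on the vectors fixed by the upper unipotent subgroup. -/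
noncomputable def jacquetCharacter (a : Fˣ) : ℂ :=
  LinearMap.trace ℂ V (ρ (diagonal a) * whittakerProjection ρ 0)

theorem jacquetCharacter_eq_sum (a : Fˣ) : jacquetCharacter ρ a =
    (Fintype.card F : ℂ)⁻¹ * ∑ x, ρ.character (diagonal a * unipotent x) := by
  simp only [jacquetCharacter, whittakerProjection, isotypicProjection, mul_smul_comm,
    Finset.mul_sum, map_smul, map_sum, smul_eq_mul, Fintype.card_multiplicative]
  refine Fintype.sum_equiv Multiplicative.toAdd _ _ fun x => ?_
  simp [Representation.character, unipotentHom]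

theorem jacquetCharacter_of_sq_ne_one {a : Fˣ} (ha : a ^ 2 ≠ 1) :
    jacquetCharacter ρ a = ρ.character (diagonal a) := by
  simp [jacquetCharacter_eq_sum, character_diagonal_mul_unipotent ρ ha]

variable [FiniteDimensional ℂ V]

theorem jacquetCharacter_one : jacquetCharacter ρ 1 = invariantDim ρ := by
  have hone : diagonal (1 : Fˣ) = 1 := diagonalHom.map_one
  rw [jacquetCharacter_eq_sum, hone]
  simp [sum_character_unipotent]

theorem exists_finiteFourierCoeff_jacquetCharacter_eq_natCast (ψ : AddChar (Additive Fˣ) ℂ) :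
    ∃ m : ℕ, finiteFourierCoeff (fun b => jacquetCharacter ρ b.toMul) ψ = m := by
  obtain ⟨m, hm⟩ := exists_sum_trace_mul_eq_natCast (H := Multiplicative (Additive Fˣ))
    (ρ.comp (diagonalHom.comp (MulEquiv.multiplicativeAdditive Fˣ).toMonoidHom)) ψ.toMonoidHom
    (isIdempotentElem_isotypicProjection (ρ.comp unipotentHom) (0 : AddChar F ℂ).toMonoidHom)
    fun h => commute_diagonal_whittakerProjection_zero ρ h.toAdd.toMul
  refine ⟨m, Eq.trans ?_ hm⟩
  rw [finiteFourierCoeff, Fintype.card_multiplicative]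
  exact congrArg _ (Fintype.sum_equiv Multiplicative.ofAdd _ _ fun a => rfl)

theorem norm_character_diagonal_le {a : Fˣ} (ha : a ^ 2 ≠ 1) :
    ‖ρ.character (diagonal a)‖ ≤ invariantDim ρ := by
  have hle := norm_le_of_natCast_finiteFourierCoeff
    (exists_finiteFourierCoeff_jacquetCharacter_eq_natCast ρ) (Additive.ofMul a)
  simpa [jacquetCharacter_one, jacquetCharacter_of_sq_ne_one ρ ha] using hle

theorem mul_invariantDim_le_sum_norm_sq :
    (Fintype.card F - 1) * (invariantDim ρ : ℝ) ≤ ∑ a : Fˣ, ‖jacquetCharacter ρ a‖ ^ 2 := by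
  have hle := card_mul_norm_le_of_intCast_finiteFourierCoeff
    (f := fun b : Additive Fˣ => jacquetCharacter ρ b.toMul)
    (fun ψ => by
      obtain ⟨m, hm⟩ := exists_finiteFourierCoeff_jacquetCharacter_eq_natCast ρ ψ
      exact ⟨m, by exact_mod_cast hm⟩) 0
  have hcard : (Fintype.card (Additive Fˣ) : ℝ) = Fintype.card F - 1 := by
    rw [Fintype.card_additive, Fintype.card_units, Nat.cast_sub Fintype.card_pos, Nat.cast_one]
  rw [hcard, toMul_zero, jacquetCharacter_one, Complex.norm_natCast] at hle
  exact hle.trans_eq (Fintype.sum_equiv Additive.toMul _ _ fun _ => rfl)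

end TorusCharacter

section CentralSign

variable {F : Type} [Field F]

theorem neg_one_mem_center : (-1 : SL2 F) ∈ Submonoid.center (SL2 F) :=
  Submonoid.mem_center_iff.2 fun g => by simp

theorem eq_one_or_eq_neg_one_of_sq_eq_one {a : Fˣ} (ha : a ^ 2 = 1) : a = 1 ∨ a = -1 := by
  simp only [Units.ext_iff, Units.val_one, Units.val_neg, sq] at ha ⊢
  exact mul_self_eq_one_iff.1 ha

variable {V : Type} [AddCommGroup V] [Module ℂ V] [FiniteDimensional ℂ V]
  (ρ : Representation ℂ (SL2 F) V) [ρ.IsIrreducible]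

theorem exists_sign_character_neg :
    ∃ ζ : ℂ, (ζ = 1 ∨ ζ = -1) ∧ ∀ g, ρ.character (-g) = ζ * ρ.character g := by
  obtain ⟨ζ, hζ, hmul⟩ := exists_sign_of_mem_center ρ neg_one_mem_center (by simp)
  exact ⟨ζ, hζ, fun g => by rw [← hmul, neg_one_mul]⟩

theorem norm_character_neg (g : SL2 F) : ‖ρ.character (-g)‖ = ‖ρ.character g‖ := by
  obtain ⟨ζ, rfl | rfl, hneg⟩ := exists_sign_character_neg ρ <;> simp [hneg]

theorem norm_character_diagonal_mul {a : Fˣ} (ha : a ^ 2 = 1) (g : SL2 F) :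
    ‖ρ.character (diagonal a * g)‖ = ‖ρ.character g‖ := by
  have hone : diagonal (1 : Fˣ) = 1 := diagonalHom.map_one
  rcases eq_one_or_eq_neg_one_of_sq_eq_one ha with rfl | rfl
  · rw [hone, one_mul]
  · rw [diagonal_neg_one, neg_one_mul, norm_character_neg]

theorem norm_jacquetCharacter_of_sq_eq_one [Fintype F] {a : Fˣ} (ha : a ^ 2 = 1) :
    ‖jacquetCharacter ρ a‖ = invariantDim ρ := by
  rcases eq_one_or_eq_neg_one_of_sq_eq_one ha with rfl | rfl
  · rw [jacquetCharacter_one, Complex.norm_natCast]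
  · obtain ⟨ζ, hζ, hneg⟩ := exists_sign_character_neg ρ
    simp only [jacquetCharacter_eq_sum, diagonal_neg_one, neg_one_mul, hneg, ← Finset.mul_sum,
      sum_character_unipotent]
    rcases hζ with rfl | rfl <;> simp

end CentralSign

section FixedPointCounting

theorem sum_mul_card_filter_smul_eq {G Y R : Type*} [Group G] [Fintype G] [MulAction G Y]
    [DecidableEq Y] [CommSemiring R] {n : G → R} (hn : ∀ g h, n (h * g * h⁻¹) = n g)
    {S : Finset Y} {y₀ : Y} (hS : ∀ y ∈ S, y ∈ MulAction.orbit G y₀) :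
    ∑ g, n g * (S.filter fun y => g • y = y).card = S.card * ∑ g with g • y₀ = y₀, n g := by
  have hstab (y : Y) (hy : y ∈ S) : ∑ g with g • y = y, n g = ∑ g with g • y₀ = y₀, n g := by
    obtain ⟨h, rfl⟩ := hS y hy
    refine (Finset.sum_equiv (MulAut.conj h).toEquiv (fun g => ?_) fun g _ => (hn g h).symm).symm
    simp [mul_smul]
  calc ∑ g, n g * (S.filter fun y => g • y = y).card
      = ∑ g, ∑ y ∈ S, if g • y = y then n g else 0 := by
        refine Finset.sum_congr rfl fun g _ => ?_
        rw [← Finset.sum_filter, Finset.sum_const, nsmul_eq_mul, mul_comm]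
    _ = ∑ y ∈ S, ∑ g with g • y = y, n g := by
        rw [Finset.sum_comm]
        simp only [Finset.sum_filter]
    _ = S.card * ∑ g with g • y₀ = y₀, n g := by
        rw [Finset.sum_congr rfl hstab, Finset.sum_const, nsmul_eq_mul]

variable {G X R : Type*} [Group G] [Fintype G] [MulAction G X] [Fintype X] [CommRing R] {n : G → R}

theorem sum_mul_card_fixed [MulAction.IsPretransitive G X] (hn : ∀ g h, n (h * g * h⁻¹) = n g)
    (x : X) :
    ∑ g, n g * (Finset.univ.filter fun y : X => g • y = y).card =
      Fintype.card X * ∑ g with g • x = x, n g :=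
  sum_mul_card_filter_smul_eq hn fun y _ => MulAction.exists_smul_eq G x y

theorem sum_mul_card_fixed_pairs [MulAction.IsMultiplyPretransitive G X 2]
    (hn : ∀ g h, n (h * g * h⁻¹) = n g) {x y : X} (hxy : x ≠ y) :
    ∑ g, n g * (((Finset.univ.filter fun z : X => g • z = z).card : R) *
        ((Finset.univ.filter fun z : X => g • z = z).card - 1)) =
      Fintype.card X * (Fintype.card X - 1) * ∑ g with g • x = x ∧ g • y = y, n g := by
  have hoff (s : Finset X) : (s.offDiag.card : R) = s.card * (s.card - 1) := by
    rw [Finset.offDiag_card, Nat.cast_sub (Nat.le_mul_self _)]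
    push_cast
    ring
  have hfix (g : G) : (Finset.univ.offDiag.filter fun z : X × X => g • z = z) =
      (Finset.univ.filter fun z : X => g • z = z).offDiag := by
    ext z
    simp only [Finset.mem_filter, Finset.mem_offDiag, Finset.mem_univ, Prod.ext_iff, Prod.smul_fst,
      Prod.smul_snd, true_and]
    tauto
  have hpair := sum_mul_card_filter_smul_eq hn (S := (Finset.univ : Finset X).offDiag)
    (y₀ := (x, y)) fun z hz => by
      obtain ⟨g, hgx, hgy⟩ := (MulAction.is_two_pretransitive_iff.1 ‹_›) hxy
        (Finset.mem_offDiag.1 hz).2.2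
      exact ⟨g, Prod.ext hgx hgy⟩
  simpa only [hfix, hoff, Finset.card_univ, Prod.smul_mk, Prod.mk.injEq] using hpair

end FixedPointCounting

section ProjectiveLine

open scoped LinearAlgebra.Projectivization

variable {F : Type} [Field F]

noncomputable instance [Fintype F] : Fintype (ℙ F (Fin 2 → F)) := Fintype.ofFinite _

/-- The point of the projective line fixed by the upper triangular matrices. -/
def pointInfinity (F : Type) [Field F] : ℙ F (Fin 2 → F) := .mk F ![1, 0] (by simp)

/-- The point of the projective line fixed by the lower triangular matrices. -/
def pointZero (F : Type) [Field F] : ℙ F (Fin 2 → F) := .mk F ![0, 1] (by simp)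

theorem pointInfinity_ne_pointZero : pointInfinity F ≠ pointZero F := by
  simp [pointInfinity, pointZero, Projectivization.mk_eq_mk_iff']

theorem smul_pointInfinity_eq_iff (g : SL2 F) :
    g • pointInfinity F = pointInfinity F ↔ g 1 0 = 0 := by
  simp [pointInfinity, Projectivization.smul_mk, Projectivization.mk_eq_mk_iff',
    Matrix.SpecialLinearGroup.smul_def, funext_iff, eq_comm (a := (0 : F))]

theorem smul_pointZero_eq_iff (g : SL2 F) : g • pointZero F = pointZero F ↔ g 0 1 = 0 := by
  simp [pointZero, Projectivization.smul_mk, Projectivization.mk_eq_mk_iff',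
    Matrix.SpecialLinearGroup.smul_def, funext_iff, eq_comm (a := (0 : F))]

theorem card_projectiveLine [Fintype F] :
    Fintype.card (ℙ F (Fin 2 → F)) = Fintype.card F + 1 := by
  simpa using Projectivization.card_of_finrank_two F (Fin 2 → F) (by simp)

theorem exists_diagonal_mul_unipotent {g : SL2 F} (hg : g 1 0 = 0) :
    ∃ a x, g = diagonal a * unipotent x := by
  have hdet := entries_det g
  simp only [hg, mul_zero, sub_zero] at hdet
  refine ⟨⟨g 0 0, g 1 1, hdet, by rw [mul_comm, hdet]⟩, g 1 1 * g 0 1, ?_⟩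
  apply eq_of_entries_eq <;> simp [hg, eq_inv_of_mul_eq_one_right hdet,
    left_ne_zero_of_mul_eq_one hdet]

theorem exists_diagonal {g : SL2 F} (hg : g 1 0 = 0) (hg' : g 0 1 = 0) :
    ∃ a, g = diagonal a := by
  obtain ⟨a, x, rfl⟩ := exists_diagonal_mul_unipotent hg
  obtain rfl : x = 0 := by simpa using hg'
  exact ⟨a, eq_of_entries_eq (by simp) (by simp) (by simp) (by simp)⟩

theorem diagonal_injective : Function.Injective (diagonal (F := F)) := fun a b hab =>
  Units.ext (by simpa using congrArg (fun g : SL2 F => g 0 0) hab)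

variable [Fintype F] {M : Type*} [AddCommMonoid M] (n : SL2 F → M)

theorem sum_stabilizer_pointInfinity :
    ∑ g with g • pointInfinity F = pointInfinity F, n g =
      ∑ a, ∑ x, n (diagonal a * unipotent x) := by
  rw [← Fintype.sum_prod_type']
  refine (Finset.sum_nbij (fun ax : Fˣ × F => diagonal ax.1 * unipotent ax.2) ?_ ?_ ?_ ?_).symm
  · intro ax _
    simp [smul_pointInfinity_eq_iff]
  · rintro ⟨a, x⟩ - ⟨b, y⟩ - hab
    have h00 := congrArg (fun g : SL2 F => g 0 0) hab
    have h01 := congrArg (fun g : SL2 F => g 0 1) hab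
    obtain rfl : a = b := Units.ext (by simpa using h00)
    simpa using h01
  · intro g hg
    obtain ⟨a, x, rfl⟩ :=
      exists_diagonal_mul_unipotent ((smul_pointInfinity_eq_iff g).1 (by simpa using hg))
    exact ⟨(a, x), by simp⟩
  · exact fun _ _ => rfl

theorem sum_stabilizer_pointInfinity_pointZero :
    ∑ g with g • pointInfinity F = pointInfinity F ∧ g • pointZero F = pointZero F, n g =
      ∑ a, n (diagonal a) := by
  refine (Finset.sum_nbij diagonal ?_ diagonal_injective.injOn ?_ ?_).symm
  · intro a _
    simp [smul_pointInfinity_eq_iff, smul_pointZero_eq_iff]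
  · intro g hg
    simp only [smul_pointInfinity_eq_iff, smul_pointZero_eq_iff, Finset.coe_filter,
      Finset.mem_univ, true_and, Set.mem_ofPred_eq] at hg
    obtain ⟨a, rfl⟩ := exists_diagonal hg.1 hg.2
    simp
  · exact fun _ _ => rfl

theorem card_SL2 : Fintype.card (SL2 F) =
    (Fintype.card F + 1) * ((Fintype.card F - 1) * Fintype.card F) := by
  have hborel := sum_stabilizer_pointInfinity (F := F) fun _ => 1
  simp only [Finset.sum_const, smul_eq_mul, mul_one, Finset.card_univ, Fintype.card_units] at hborel
  have hindex := MulAction.index_stabilizer_of_transitive (SL2 F) (pointInfinity F)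
  rw [← Nat.card_eq_fintype_card, ← (MulAction.stabilizer (SL2 F) (pointInfinity F)).index_mul_card,
    hindex, Nat.card_eq_fintype_card, card_projectiveLine, ← hborel, Nat.card_eq_fintype_card,
    Fintype.card_subtype]
  simp only [MulAction.mem_stabilizer_iff]

end ProjectiveLine

section EllipticMass

open scoped LinearAlgebra.Projectivization

variable {F : Type} [Field F]

/-- An element of `SL(2, F)` is elliptic if it fixes no point of the projective line, that is, if
its eigenvalues lie outside `F`. -/
def IsElliptic (g : SL2 F) : Prop := ∀ x : ℙ F (Fin 2 → F), g • x ≠ x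

theorem not_isElliptic_diagonal (a : Fˣ) : ¬ IsElliptic (diagonal a) := fun h =>
  h (pointInfinity F) (by simp [smul_pointInfinity_eq_iff])

theorem diagonal_smul_of_sq_eq_one {a : Fˣ} (ha : a ^ 2 = 1) (x : ℙ F (Fin 2 → F)) :
    diagonal a • x = x := by
  have ha' : (a : F)⁻¹ = a := by
    rw [← Units.val_inv_eq_inv_val, inv_eq_of_mul_eq_one_right (by rw [← sq, ha])]
  induction x using Projectivization.ind with | h v hv =>
  rw [Projectivization.smul_mk, Projectivization.mk_eq_mk_iff']
  refine ⟨a, ?_⟩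
  ext i
  fin_cases i <;> simp [Matrix.SpecialLinearGroup.smul_def, Matrix.mulVec, dotProduct, ha']

variable [Fintype F]

theorem sum_mul_fixed_sub_one_mul_fixed_sub_two {n : SL2 F → ℝ}
    (hn : ∀ g h, n (h * g * h⁻¹) = n g) :
    ∑ g, n g * ((((Finset.univ.filter fun x : ℙ F (Fin 2 → F) => g • x = x).card : ℝ) - 1) *
        ((Finset.univ.filter fun x : ℙ F (Fin 2 → F) => g • x = x).card - 2)) =
      Fintype.card F * (Fintype.card F + 1) * ∑ a, n (diagonal a) -
        2 * (Fintype.card F + 1) * ∑ a, ∑ x, n (diagonal a * unipotent x) + 2 * ∑ g, n g := by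
  have hpoints := sum_mul_card_fixed hn (pointInfinity F)
  have hpairs := sum_mul_card_fixed_pairs hn (pointInfinity_ne_pointZero (F := F))
  simp only [sum_stabilizer_pointInfinity, sum_stabilizer_pointInfinity_pointZero,
    card_projectiveLine] at hpoints hpairs
  push_cast at hpoints hpairs
  calc _ = ∑ g, n g * (((Finset.univ.filter fun x : ℙ F (Fin 2 → F) => g • x = x).card : ℝ) *
          ((Finset.univ.filter fun x : ℙ F (Fin 2 → F) => g • x = x).card - 1)) -
        2 * ∑ g, n g * (Finset.univ.filter fun x : ℙ F (Fin 2 → F) => g • x = x).card +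
        2 * ∑ g, n g := by
        simp only [Finset.mul_sum, ← Finset.sum_sub_distrib, ← Finset.sum_add_distrib]
        exact Finset.sum_congr rfl fun g _ => by ring
    _ = _ := by
        rw [hpoints, hpairs]
        ring

/-- The number of square roots of `1` in `F`, which is the order of the center of `SL(2, F)`. -/
noncomputable def sqrtOneCard (F : Type) [Field F] [Fintype F] : ℕ :=
  (Finset.univ.filter fun a : Fˣ => a ^ 2 = 1).card

theorem sqrtOneCard_of_ringChar_ne_two (hF : ringChar F ≠ 2) : sqrtOneCard F = 2 := by
  rw [sqrtOneCard, Finset.card_eq_two]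
  refine ⟨1, -1, fun h => Ring.neg_one_ne_one_of_char_ne_two hF
    (by simpa using congrArg Units.val h.symm), Finset.ext fun a => ?_⟩
  simp only [Finset.mem_filter, Finset.mem_univ, true_and, Finset.mem_insert, Finset.mem_singleton]
  exact ⟨eq_one_or_eq_neg_one_of_sq_eq_one, by rintro (rfl | rfl) <;> simp⟩

theorem nonneg_sub_one_mul_sub_two (m : ℕ) : (0 : ℝ) ≤ (m - 1) * (m - 2) := by
  rcases m with _ | _ | m
  · norm_num
  · norm_num
  · push_cast
    nlinarith [(m.cast_nonneg : (0 : ℝ) ≤ m)]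

theorem le_sum_mul_fixed_sub_one_mul_fixed_sub_two {n : SL2 F → ℝ} (hn : ∀ g, 0 ≤ n g) :
    2 * ∑ g with IsElliptic g, n g +
        Fintype.card F * (Fintype.card F - 1) * ∑ a with a ^ 2 = 1, n (diagonal a) ≤
      ∑ g, n g * ((((Finset.univ.filter fun x : ℙ F (Fin 2 → F) => g • x = x).card : ℝ) - 1) *
        ((Finset.univ.filter fun x : ℙ F (Fin 2 → F) => g • x = x).card - 2)) := by
  have hdisj : Disjoint (Finset.univ.filter fun g : SL2 F => IsElliptic g)
      ((Finset.univ.filter fun a : Fˣ => a ^ 2 = 1).map ⟨diagonal, diagonal_injective⟩) := by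
    rw [Finset.disjoint_left]
    intro g hg hg'
    obtain ⟨a, -, rfl⟩ := Finset.mem_map.1 hg'
    exact not_isElliptic_diagonal a (Finset.mem_filter.1 hg).2
  refine le_trans (le_of_eq ?_) (Finset.sum_le_univ_sum_of_nonneg
    (s := Finset.disjUnion _ _ hdisj) fun g => mul_nonneg (hn g) (nonneg_sub_one_mul_sub_two _))
  rw [Finset.sum_disjUnion, Finset.sum_map, Finset.mul_sum, Finset.mul_sum]
  congr 1
  · refine Finset.sum_congr rfl fun g hg => ?_
    rw [Finset.filter_false_of_mem fun x _ => (Finset.mem_filter.1 hg).2 x]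
    simp
    ring
  · refine Finset.sum_congr rfl fun a ha => ?_
    rw [Function.Embedding.coeFn_mk, Finset.filter_true_of_mem fun x _ =>
      diagonal_smul_of_sq_eq_one (Finset.mem_filter.1 ha).2 x, Finset.card_univ,
      card_projectiveLine]
    push_cast
    ring

end EllipticMass

section EllipticMassBound

variable {F : Type} [Field F] [Fintype F] {V : Type} [AddCommGroup V] [Module ℂ V]
  (ρ : Representation ℂ (SL2 F) V)

/-- The part of the square norm of the character carried by the elliptic elements. -/
noncomputable def ellipticNormSq : ℝ := ∑ g with IsElliptic g, ‖ρ.character g‖ ^ 2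

theorem ellipticNormSq_nonneg : 0 ≤ ellipticNormSq ρ :=
  Finset.sum_nonneg fun _ _ => sq_nonneg _

theorem character_eq_zero_of_ellipticNormSq_nonpos (hρ : ellipticNormSq ρ ≤ 0) {g : SL2 F}
    (hg : IsElliptic g) : ρ.character g = 0 := by
  have hzero := (Finset.sum_eq_zero_iff_of_nonneg fun _ _ => sq_nonneg _).1
    (hρ.antisymm (ellipticNormSq_nonneg ρ)) g (by simpa using hg)
  simpa using hzero

variable [FiniteDimensional ℂ V] [ρ.IsIrreducible]

theorem sum_norm_sq_character_scalar :
    ∑ a : Fˣ with a ^ 2 = 1, ‖ρ.character (diagonal a)‖ ^ 2 =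
      sqrtOneCard F * (Module.finrank ℂ V : ℝ) ^ 2 := by
  rw [Finset.sum_congr rfl fun a ha => ?_, Finset.sum_const, nsmul_eq_mul, sqrtOneCard]
  have hnorm := norm_character_diagonal_mul ρ (Finset.mem_filter.1 ha).2 1
  rw [mul_one, Representation.char_one, Complex.norm_natCast] at hnorm
  rw [hnorm]

theorem sum_norm_sq_character_diagonal :
    ∑ a, ‖ρ.character (diagonal a)‖ ^ 2 = sqrtOneCard F * (Module.finrank ℂ V : ℝ) ^ 2 +
      ∑ a : Fˣ with a ^ 2 ≠ 1, ‖ρ.character (diagonal a)‖ ^ 2 := by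
  rw [← sum_norm_sq_character_scalar ρ, Finset.sum_filter_add_sum_filter_not]

theorem sum_norm_sq_character_borel :
    ∑ a, ∑ x, ‖ρ.character (diagonal a * unipotent x)‖ ^ 2 =
      Fintype.card F * (sqrtOneCard F * ((invariantDim ρ : ℝ) ^ 2 + genericDim ρ) +
        ∑ a : Fˣ with a ^ 2 ≠ 1, ‖ρ.character (diagonal a)‖ ^ 2) := by
  rw [← Finset.sum_filter_add_sum_filter_not _ fun a : Fˣ => a ^ 2 = 1, mul_add]
  congr 1
  · rw [Finset.sum_congr rfl fun a ha => ?_, Finset.sum_const, nsmul_eq_mul, mul_left_comm,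
      sqrtOneCard]
    simp only [norm_character_diagonal_mul ρ (Finset.mem_filter.1 ha).2,
      sum_norm_sq_character_unipotent]
  · rw [Finset.mul_sum]
    refine Finset.sum_congr rfl fun a ha => ?_
    simp [character_diagonal_mul_unipotent ρ (Finset.mem_filter.1 ha).2]

theorem mul_invariantDim_le_add :
    (Fintype.card F - 1) * (invariantDim ρ : ℝ) ≤ sqrtOneCard F * (invariantDim ρ : ℝ) ^ 2 +
      ∑ a : Fˣ with a ^ 2 ≠ 1, ‖ρ.character (diagonal a)‖ ^ 2 := by
  refine (mul_invariantDim_le_sum_norm_sq ρ).trans_eq ?_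
  rw [← Finset.sum_filter_add_sum_filter_not _ fun a : Fˣ => a ^ 2 = 1]
  congr 1
  · rw [Finset.sum_congr rfl fun a ha => by
      rw [norm_jacquetCharacter_of_sq_eq_one ρ (Finset.mem_filter.1 ha).2], Finset.sum_const,
      nsmul_eq_mul, sqrtOneCard]
  · exact Finset.sum_congr rfl fun a ha => by
      rw [jacquetCharacter_of_sq_ne_one ρ (Finset.mem_filter.1 ha).2]

theorem two_mul_ellipticNormSq_le :
    2 * ellipticNormSq ρ ≤ Fintype.card F *
      (2 * sqrtOneCard F * (invariantDim ρ + genericDim ρ : ℝ) ^ 2 -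
        (Fintype.card F + 1) * ((Fintype.card F - 1) * invariantDim ρ -
          sqrtOneCard F * (invariantDim ρ : ℝ) ^ 2) -
        2 * (Fintype.card F + 1) * (sqrtOneCard F * ((invariantDim ρ : ℝ) ^ 2 + genericDim ρ)) +
        2 * ((Fintype.card F : ℝ) ^ 2 - 1)) := by
  have hlower := le_sum_mul_fixed_sub_one_mul_fixed_sub_two (n := fun g => ‖ρ.character g‖ ^ 2)
    fun g => sq_nonneg _
  have hcard : (Fintype.card (SL2 F) : ℝ) =
      (Fintype.card F + 1) * ((Fintype.card F - 1) * Fintype.card F) := by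
    rw [card_SL2]
    push_cast [Nat.cast_sub (Fintype.card_pos (α := F))]
    ring
  rw [sum_mul_fixed_sub_one_mul_fixed_sub_two fun g h => by rw [Representation.char_conj],
    sum_norm_sq_character_diagonal, sum_norm_sq_character_borel, sum_norm_sq_character,
    sum_norm_sq_character_scalar, hcard, finrank_eq_invariantDim_add_genericDim ρ] at hlower
  push_cast at hlower
  have htorus := mul_le_mul_of_nonneg_left (mul_invariantDim_le_add ρ)
    (by positivity : (0 : ℝ) ≤ Fintype.card F * (Fintype.card F + 1))
  rw [ellipticNormSq]
  linarith

end EllipticMassBound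

section Classification

variable {F : Type} [Field F] [Fintype F] {V : Type} [AddCommGroup V] [Module ℂ V]
  (ρ : Representation ℂ (SL2 F) V)

/-- The numerical data of a cuspidal irreducible representation, that is, one without nonzero
vectors fixed by the upper unipotent subgroup. -/
structure IsCuspidal : Prop where
  finrank : Module.finrank ℂ V = Fintype.card F - 1 ∨
    ringChar F ≠ 2 ∧ 2 * Module.finrank ℂ V = Fintype.card F - 1
  character_diagonal : ∀ a : Fˣ, a ^ 2 ≠ 1 → ρ.character (diagonal a) = 0
  ellipticNormSq_le : ringChar F ≠ 2 → Module.finrank ℂ V = Fintype.card F - 1 →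
    ellipticNormSq ρ ≤ Fintype.card F * (Fintype.card F - 1) * (Fintype.card F - 3)

/-- The numerical data of the Steinberg representation. -/
structure IsSteinberg : Prop where
  finrank : Module.finrank ℂ V = Fintype.card F
  character_unipotent : ∀ x : F, x ≠ 0 → ρ.character (unipotent x) = 0

/-- The numerical data of an irreducible representation in the principal series, of degree `q + 1`
or half of that. -/
structure IsPrincipalSeries : Prop where
  finrank : Module.finrank ℂ V = Fintype.card F + 1 ∨
    ringChar F ≠ 2 ∧ 2 * Module.finrank ℂ V = Fintype.card F + 1
  character_elliptic : ∀ g : SL2 F, IsElliptic g → ρ.character g = 0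
  norm_character_diagonal_le : ∀ a : Fˣ, a ^ 2 ≠ 1 → ‖ρ.character (diagonal a)‖ ≤ 2

variable [FiniteDimensional ℂ V]

theorem isPrincipalSeries_of_ellipticNormSq_nonpos {ρ : Representation ℂ (SL2 F) V}
    (hl : invariantDim ρ ≤ 2)
    (hd : Module.finrank ℂ V = Fintype.card F + 1 ∨
      ringChar F ≠ 2 ∧ 2 * Module.finrank ℂ V = Fintype.card F + 1)
    (hell : ellipticNormSq ρ ≤ 0) : IsPrincipalSeries ρ where
  finrank := hd
  character_elliptic _ hg := character_eq_zero_of_ellipticNormSq_nonpos ρ hell hg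
  norm_character_diagonal_le _ ha :=
    (norm_character_diagonal_le ρ ha).trans (by exact_mod_cast hl)

variable [ρ.IsIrreducible]

theorem invariantDim_eq_one_of_genericDim_eq_zero (hN : genericDim ρ = 0) : invariantDim ρ = 1 := by
  have := nontrivial_of_isIrreducible ρ
  have hpos : 0 < invariantDim ρ := by
    simpa [finrank_eq_invariantDim_add_genericDim ρ, hN] using Module.finrank_pos (R := ℂ) (M := V)
  have hq : (1 : ℝ) < Fintype.card F := by exact_mod_cast Fintype.one_lt_card
  have hk : (0 : ℝ) < sqrtOneCard F := by
    exact_mod_cast Finset.card_pos.2 ⟨(1 : Fˣ), by simp⟩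
  have hbound : 2 * ellipticNormSq ρ ≤ Fintype.card F * (Fintype.card F - 1) *
      (-(sqrtOneCard F * (invariantDim ρ : ℝ) ^ 2) +
        (Fintype.card F + 1) * (2 - invariantDim ρ)) := by
    refine (two_mul_ellipticNormSq_le ρ).trans_eq ?_
    rw [hN]
    push_cast
    ring
  have hfactor := nonneg_of_mul_nonneg_right
    ((mul_nonneg zero_le_two (ellipticNormSq_nonneg ρ)).trans hbound)
    (mul_pos (zero_lt_one.trans hq) (sub_pos.2 hq))
  by_contra hne
  have htwo : (2 : ℝ) ≤ invariantDim ρ := by exact_mod_cast (by omega : 2 ≤ invariantDim ρ)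
  have : 0 < sqrtOneCard F * (invariantDim ρ : ℝ) ^ 2 := by positivity
  nlinarith

theorem two_mul_ellipticNormSq_le_of_genericDim_eq (hN : genericDim ρ = Fintype.card F - 1) :
    2 * ellipticNormSq ρ ≤ Fintype.card F * (Fintype.card F - 1) * ((2 - invariantDim ρ) *
      (sqrtOneCard F * invariantDim ρ + Fintype.card F + 1 - 2 * sqrtOneCard F)) := by
  refine (two_mul_ellipticNormSq_le ρ).trans_eq ?_
  rw [hN, Nat.cast_sub Fintype.card_pos]
  push_cast
  ring

theorem invariantDim_le_two_of_genericDim_eq (hN : genericDim ρ = Fintype.card F - 1) :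
    invariantDim ρ ≤ 2 := by
  have hq : (1 : ℝ) < Fintype.card F := by exact_mod_cast Fintype.one_lt_card
  have hfactor := nonneg_of_mul_nonneg_right
    ((mul_nonneg zero_le_two (ellipticNormSq_nonneg ρ)).trans
      (two_mul_ellipticNormSq_le_of_genericDim_eq ρ hN))
    (mul_pos (zero_lt_one.trans hq) (sub_pos.2 hq))
  by_contra! hlt
  have hthree : (3 : ℝ) ≤ invariantDim ρ := by exact_mod_cast hlt
  have hpos :
      0 < (sqrtOneCard F * invariantDim ρ + Fintype.card F + 1 - 2 * sqrtOneCard F : ℝ) := by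
    have := mul_le_mul_of_nonneg_left hthree (sqrtOneCard F).cast_nonneg
    linarith [(sqrtOneCard F).cast_nonneg (α := ℝ)]
  nlinarith

theorem ellipticNormSq_le_of_two_mul_genericDim_eq (hF : ringChar F ≠ 2)
    (hN : 2 * genericDim ρ = Fintype.card F - 1) :
    ellipticNormSq ρ ≤ Fintype.card F * (Fintype.card F - 1) *
      ((1 - invariantDim ρ) * (invariantDim ρ + genericDim ρ)) := by
  have hN' : (Fintype.card F : ℝ) = 2 * genericDim ρ + 1 := by
    exact_mod_cast (by have := Fintype.card_pos (α := F); omega :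
      Fintype.card F = 2 * genericDim ρ + 1)
  have hbound := two_mul_ellipticNormSq_le ρ
  rw [sqrtOneCard_of_ringChar_ne_two hF, hN'] at hbound
  rw [hN']
  push_cast at hbound
  linarith

theorem invariantDim_le_one_of_two_mul_genericDim_eq (hF : ringChar F ≠ 2)
    (hN : 2 * genericDim ρ = Fintype.card F - 1) : invariantDim ρ ≤ 1 := by
  have hq : (1 : ℝ) < Fintype.card F := by exact_mod_cast Fintype.one_lt_card
  have hfactor := nonneg_of_mul_nonneg_right
    ((ellipticNormSq_nonneg ρ).trans (ellipticNormSq_le_of_two_mul_genericDim_eq ρ hF hN))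
    (mul_pos (zero_lt_one.trans hq) (sub_pos.2 hq))
  by_contra! hlt
  have htwo : (2 : ℝ) ≤ invariantDim ρ := by exact_mod_cast hlt
  have : (0 : ℝ) ≤ genericDim ρ := Nat.cast_nonneg _
  nlinarith

variable {ρ}

theorem isCuspidal_of_invariantDim_eq_zero (hl : invariantDim ρ = 0)
    (hN : genericDim ρ = Fintype.card F - 1 ∨
      ringChar F ≠ 2 ∧ 2 * genericDim ρ = Fintype.card F - 1) : IsCuspidal ρ := by
  have hd : Module.finrank ℂ V = genericDim ρ := by
    rw [finrank_eq_invariantDim_add_genericDim ρ, hl, zero_add]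
  refine ⟨by rwa [hd], fun a ha => ?_, fun hF hd' => ?_⟩
  · simpa [hl] using norm_character_diagonal_le ρ ha
  · have hbound := two_mul_ellipticNormSq_le_of_genericDim_eq ρ (hd ▸ hd')
    rw [sqrtOneCard_of_ringChar_ne_two hF, hl] at hbound
    push_cast at hbound
    linarith

theorem isSteinberg_of_invariantDim_eq_one (hl : invariantDim ρ = 1)
    (hN : genericDim ρ = Fintype.card F - 1) : IsSteinberg ρ := by
  refine ⟨?_, fun x hx => ?_⟩
  · rw [finrank_eq_invariantDim_add_genericDim ρ, hl, hN, Nat.add_sub_cancel' Fintype.card_pos]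
  · rw [character_unipotent_of_genericDim_eq ρ hN hx, hl, Nat.cast_one, sub_self]

variable (ρ)

theorem isCuspidal_or_isSteinberg_or_isPrincipalSeries_of_genericDim_eq
    (hN : genericDim ρ = Fintype.card F - 1) :
    IsCuspidal ρ ∨ IsSteinberg ρ ∨ IsPrincipalSeries ρ := by
  have hle := invariantDim_le_two_of_genericDim_eq ρ hN
  obtain hl | hl | hl : invariantDim ρ = 0 ∨ invariantDim ρ = 1 ∨ invariantDim ρ = 2 := by omega
  · exact .inl (isCuspidal_of_invariantDim_eq_zero hl (.inl hN))
  · exact .inr (.inl (isSteinberg_of_invariantDim_eq_one hl hN))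
  · refine .inr (.inr (isPrincipalSeries_of_ellipticNormSq_nonpos hle (.inl ?_) ?_))
    · have := Fintype.card_pos (α := F)
      rw [finrank_eq_invariantDim_add_genericDim ρ, hl, hN]
      omega
    · have hbound := two_mul_ellipticNormSq_le_of_genericDim_eq ρ hN
      rw [hl] at hbound
      norm_num at hbound
      linarith

theorem isCuspidal_or_isPrincipalSeries_of_two_mul_genericDim_eq (hF : ringChar F ≠ 2)
    (hN : 2 * genericDim ρ = Fintype.card F - 1) : IsCuspidal ρ ∨ IsPrincipalSeries ρ := by
  have hle := invariantDim_le_one_of_two_mul_genericDim_eq ρ hF hN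
  obtain hl | hl : invariantDim ρ = 0 ∨ invariantDim ρ = 1 := by omega
  · exact .inl (isCuspidal_of_invariantDim_eq_zero hl (.inr ⟨hF, hN⟩))
  · refine .inr (isPrincipalSeries_of_ellipticNormSq_nonpos (by omega) (.inr ⟨hF, ?_⟩) ?_)
    · have := Fintype.card_pos (α := F)
      rw [finrank_eq_invariantDim_add_genericDim ρ, hl]
      omega
    · have hbound := ellipticNormSq_le_of_two_mul_genericDim_eq ρ hF hN
      rw [hl] at hbound
      norm_num at hbound
      exact hbound

theorem finrank_eq_one_or_isCuspidal_or_isSteinberg_or_isPrincipalSeries :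
    Module.finrank ℂ V = 1 ∨ IsCuspidal ρ ∨ IsSteinberg ρ ∨ IsPrincipalSeries ρ := by
  have hone (hN : genericDim ρ = 0) : Module.finrank ℂ V = 1 := by
    rw [finrank_eq_invariantDim_add_genericDim ρ, hN,
      invariantDim_eq_one_of_genericDim_eq_zero ρ hN]
  by_cases hF : ringChar F = 2
  · rcases genericDim_of_ringChar_eq_two ρ hF with hN | hN
    · exact .inl (hone hN)
    · exact .inr (isCuspidal_or_isSteinberg_or_isPrincipalSeries_of_genericDim_eq ρ hN)
  · rcases genericDim_of_ringChar_ne_two ρ hF with hN | hN | hN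
    · exact .inl (hone hN)
    · exact .inr ((isCuspidal_or_isPrincipalSeries_of_two_mul_genericDim_eq ρ hF hN).imp_right .inr)
    · exact .inr (isCuspidal_or_isSteinberg_or_isPrincipalSeries_of_genericDim_eq ρ hN)

end Classification

section VanishingOnSylow

theorem sumInducedProperty_of_character_eq_zero_on_subgroup {G : Type} [Group G] [Fintype G]
    {p : ℕ} [Fact p.Prime] {V : Type} [AddCommGroup V] [Module ℂ V] [FiniteDimensional ℂ V]
    (ρ : Representation ℂ G V) (P : Sylow p G) (hdvd : Module.finrank ℂ V ∣ Nat.card G)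
    {H : Subgroup G} (hH : ¬ p ∣ H.index)
    (hzero : ∀ h ∈ H, (∃ n, h ^ p ^ n = 1) → h ≠ 1 → ρ.character h = 0) :
    SumInducedProperty p (P : Subgroup G) ρ.character (Module.finrank ℂ V) := by
  obtain ⟨g, hg⟩ := exists_conj_mem_of_not_dvd_index P.isPGroup' hH
  refine sumInducedProperty_of_character_eq_zero ρ P hdvd fun x hx hne => ?_
  obtain ⟨n, hn⟩ := P.isPGroup' ⟨x, hx⟩
  have hconj := hzero _ (hg x hx) ⟨n, ?_⟩ (by simpa [mul_assoc, mul_eq_one_iff_eq_inv] using hne)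
  · rw [← Representation.char_conj ρ x g⁻¹, inv_inv, hconj]
  · have hx1 : x ^ p ^ n = 1 := congrArg Subtype.val hn
    simpa [hx1] using conj_pow (a := g⁻¹) (b := x) (i := p ^ n)

end VanishingOnSylow

section OddPrime

variable {F : Type} [Field F] [Fintype F] {V : Type} [AddCommGroup V] [Module ℂ V]
  {ρ : Representation ℂ (SL2 F) V} {p : ℕ} [Fact p.Prime] (P : Sylow p (SL2 F))

theorem natCard_SL2 : Nat.card (SL2 F) =
    (Fintype.card F + 1) * ((Fintype.card F - 1) * Fintype.card F) := by
  rw [Nat.card_eq_fintype_card, card_SL2]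

theorem index_range_unipotentHom :
    (unipotentHom (F := F)).range.index = (Fintype.card F + 1) * (Fintype.card F - 1) := by
  have hinj : Function.Injective (unipotentHom (F := F)) := fun x y hxy => by
    simpa [unipotentHom] using congrArg (fun g : SL2 F => g 0 1) hxy
  have hcard : Nat.card (unipotentHom (F := F)).range = Fintype.card F := by
    rw [← Nat.card_congr (MonoidHom.ofInjective hinj).toEquiv, Nat.card_eq_fintype_card,
      Fintype.card_multiplicative]
  have hmul := (unipotentHom (F := F)).range.index_mul_card
  rw [hcard, natCard_SL2, ← mul_assoc] at hmul
  exact Nat.eq_of_mul_eq_mul_right Fintype.card_pos hmul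

theorem card_range_diagonalHom : Nat.card (diagonalHom (F := F)).range = Fintype.card F - 1 := by
  rw [← Nat.card_congr (MonoidHom.ofInjective (f := diagonalHom) diagonal_injective).toEquiv,
    Nat.card_eq_fintype_card, Fintype.card_units]

theorem index_range_diagonalHom :
    (diagonalHom (F := F)).range.index = (Fintype.card F + 1) * Fintype.card F := by
  have hmul := (diagonalHom (F := F)).range.index_mul_card
  rw [card_range_diagonalHom, natCard_SL2, mul_comm (Fintype.card F - 1), ← mul_assoc] at hmul
  exact Nat.eq_of_mul_eq_mul_right (Nat.sub_pos_of_lt Fintype.one_lt_card) hmul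

theorem IsCuspidal.finrank_dvd_pred (hρ : IsCuspidal ρ) :
    Module.finrank ℂ V ∣ Fintype.card F - 1 := by
  rcases hρ.finrank with hd | ⟨-, hd⟩
  · exact hd ▸ dvd_rfl
  · exact hd ▸ dvd_mul_left _ _

theorem IsPrincipalSeries.finrank_dvd_succ (hρ : IsPrincipalSeries ρ) :
    Module.finrank ℂ V ∣ Fintype.card F + 1 := by
  rcases hρ.finrank with hd | ⟨-, hd⟩
  · exact hd ▸ dvd_rfl
  · exact hd ▸ dvd_mul_left _ _

theorem not_dvd_succ_of_dvd {q : ℕ} (hp : p ∣ q) : ¬ p ∣ q + 1 := fun h =>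
  (Fact.out : p.Prime).one_lt.not_ge (Nat.le_of_dvd one_pos ((Nat.dvd_add_right hp).1 h))

theorem not_dvd_pred_of_dvd {q : ℕ} (hq : 0 < q) (hp : p ∣ q) : ¬ p ∣ q - 1 := fun h =>
  not_dvd_succ_of_dvd h (by rwa [Nat.sub_add_cancel hq])

theorem eq_two_of_dvd_pred_of_dvd_succ {q : ℕ} (hq : 0 < q) (hpred : p ∣ q - 1)
    (hsucc : p ∣ q + 1) : p = 2 := by
  rw [← Nat.sub_add_cancel hq, add_assoc] at hsucc
  exact (Nat.prime_dvd_prime_iff_eq Fact.out Nat.prime_two).1 ((Nat.dvd_add_right hpred).1 hsucc)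

theorem isElliptic_of_pow_eq_one (hp2 : p ≠ 2) (hpq : p ∣ Fintype.card F + 1) {x : SL2 F} {n : ℕ}
    (hx : x ^ p ^ n = 1) (hne : x ≠ 1) : IsElliptic x := by
  intro y hy
  have hpp : p.Prime := Fact.out
  have hmul := (MulAction.stabilizer (SL2 F) y).index_mul_card
  rw [MulAction.index_stabilizer_of_transitive, Nat.card_eq_fintype_card, card_projectiveLine,
    natCard_SL2] at hmul
  have hcard := Nat.eq_of_mul_eq_mul_left (Nat.succ_pos _) hmul
  have hpow : x ^ Nat.card (MulAction.stabilizer (SL2 F) y) = 1 :=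
    congrArg Subtype.val (pow_card_eq_one' (x := (⟨x, hy⟩ : MulAction.stabilizer (SL2 F) y)))
  have hnot : ¬ p ∣ Nat.card (MulAction.stabilizer (SL2 F) y) := by
    rw [hcard]
    refine hpp.prime.not_dvd_mul (fun h => hp2 ?_) fun h => not_dvd_succ_of_dvd h hpq
    exact eq_two_of_dvd_pred_of_dvd_succ Fintype.card_pos h hpq
  exact hne ((pow_eq_one_iff_of_coprime ((hpp.coprime_iff_not_dvd.2 hnot).pow_left n)).1 ⟨hx, hpow⟩)

variable [FiniteDimensional ℂ V]

theorem IsSteinberg.sumInducedProperty (hρ : IsSteinberg ρ) (hp : p ∣ Module.finrank ℂ V) :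
    SumInducedProperty p (P : Subgroup (SL2 F)) ρ.character (Module.finrank ℂ V) := by
  have hpq : p ∣ Fintype.card F := hρ.finrank ▸ hp
  refine sumInducedProperty_of_character_eq_zero_on_subgroup ρ P ?_
    (H := (unipotentHom (F := F)).range) ?_ ?_
  · rw [natCard_SL2, hρ.finrank, ← mul_assoc]
    exact dvd_mul_left _ _
  · rw [index_range_unipotentHom]
    exact (Fact.out : p.Prime).prime.not_dvd_mul (not_dvd_succ_of_dvd hpq)
      (not_dvd_pred_of_dvd Fintype.card_pos hpq)
  · rintro _ ⟨x, rfl⟩ - hne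
    refine hρ.character_unipotent x.toAdd fun hx => hne ?_
    rw [toAdd_eq_zero.1 hx, map_one]

theorem IsCuspidal.sumInducedProperty_of_ne_two (hρ : IsCuspidal ρ) (hp2 : p ≠ 2)
    (hp : p ∣ Module.finrank ℂ V) :
    SumInducedProperty p (P : Subgroup (SL2 F)) ρ.character (Module.finrank ℂ V) := by
  have hpp : p.Prime := Fact.out
  have hpq : p ∣ Fintype.card F - 1 := hp.trans hρ.finrank_dvd_pred
  have hsucc := Nat.sub_add_cancel (Fintype.card_pos (α := F))
  refine sumInducedProperty_of_character_eq_zero_on_subgroup ρ P ?_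
    (H := (diagonalHom (F := F)).range) ?_ ?_
  · rw [natCard_SL2]
    exact ((hρ.finrank_dvd_pred).mul_right _).mul_left _
  · rw [index_range_diagonalHom]
    refine hpp.prime.not_dvd_mul (fun h => hp2 ?_) (hsucc ▸ not_dvd_succ_of_dvd hpq)
    exact eq_two_of_dvd_pred_of_dvd_succ Fintype.card_pos hpq h
  · rintro _ ⟨a, rfl⟩ ⟨n, hn⟩ hne
    refine hρ.character_diagonal a fun ha => hne ?_
    have hsq : diagonalHom a ^ 2 = 1 := by rw [← map_pow, ha, map_one]
    have hcop : Nat.Coprime 2 (p ^ n) :=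
      ((Nat.coprime_primes Nat.prime_two hpp).2 hp2.symm).pow_right n
    exact (pow_eq_one_iff_of_coprime hcop).1 ⟨hsq, hn⟩

theorem IsPrincipalSeries.sumInducedProperty_of_ne_two (hρ : IsPrincipalSeries ρ) (hp2 : p ≠ 2)
    (hp : p ∣ Module.finrank ℂ V) :
    SumInducedProperty p (P : Subgroup (SL2 F)) ρ.character (Module.finrank ℂ V) := by
  refine sumInducedProperty_of_character_eq_zero_on_subgroup ρ P ?_ (H := ⊤) ?_ ?_
  · rw [natCard_SL2]
    exact hρ.finrank_dvd_succ.mul_right _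
  · rw [Subgroup.index_top]
    exact (Fact.out : p.Prime).not_dvd_one
  · rintro x - ⟨n, hn⟩ hne
    exact hρ.character_elliptic x
      (isElliptic_of_pow_eq_one hp2 (hp.trans hρ.finrank_dvd_succ) hn hne)

end OddPrime

/-! ### Generalized dicyclic groups -/

section IndexTwo

variable {P : Type} [Group P] {C : Subgroup P}

theorem sum_eq_sum_add_sum_mul_of_index_eq_two [Fintype P] (hC : C.index = 2) {y : P} (hy : y ∉ C)
    (f : P → ℂ) : ∑ x, f x = ∑ a : C, f a + ∑ a : C, f (y * a) := by
  rw [← Finset.sum_filter_add_sum_filter_not Finset.univ (· ∈ C)]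
  congr 1
  · exact Finset.sum_subtype _ (by simp) f
  · refine (Finset.sum_bij (fun (a : C) _ => y * (a : P)) (fun a _ => ?_) (fun a _ b _ hab => ?_)
      (fun x hx => ?_) fun a _ => rfl).symm
    · simpa using fun h => hy ((C.mul_mem_cancel_right a.2).1 h)
    · exact Subtype.ext (mul_left_cancel hab)
    · have hmem : y⁻¹ * x ∈ C := (Subgroup.mul_mem_iff_of_index_two hC).2 <| by
        simpa [hy] using hx
      exact ⟨⟨y⁻¹ * x, hmem⟩, Finset.mem_univ _, mul_inv_cancel_left y x⟩

theorem exists_monoidHom_extension_of_index_eq_two (hC : C.index = 2) (l : C →* ℂ) {y : P}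
    (hy : y ∉ C) (hconj : ∀ a b : C, y⁻¹ * a * y = b → l b = l a) {t : ℂ}
    (ht : ∀ a : C, y * y = a → t * t = l a) : ∃ L : P →* ℂ, (∀ a : C, L a = l a) ∧ L y = t := by
  have hmul {x w : P} : x * w ∈ C ↔ (x ∈ C ↔ w ∈ C) := Subgroup.mul_mem_iff_of_index_two hC
  have hinv {x : P} (hx : x ∉ C) : y⁻¹ * x ∈ C := hmul.2 (by simp [hx, hy])
  let L (x : P) : ℂ := if hx : x ∈ C then l ⟨x, hx⟩ else t * l ⟨y⁻¹ * x, hinv hx⟩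
  have hin (a : C) : L a = l a := dif_pos a.2
  have hout (a : C) : L (y * a) = t * l a := by
    simp [L, hmul, hy]
  have hshift (x : P) (hx : x ∉ C) : ∃ a : C, x = y * a := ⟨⟨_, hinv hx⟩, by simp⟩
  refine ⟨⟨⟨L, by simpa using hin 1⟩, fun x w => ?_⟩, hin, by simpa using hout 1⟩
  have hnormal (a : C) : y⁻¹ * a * y ∈ C := by simp [hmul, hy]
  change L (x * w) = L x * L w
  by_cases hx : x ∈ C <;> by_cases hw : w ∈ C
  · lift x to C using hx
    lift w to C using hw
    rw [hin, hin, ← C.coe_mul, hin, map_mul]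
  · lift x to C using hx
    obtain ⟨b, rfl⟩ := hshift w hw
    have hprod : (x : P) * (y * b) = y * ((⟨_, hnormal x⟩ * b : C) : P) := by simp [mul_assoc]
    rw [hprod, hout, hin, hout, map_mul, hconj x _ rfl]
    ring
  · obtain ⟨a, rfl⟩ := hshift x hx
    lift w to C using hw
    rw [mul_assoc, ← C.coe_mul, hout, hout, hin, map_mul, mul_assoc]
  · obtain ⟨a, rfl⟩ := hshift x hx
    obtain ⟨b, rfl⟩ := hshift w hw
    have hyy : y * y ∈ C := by simp [hmul]
    have hprod : y * a * (y * b) = ((⟨_, hyy⟩ * ⟨_, hnormal a⟩ * b : C) : P) := by simp [mul_assoc]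
    rw [hprod, hin, hout, hout, map_mul, map_mul, ← ht _ rfl, hconj a _ rfl]
    ring

theorem add_mem_inducedSums_two [Fintype P] {l l' : P →* ℂ} (hne : l ≠ l')
    (hsq : ∀ x, l x ^ 2 = l' x ^ 2) : ⇑l + ⇑l' ∈ inducedSums P 2 := by
  have hor (x : P) : l x = l' x ∨ l x = -l' x := sq_eq_sq_iff_eq_or_eq_neg.1 (hsq x)
  have hconj (l : P →* ℂ) (x y : P) : l (y * x * y⁻¹) = l x := by
    rw [map_mul, map_mul, mul_right_comm, ← map_mul, mul_inv_cancel, map_one, one_mul]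
  have hne0 (x : P) : l' x ≠ 0 := fun h => by simpa [h] using map_mul l' x x⁻¹
  set Q := l.eqLocus l'
  have hQ : Q.Normal := ⟨fun x hx y => (hconj l x y).trans (Eq.trans hx (hconj l' x y).symm)⟩
  have hindex : Q.index = 2 := by
    obtain ⟨a, ha⟩ := DFunLike.ne_iff.1 hne
    have ha' := (hor a).resolve_left ha
    refine Subgroup.index_eq_two_iff.2 ⟨a, fun b => ?_⟩
    have hab : b * a ∈ Q ↔ l b = -l' b := by
      change l (b * a) = l' (b * a) ↔ _
      rw [map_mul, map_mul, ha', mul_neg, ← neg_mul, mul_left_inj' (hne0 a), neg_eq_iff_eq_neg]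
    have hb : b ∈ Q ↔ l b = l' b := Iff.rfl
    rw [hab, hb]
    rcases hor b with h | h
    · exact Or.inr ⟨h, by simpa [h, eq_neg_iff_add_eq_zero, ← two_mul] using hne0 b⟩
    · exact Or.inl ⟨h, by simpa [h, neg_eq_iff_add_eq_zero, ← two_mul] using hne0 b⟩
  rw [← hindex]
  refine mem_inducedSums_of_eq_mul (l := l.comp Q.subtype) (r := 1) hQ
    (fun x y => hconj l x y) (fun x => ?_) fun x hx => ?_
  · have hx : l x = l' x := x.2
    simp [hindex, ← hx, two_mul]
  · simp [(hor x).resolve_left hx]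

end IndexTwo

theorem exists_monoidHom_apply_eq_neg_one {A : Type} [CommGroup A] [Finite A] {z : A} (hz : z ≠ 1)
    (hsq : z ^ 2 = 1) : ∃ l : A →* ℂ, l z = -1 := by
  obtain ⟨l, hl⟩ := CommGroup.exists_apply_ne_one_of_hasEnoughRootsOfUnity A ℂ hz
  refine ⟨(Units.coeHom ℂ).comp l, (eq_or_eq_neg_of_sq_eq_sq _ 1 ?_).resolve_left ?_⟩
  · rw [← map_pow, hsq, map_one, one_pow]
  · simpa using hl

/-- The group `P` is generalized dicyclic over the subgroup `C` of index two, with distinguished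
involution `z`: the elements outside `C` invert `C` and have square `z`. Generalized quaternion
groups are the case where `C` is a cyclic `2`-group. -/
structure IsDicyclic {P : Type} [Group P] (C : Subgroup P) (z : P) : Prop where
  index_eq_two : C.index = 2
  conj_eq_inv : ∀ y ∉ C, ∀ a ∈ C, y * a * y⁻¹ = a⁻¹
  mul_self : ∀ y ∉ C, y * y = z
  ne_one : z ≠ 1

namespace IsDicyclic

variable {P : Type} [Group P] {C : Subgroup P} {z : P}

theorem exists_notMem (h : IsDicyclic C z) : ∃ y, y ∉ C := by
  by_contra! hC
  simpa [(Subgroup.eq_top_iff' C).2 hC] using h.index_eq_two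

theorem mul_mem_iff (h : IsDicyclic C z) {x y : P} : x * y ∈ C ↔ (x ∈ C ↔ y ∈ C) :=
  Subgroup.mul_mem_iff_of_index_two h.index_eq_two

theorem conj_eq_self (h : IsDicyclic C z) {a b : P} (ha : a ∈ C) (hb : b ∈ C) :
    b * a * b⁻¹ = a := by
  obtain ⟨y, hy⟩ := h.exists_notMem
  have hyb := h.conj_eq_inv (y * b) (by simp [h.mul_mem_iff, hy, hb]) a ha
  rw [← h.conj_eq_inv y hy a ha] at hyb
  rw [mul_inv_rev] at hyb
  exact mul_left_cancel (mul_right_cancel (by simpa only [mul_assoc] using hyb))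

theorem mem (h : IsDicyclic C z) : z ∈ C := by
  obtain ⟨y, hy⟩ := h.exists_notMem
  rw [← h.mul_self y hy]
  simp [h.mul_mem_iff]

theorem inv_eq_self (h : IsDicyclic C z) : z⁻¹ = z := by
  obtain ⟨y, hy⟩ := h.exists_notMem
  rw [← h.conj_eq_inv y hy z h.mem, ← h.mul_self y hy]
  group

theorem conj_involution (h : IsDicyclic C z) (y : P) : y * z * y⁻¹ = z := by
  by_cases hy : y ∈ C
  · exact h.conj_eq_self h.mem hy
  · rw [h.conj_eq_inv y hy z h.mem, h.inv_eq_self]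

theorem sq_eq_one (h : IsDicyclic C z) : z ^ 2 = 1 := by
  rw [pow_two, mul_eq_one_iff_eq_inv, h.inv_eq_self]

theorem zpow_eq_one_or_eq (h : IsDicyclic C z) (n : ℤ) : z ^ n = 1 ∨ z ^ n = z := by
  rcases n.even_or_odd' with ⟨k, rfl | rfl⟩ <;> simp [zpow_add, zpow_mul, h.sq_eq_one]

theorem normal_of_le (h : IsDicyclic C z) {Q : Subgroup P} (hQ : Q ≤ C) : Q.Normal := by
  refine ⟨fun a ha y => ?_⟩
  by_cases hy : y ∈ C
  · rwa [h.conj_eq_self (hQ ha) hy]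
  · rw [h.conj_eq_inv y hy a (hQ ha)]
    exact Q.inv_mem ha

theorem mul_self_of_mem_zpowers (h : IsDicyclic C z) {i x : P} (hiz : i * i = z)
    (hx : x ∈ Subgroup.zpowers i) : (x = 1 ∨ x = z) ∨ x * x = z := by
  obtain ⟨n, rfl⟩ := hx
  dsimp only
  rcases n.even_or_odd' with ⟨k, rfl | rfl⟩
  · left
    rw [zpow_mul, zpow_two, hiz]
    exact h.zpow_eq_one_or_eq k
  · right
    rw [zpow_add_one, zpow_mul, zpow_two, hiz]
    have hcomm : Commute i (z ^ k) :=
      hiz ▸ ((Commute.refl i).mul_right (Commute.refl i)).zpow_right k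
    rw [mul_assoc, hcomm.left_comm, hiz, ← mul_assoc, ← zpow_add, ← two_mul, zpow_mul, zpow_ofNat,
      h.sq_eq_one, one_zpow, one_mul]

variable {V : Type} [AddCommGroup V] [Module ℂ V] [FiniteDimensional ℂ V]
  {ρ : Representation ℂ P V}

theorem card_dvd_finrank [Finite P] (h : IsDicyclic C z)
    (hz : ρ.character z = Module.finrank ℂ V)
    (hzero : ∀ x, x ≠ 1 → x ≠ z → ρ.character x = 0) : Nat.card C ∣ Module.finrank ℂ V := by
  have := Fintype.ofFinite P
  have hmult := linearMultiplicity_eq_sum_character ρ 1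
  have hcard := C.card_mul_index
  rw [h.index_eq_two, Nat.card_eq_fintype_card (α := P)] at hcard
  have hP : (Fintype.card P : ℂ) ≠ 0 := Nat.cast_ne_zero.2 Fintype.card_ne_zero
  simp only [MonoidHom.one_apply, one_mul] at hmult
  rw [Fintype.sum_eq_add 1 z h.ne_one.symm fun x hx => hzero x hx.1 hx.2, ρ.char_one, hz,
    eq_inv_mul_iff_mul_eq₀ hP, ← hcard] at hmult
  norm_cast at hmult
  exact ⟨_, by linarith⟩

variable [Fintype P]

theorem two_mul_inducedChar (h : IsDicyclic C z) {Q : Subgroup P} (hQ : Q ≤ C) (l : Q → ℂ) (a : Q) :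
    2 * inducedChar Q l a = Q.index * (l a + l a⁻¹) := by
  obtain ⟨y, hy⟩ := h.exists_notMem
  have hcard : (Fintype.card Q : ℂ) * Q.index = Fintype.card C * 2 := by
    have := Q.card_mul_index.trans C.card_mul_index.symm
    rw [h.index_eq_two, Nat.card_eq_fintype_card, Nat.card_eq_fintype_card] at this
    exact_mod_cast this
  have hQ0 : (Fintype.card Q : ℂ) ≠ 0 := Nat.cast_ne_zero.2 Fintype.card_ne_zero
  have hin (b : C) : (b : P) * a * (b : P)⁻¹ = a := h.conj_eq_self (hQ a.2) b.2
  have hout (b : C) : y * b * a * (y * b)⁻¹ = (a⁻¹ : Q) :=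
    h.conj_eq_inv (y * b) (by simp [h.mul_mem_iff, hy]) a (hQ a.2)
  rw [inducedChar, sum_eq_sum_add_sum_mul_of_index_eq_two h.index_eq_two hy]
  simp only [hin, hout, Subtype.coe_eta, SetLike.coe_mem, dif_pos, Finset.sum_const,
    Finset.card_univ, nsmul_eq_mul]
  rw [← mul_right_inj' hQ0]
  field_simp
  linear_combination (-(l a + l a⁻¹)) * hcard

open scoped IsMulCommutative in
theorem character_mem_inducedSums_card (h : IsDicyclic C z) {ζ : ℂ} (hζ : ζ = 1 ∨ ζ = -1)
    (hz : ρ.character z = ζ * Module.finrank ℂ V) (hzero : ∀ x, x ≠ 1 → x ≠ z → ρ.character x = 0)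
    (hd : Nat.card C ∣ Module.finrank ℂ V) : ρ.character ∈ inducedSums P (Nat.card C) := by
  set Q := Subgroup.zpowers z
  have hmem {x : P} (hx : x ∈ Q) : x = 1 ∨ x = z := by
    obtain ⟨n, rfl⟩ := hx
    exact h.zpow_eq_one_or_eq n
  have hindex : Q.index = Nat.card C := by
    have hmul := Q.card_mul_index.trans C.card_mul_index.symm
    rw [Nat.card_zpowers, orderOf_eq_prime h.sq_eq_one h.ne_one, h.index_eq_two, mul_comm] at hmul
    exact Nat.eq_of_mul_eq_mul_right two_pos hmul
  obtain ⟨l, hl⟩ : ∃ l : Q →* ℂ, l ⟨z, Subgroup.mem_zpowers z⟩ = ζ := by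
    rcases hζ with rfl | rfl
    · exact ⟨1, rfl⟩
    · exact exists_monoidHom_apply_eq_neg_one (by simpa using h.ne_one)
        (Subtype.ext h.sq_eq_one)
  obtain ⟨r, hr⟩ := hd
  rw [← hindex]
  refine mem_inducedSums_of_eq_mul (l := l) (r := r)
    (h.normal_of_le ((Subgroup.zpowers_le).2 h.mem)) ?_ ?_ fun x hx =>
      hzero x (fun h1 => hx (h1 ▸ Q.one_mem)) fun h2 => hx (h2 ▸ Subgroup.mem_zpowers z)
  · rintro ⟨x, hx⟩ y
    congr 2
    rcases hmem hx with rfl | rfl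
    · group
    · exact h.conj_involution y
  · rintro ⟨x, hx⟩
    rcases hmem hx with rfl | rfl
    · have hone : l ⟨1, hx⟩ = 1 := map_one l
      rw [hone, ρ.char_one, hr, hindex]
      push_cast
      ring
    · rw [hl, hz, hr, hindex]
      push_cast
      ring

theorem inducedChar_zpowers (h : IsDicyclic C z) {i : P} (hi : i ∈ C) (hiz : i * i = z)
    {l : Subgroup.zpowers i →* ℂ} (hl : ∀ a : Subgroup.zpowers i, (a : P) = z → l a = -1) (x : P) :
    inducedChar (Subgroup.zpowers i) l x =
      (Subgroup.zpowers i).index * if x = 1 then 1 else if x = z then -1 else 0 := by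
  have hQC : Subgroup.zpowers i ≤ C := (Subgroup.zpowers_le).2 hi
  have hz : z ∈ Subgroup.zpowers i := hiz ▸ ⟨2, zpow_two i⟩
  by_cases hx : x ∈ Subgroup.zpowers i
  · lift x to Subgroup.zpowers i using hx
    rw [← mul_right_inj' (two_ne_zero (α := ℂ)), h.two_mul_inducedChar hQC, mul_left_comm]
    congr 1
    split_ifs with h1 h2
    · rw [show x = 1 from Subtype.ext h1, inv_one, map_one]
      norm_num
    · rw [hl x h2, hl x⁻¹ (by rw [Subgroup.coe_inv, h2, h.inv_eq_self])]
      norm_num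
    · have hxx : l (x * x) = -1 := hl _ ((h.mul_self_of_mem_zpowers hiz x.2).resolve_left
        (not_or_intro h1 h2))
      have hinv : l x * l x⁻¹ = 1 := by rw [← map_mul, mul_inv_cancel, map_one]
      rw [map_mul] at hxx
      linear_combination l x⁻¹ * hxx - l x * hinv
  · rw [inducedChar_eq_zero (h.normal_of_le hQC) _ hx, if_neg fun h1 => hx (by simp [h1]),
      if_neg fun h2 => hx (by rwa [h2]), mul_zero]

open scoped IsMulCommutative in
theorem character_mem_inducedSums_half_card (h : IsDicyclic C z) (hsqrt : ∃ i ∈ C, i * i = z)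
    {ζ : ℂ} (hζ : ζ = 1 ∨ ζ = -1) (hz : ρ.character z = ζ * Module.finrank ℂ V)
    (hzero : ∀ x, x ≠ 1 → x ≠ z → ρ.character x = 0) {m : ℕ} (hm : 2 * m = Nat.card C)
    (hd : m ∣ Module.finrank ℂ V) (hd' : ¬ 2 * m ∣ Module.finrank ℂ V) :
    ρ.character ∈ inducedSums P m := by
  have hζ : ζ = -1 := hζ.resolve_left fun hone =>
    hd' (hm ▸ h.card_dvd_finrank (by rw [hz, hone, one_mul]) hzero)
  obtain ⟨i, hi, rfl⟩ := hsqrt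
  set Q := Subgroup.zpowers i
  have hmem : i * i ∈ Q := Q.mul_mem (Subgroup.mem_zpowers i) (Subgroup.mem_zpowers i)
  have hindex : Q.index = m := by
    have horder : orderOf i = 2 ^ (1 + 1) := orderOf_eq_prime_pow
      (by simpa [pow_two] using h.ne_one) (by simpa [pow_succ, mul_assoc] using h.sq_eq_one)
    have hmul := Q.card_mul_index.trans C.card_mul_index.symm
    rw [Nat.card_zpowers, horder, h.index_eq_two, ← hm] at hmul
    omega
  obtain ⟨l, hl⟩ : ∃ l : Q →* ℂ, l ⟨i * i, hmem⟩ = -1 :=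
    exists_monoidHom_apply_eq_neg_one (by simpa using h.ne_one) (Subtype.ext h.sq_eq_one)
  obtain ⟨r, hr⟩ := hd
  suffices hsum : ρ.character = r • inducedChar Q l by
    rw [hsum, ← hindex]
    exact nsmul_mem (inducedChar_mem_inducedSums (isIrreducibleCharacter_monoidHom l)) r
  funext x
  rw [Pi.smul_apply, h.inducedChar_zpowers hi rfl
    (fun a ha => (congrArg l (Subtype.ext ha)).trans hl), hindex, nsmul_eq_mul]
  split_ifs with h1 h2
  · rw [h1, ρ.char_one, hr]
    push_cast
    ring
  · rw [h2, hz, hr, hζ]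
    push_cast
    ring
  · rw [hzero x h1 h2, mul_zero, mul_zero]

end IsDicyclic

section Pairing

theorem sum_mem_of_involutive {ι M : Type*} [AddCommMonoid M] {S : AddSubmonoid M} {σ : ι → ι}
    (hσ : Function.Involutive σ) {f : ι → M} (s : Finset ι) (hs : ∀ i ∈ s, σ i ∈ s)
    (hne : ∀ i ∈ s, σ i ≠ i) (hf : ∀ i ∈ s, f i + f (σ i) ∈ S) : ∑ i ∈ s, f i ∈ S := by
  induction s using Finset.strongInduction with
  | H s ih =>
    rcases s.eq_empty_or_nonempty with rfl | ⟨i, hi⟩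
    · simp
    have hσi : σ i ∈ s.erase i := Finset.mem_erase.2 ⟨hne i hi, hs i hi⟩
    have hsub : (s.erase i).erase (σ i) ⊆ s := (Finset.erase_subset _ _).trans (s.erase_subset i)
    rw [← Finset.add_sum_erase s f hi, ← Finset.add_sum_erase _ f hσi, ← add_assoc]
    refine S.add_mem (hf i hi) (ih _ ?_ (fun j hj => ?_) (fun j hj => hne j (hsub hj))
      fun j hj => hf j (hsub hj))
    · exact (Finset.erase_subset _ _).trans_ssubset (Finset.erase_ssubset hi)
    · simp only [Finset.mem_erase, ne_eq] at hj ⊢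
      exact ⟨fun h => hj.2.1 (hσ.injective h), fun h => hj.1 (by rw [← h, hσ j]), hs j hj.2.2⟩

theorem nsmul_add_nsmul_add_nsmul_mem {M : Type*} [AddCommMonoid M] {S : AddSubmonoid M}
    {e₁ e₂ e₃ e₄ : M} (h₁₂ : e₁ + e₂ ∈ S) (h₃₄ : e₃ + e₄ ∈ S) (h₁₃ : e₁ + e₃ ∈ S)
    (h₁₄ : e₁ + e₄ ∈ S) (h₂₃ : e₂ + e₃ ∈ S) (h₂₄ : e₂ + e₄ ∈ S) {a b n : ℕ}
    (hab : a = b ∨ (a = b + 2 ∨ b = a + 2) ∧ n ≠ 0) :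
    a • e₁ + b • e₂ + n • (e₃ + e₄) ∈ S := by
  rcases hab with rfl | ⟨hab, hn⟩
  · rw [← nsmul_add]
    exact S.add_mem (S.nsmul_mem h₁₂ a) (S.nsmul_mem h₃₄ n)
  obtain ⟨k, rfl⟩ := Nat.exists_eq_succ_of_ne_zero hn
  rcases hab with rfl | rfl
  · have hsum : (b + 2) • e₁ + b • e₂ + (k + 1) • (e₃ + e₄) =
        b • (e₁ + e₂) + (e₁ + e₃) + (e₁ + e₄) + k • (e₃ + e₄) := by
      simp only [add_nsmul, two_nsmul, one_nsmul, nsmul_add]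
      abel
    rw [Nat.succ_eq_add_one, hsum]
    exact S.add_mem (S.add_mem (S.add_mem (S.nsmul_mem h₁₂ b) h₁₃) h₁₄) (S.nsmul_mem h₃₄ k)
  · have hsum : a • e₁ + (a + 2) • e₂ + (k + 1) • (e₃ + e₄) =
        a • (e₁ + e₂) + (e₂ + e₃) + (e₂ + e₄) + k • (e₃ + e₄) := by
      simp only [add_nsmul, two_nsmul, one_nsmul, nsmul_add]
      abel
    rw [Nat.succ_eq_add_one, hsum]
    exact S.add_mem (S.add_mem (S.add_mem (S.nsmul_mem h₁₂ a) h₂₃) h₂₄) (S.nsmul_mem h₃₄ k)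

theorem exists_addChar_forall_inv_eq_self {A : Type} [AddCommGroup A] [Fintype A] [IsAddCyclic A]
    (hA : 2 ∣ Fintype.card A) :
    ∃ s : AddChar A ℂ, s ≠ 1 ∧ ∀ ψ : AddChar A ℂ, ψ⁻¹ = ψ ↔ ψ = 1 ∨ ψ = s := by
  obtain ⟨g, hg⟩ := IsAddCyclic.exists_generator (α := A)
  have hext {ψ ψ' : AddChar A ℂ} (h : ψ g = ψ' g) : ψ = ψ' := by
    refine DFunLike.ext _ _ fun a => ?_
    obtain ⟨n, rfl⟩ := hg a
    simp only [AddChar.map_zsmul_eq_zpow, h]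
  have hg_eq {ψ : AddChar A ℂ} (h : ψ⁻¹ = ψ) : ψ g = 1 ∨ ψ g = -1 := by
    have hsq : ψ g * ψ g = 1 := by
      nth_rw 1 [← h]
      rw [← AddChar.mul_apply, inv_mul_cancel, AddChar.one_apply]
    exact mul_self_eq_one_iff.1 hsq
  obtain ⟨s, hs⟩ := exists_prime_orderOf_dvd_card 2 (by rwa [AddChar.card_eq] :
    2 ∣ Fintype.card (AddChar A ℂ))
  have hs1 : s ≠ 1 := fun h => by simp [h] at hs
  have hsinv : s⁻¹ = s := inv_eq_of_mul_eq_one_left (by rw [← pow_two, ← hs, pow_orderOf_eq_one])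
  have hsg : s g = -1 := (hg_eq hsinv).resolve_left fun h => hs1 (hext h)
  refine ⟨s, hs1, fun ψ => ⟨fun h => ?_, ?_⟩⟩
  · exact (hg_eq h).imp (fun h1 => hext h1) fun h1 => hext (h1.trans hsg.symm)
  · rintro (rfl | rfl)
    exacts [inv_one, hsinv]

end Pairing

namespace IsDicyclic

open scoped IsMulCommutative

section CyclicMultiplicity

variable {P : Type} [Group P] {C : Subgroup P} {z : P}

/-- The function on `P` agreeing with `l` on the subgroup `C` and vanishing elsewhere. -/
noncomputable def zeroExtend (C : Subgroup P) (l : C → ℂ) (x : P) : ℂ :=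
  if hx : x ∈ C then l ⟨x, hx⟩ else 0

theorem zeroExtend_coe (l : C → ℂ) (a : C) : zeroExtend C l a = l a := dif_pos a.2

theorem zeroExtend_of_notMem (l : C → ℂ) {x : P} (hx : x ∉ C) : zeroExtend C l x = 0 := dif_neg hx

/-- `L` is a linear character of `P` with values `±1` that extends the linear character `ψ` of the
cyclic subgroup `C` and takes the value `t` at `y`. -/
structure IsSignExtension [IsCyclic C] (ψ : AddChar (Additive C) ℂ) (y : P) (t : ℂ)
    (L : P →* ℂ) : Prop where
  apply_coe : ∀ a : C, L a = ψ (.ofMul a)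
  apply_eq : L y = t
  sq_eq_one : ∀ x, L x ^ 2 = 1

theorem exists_isSignExtension [IsCyclic C] (h : IsDicyclic C z) {y : P} (hy : y ∉ C)
    {ψ : AddChar (Additive C) ℂ} (hψ : ψ⁻¹ = ψ) {i : C} (hi : (i * i : P) = z) {t : ℂ}
    (ht : t * t = 1) :
    ∃ L : P →* ℂ, IsSignExtension ψ y t L := by
  have hsq (a : C) : ψ (.ofMul (a * a)) = 1 := by
    rw [ofMul_mul, AddChar.map_add_eq_mul]
    nth_rw 1 [← hψ]
    rw [← AddChar.mul_apply, inv_mul_cancel, AddChar.one_apply]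
  let l : C →* ℂ := ψ.toMonoidHom.comp (MulEquiv.multiplicativeAdditive C).toMonoidHom
  have hconj (a b : C) (hab : y⁻¹ * a * y = b) : l b = l a := by
    have hb : b = a⁻¹ := Subtype.ext <| by
      simpa [← hab] using h.conj_eq_inv y⁻¹ (by simpa using hy) a a.2
    rw [hb]
    exact DFunLike.congr_fun hψ (Additive.ofMul a)
  have hyy (a : C) (ha : y * y = a) : t * t = l a := by
    rw [ht, show a = i * i from Subtype.ext (by rw [← ha, h.mul_self y hy, C.coe_mul, hi])]
    exact (hsq i).symm
  obtain ⟨L, hLC, hLy⟩ :=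
    exists_monoidHom_extension_of_index_eq_two h.index_eq_two l hy hconj hyy
  refine ⟨L, hLC, hLy, fun x => ?_⟩
  rw [← map_pow, pow_two]
  by_cases hx : x ∈ C
  · exact (hLC (⟨x, hx⟩ * ⟨x, hx⟩)).trans (hsq _)
  · rw [h.mul_self x hx, ← hi]
    exact (hLC (i * i)).trans (hsq i)

variable [Fintype P]

theorem zeroExtend_add_zeroExtend_inv (h : IsDicyclic C z) (l : C → ℂ) :
    zeroExtend C l + zeroExtend C (fun a => l a⁻¹) = inducedChar C l := by
  funext x
  by_cases hx : x ∈ C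
  · lift x to C using hx
    have hind := h.two_mul_inducedChar le_rfl l x
    rw [h.index_eq_two, Nat.cast_ofNat] at hind
    rw [Pi.add_apply, zeroExtend_coe, zeroExtend_coe, mul_left_cancel₀ two_ne_zero hind]
  · rw [Pi.add_apply, zeroExtend_of_notMem l hx, zeroExtend_of_notMem _ hx, add_zero,
      inducedChar_eq_zero (h.normal_of_le le_rfl) _ hx]

variable [IsCyclic C]

variable {V : Type} [AddCommGroup V] [Module ℂ V] [FiniteDimensional ℂ V]
  {ρ : Representation ℂ P V}

/-- The multiplicity of the linear character `ψ` of the cyclic group `C` in the restriction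
of `ρ` to `C`. -/
noncomputable def cyclicMultiplicity (ρ : Representation ℂ P V) (ψ : AddChar (Additive C) ℂ) : ℕ :=
  (exists_finiteFourierCoeff_character_eq_natCast ρ C.subtype ψ).choose

theorem cyclicMultiplicity_eq (ρ : Representation ℂ P V) (ψ : AddChar (Additive C) ℂ) :
    finiteFourierCoeff (fun a : Additive C => ρ.character a.toMul) ψ = cyclicMultiplicity ρ ψ :=
  (exists_finiteFourierCoeff_character_eq_natCast ρ C.subtype ψ).choose_spec

theorem character_eq_sum_cyclicMultiplicity (ρ : Representation ℂ P V) (a : C) :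
    ρ.character a = ∑ ψ : AddChar (Additive C) ℂ, cyclicMultiplicity ρ ψ * ψ (.ofMul a) := by
  have := eq_sum_finiteFourierCoeff (fun a : Additive C => ρ.character a.toMul) (.ofMul a)
  simpa only [cyclicMultiplicity_eq, toMul_ofMul] using this

theorem cyclicMultiplicity_inv (h : IsDicyclic C z) (ψ : AddChar (Additive C) ℂ) :
    cyclicMultiplicity ρ ψ⁻¹ = cyclicMultiplicity ρ ψ := by
  obtain ⟨y, hy⟩ := h.exists_notMem
  have hinv (a : C) : ρ.character (a⁻¹ : C) = ρ.character a := by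
    rw [C.coe_inv, ← h.conj_eq_inv y hy a a.2, ρ.char_conj]
  apply Nat.cast_injective (R := ℂ)
  rw [← cyclicMultiplicity_eq, ← cyclicMultiplicity_eq, finiteFourierCoeff, finiteFourierCoeff]
  refine congrArg _ (Fintype.sum_equiv (Equiv.neg _) _ _ fun a => ?_)
  rw [Equiv.neg_apply, toMul_neg, hinv, AddChar.inv_apply]

theorem two_mul_linearMultiplicity (h : IsDicyclic C z) {c : ℂ}
    (hc : ∀ y ∉ C, ρ.character y = c) {y : P} (hy : y ∉ C) {ψ : AddChar (Additive C) ℂ} {t : ℂ}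
    {L : P →* ℂ} (hL : IsSignExtension ψ y t L) :
    (2 * linearMultiplicity ρ L : ℂ) = cyclicMultiplicity ρ ψ + if ψ = 1 then c * t else 0 := by
  have hinv (x : P) : L x⁻¹ = L x := by
    have hmul : L x * L x⁻¹ = 1 := by rw [← map_mul, mul_inv_cancel, map_one]
    linear_combination L x * hmul - L x⁻¹ * hL.sq_eq_one x
  have hcard : (Fintype.card P : ℂ) = 2 * Fintype.card C := by
    have := C.card_mul_index
    rw [h.index_eq_two, Nat.card_eq_fintype_card, Nat.card_eq_fintype_card] at this
    rw [← this]
    push_cast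
    ring
  have hC0 : (Fintype.card C : ℂ) ≠ 0 := Nat.cast_ne_zero.2 Fintype.card_ne_zero
  have hout (a : C) : ρ.character (y * a) = c := hc _ (by simp [h.mul_mem_iff, hy])
  have hcoeff : ∑ a : Additive C, ψ (-a) * ρ.character a.toMul =
      ∑ a : C, L a * ρ.character a :=
    Fintype.sum_equiv Additive.toMul _ _ fun a => by
      rw [← hinv, ← C.coe_inv, hL.apply_coe, ofMul_inv, ofMul_toMul]
  have hsum : ∑ a : C, L a = if ψ = 1 then (Fintype.card C : ℂ) else 0 := by
    rw [Fintype.sum_equiv Additive.ofMul _ ψ hL.apply_coe, AddChar.sum_eq_ite,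
      Fintype.card_additive]
    rfl
  rw [linearMultiplicity_eq_sum_character, ← cyclicMultiplicity_eq, finiteFourierCoeff, hcoeff,
    sum_eq_sum_add_sum_mul_of_index_eq_two h.index_eq_two hy, hcard, Fintype.card_additive]
  simp only [hinv, hout, map_mul, hL.apply_eq, ← Finset.sum_mul, ← Finset.mul_sum, hsum]
  split_ifs
  · field_simp
  · field_simp
    ring

end CyclicMultiplicity

section RealCharacters

variable {P : Type} [Group P] [Fintype P] {C : Subgroup P} [IsCyclic C] {z : P}
  {V : Type} [AddCommGroup V] [Module ℂ V] [FiniteDimensional ℂ V] {ρ : Representation ℂ P V}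

theorem sum_zeroExtend_mem_inducedSums (h : IsDicyclic C z) :
    ∑ ψ : AddChar (Additive C) ℂ with ψ⁻¹ ≠ ψ,
      cyclicMultiplicity ρ ψ • zeroExtend C (fun a => ψ (.ofMul a)) ∈ inducedSums P 2 := by
  refine sum_mem_of_involutive inv_involutive _ (fun ψ hψ => ?_) (fun ψ hψ => ?_) fun ψ _ => ?_
  · simpa [eq_comm] using hψ
  · simpa using hψ
  · rw [h.cyclicMultiplicity_inv, ← nsmul_add, ← h.index_eq_two]
    refine nsmul_mem ?_ _
    have hadd := h.zeroExtend_add_zeroExtend_inv fun a => ψ (.ofMul a)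
    rw [show (fun a : C => ψ⁻¹ (.ofMul a)) = fun a => ψ (.ofMul a⁻¹) from rfl, hadd]
    exact inducedChar_mem_inducedSums (isIrreducibleCharacter_monoidHom
      (ψ.toMonoidHom.comp (MulEquiv.multiplicativeAdditive C).toMonoidHom))

theorem even_sum_cyclicMultiplicity (h : IsDicyclic C z) :
    Even (∑ ψ : AddChar (Additive C) ℂ with ψ⁻¹ ≠ ψ, cyclicMultiplicity ρ ψ) := by
  refine sum_mem_of_involutive (S := AddSubmonoid.even ℕ) inv_involutive _ (fun ψ hψ => ?_)
    (fun ψ hψ => ?_) fun ψ _ => ?_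
  · simpa [eq_comm] using hψ
  · simpa using hψ
  · rw [h.cyclicMultiplicity_inv]
    exact ⟨_, rfl⟩

variable {s : AddChar (Additive C) ℂ}

theorem character_eq_sum_filter_add (hs : s ≠ 1)
    (hreal : ∀ ψ : AddChar (Additive C) ℂ, ψ⁻¹ = ψ ↔ ψ = 1 ∨ ψ = s) (a : C) :
    ρ.character a = ∑ ψ : AddChar (Additive C) ℂ with ψ⁻¹ ≠ ψ,
      cyclicMultiplicity ρ ψ * ψ (.ofMul a) +
        (cyclicMultiplicity ρ (1 : AddChar (Additive C) ℂ) +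
          cyclicMultiplicity ρ s * s (.ofMul a)) := by
  have hfilter : Finset.univ.filter (fun ψ : AddChar (Additive C) ℂ => ψ⁻¹ = ψ) = {1, s} := by
    ext ψ
    simp [hreal]
  rw [character_eq_sum_cyclicMultiplicity,
    ← Finset.sum_filter_not_add_sum_filter _ fun ψ : AddChar (Additive C) ℂ => ψ⁻¹ = ψ, hfilter,
    Finset.sum_pair hs.symm, AddChar.one_apply, mul_one]

theorem even_cyclicMultiplicity_add (h : IsDicyclic C z) (hs : s ≠ 1)
    (hreal : ∀ ψ : AddChar (Additive C) ℂ, ψ⁻¹ = ψ ↔ ψ = 1 ∨ ψ = s)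
    (hd : Even (Module.finrank ℂ V)) :
    Even (cyclicMultiplicity ρ (1 : AddChar (Additive C) ℂ) + cyclicMultiplicity ρ s) := by
  have hsum := character_eq_sum_filter_add (ρ := ρ) hs hreal 1
  simp only [C.coe_one, ρ.char_one, ofMul_one, AddChar.map_zero_eq_one, mul_one] at hsum
  norm_cast at hsum
  rw [hsum] at hd
  exact (Nat.even_add.1 hd).1 h.even_sum_cyclicMultiplicity

theorem cyclicMultiplicity_ne_zero (h : IsDicyclic C z) (hz : ρ.character z = Module.finrank ℂ V)
    (hsum : ∑ a : C with a ≠ 1 ∧ a ≠ ⟨z, h.mem⟩, ‖ρ.character (a : P)‖ < 2 * Module.finrank ℂ V)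
    (hsz : s (.ofMul ⟨z, h.mem⟩) = 1) : cyclicMultiplicity ρ s ≠ 0 := by
  intro hzero
  have hcoeff := cyclicMultiplicity_eq ρ s
  have hadd : ∑ a : Additive C, s (-a) * ρ.character a.toMul =
      ∑ a : C, s (.ofMul a⁻¹) * ρ.character a :=
    Fintype.sum_equiv Additive.toMul _ _ fun _ => rfl
  have hC0 : ((Fintype.card (Additive C) : ℂ))⁻¹ ≠ 0 :=
    inv_ne_zero (Nat.cast_ne_zero.2 Fintype.card_ne_zero)
  rw [hzero, Nat.cast_zero, finiteFourierCoeff, mul_eq_zero, or_iff_right hC0, hadd,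
    ← Finset.sum_filter_add_sum_filter_not _ fun a : C => a ≠ 1 ∧ a ≠ ⟨z, h.mem⟩] at hcoeff
  have hcentral : Finset.univ.filter (fun a : C => ¬ (a ≠ 1 ∧ a ≠ ⟨z, h.mem⟩)) =
      {1, ⟨z, h.mem⟩} := by
    ext a
    simp [or_iff_not_imp_left]
  have hzinv : (⟨z, h.mem⟩ : C)⁻¹ = ⟨z, h.mem⟩ := Subtype.ext h.inv_eq_self
  rw [hcentral, Finset.sum_pair (by simpa [Subtype.ext_iff] using h.ne_one.symm), hzinv, hsz, hz,
    inv_one, ofMul_one, AddChar.map_zero_eq_one, C.coe_one, ρ.char_one, one_mul, ← two_mul,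
    add_eq_zero_iff_eq_neg] at hcoeff
  refine hsum.not_ge ?_
  calc (2 * Module.finrank ℂ V : ℝ) = ‖-(2 * Module.finrank ℂ V : ℂ)‖ := by simp
    _ ≤ ∑ a : C with a ≠ 1 ∧ a ≠ ⟨z, h.mem⟩, ‖s (.ofMul a⁻¹) * ρ.character (a : P)‖ :=
        hcoeff ▸ norm_sum_le _ _
    _ = _ := by simp

end RealCharacters

section IndexTwoSums

variable {P : Type} [Group P] [Fintype P] {C : Subgroup P} [IsCyclic C] {z y : P}
  {V : Type} [AddCommGroup V] [Module ℂ V] [FiniteDimensional ℂ V] {ρ : Representation ℂ P V}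
  {s : AddChar (Additive C) ℂ} {e₁ e₂ e₃ e₄ : P →* ℂ} {c : ℂ}

theorem IsSignExtension.add_mem_inducedSums_two {ψ ψ' : AddChar (Additive C) ℂ} {t t' : ℂ}
    {L L' : P →* ℂ} (hL : IsSignExtension ψ y t L) (hL' : IsSignExtension ψ' y t' L')
    (hne : ψ ≠ ψ' ∨ t ≠ t') : ⇑L + ⇑L' ∈ inducedSums P 2 := by
  refine _root_.add_mem_inducedSums_two ?_ fun x => by rw [hL.sq_eq_one, hL'.sq_eq_one]
  rintro rfl
  refine hne.elim (fun hψ => hψ ?_) fun ht => ht (hL.apply_eq.symm.trans hL'.apply_eq)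
  ext a
  exact (hL.apply_coe a.toMul).symm.trans (hL'.apply_coe a.toMul)

theorem character_eq_sum_zeroExtend_add (h : IsDicyclic C z) (hc : ∀ y ∉ C, ρ.character y = c)
    (hy : y ∉ C) (hs : s ≠ 1) (hreal : ∀ ψ : AddChar (Additive C) ℂ, ψ⁻¹ = ψ ↔ ψ = 1 ∨ ψ = s)
    (he₁ : IsSignExtension (1 : AddChar (Additive C) ℂ) y 1 e₁)
    (he₂ : IsSignExtension (1 : AddChar (Additive C) ℂ) y (-1) e₂)
    (he₃ : IsSignExtension s y 1 e₃) (he₄ : IsSignExtension s y (-1) e₄) :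
    ρ.character = ∑ ψ : AddChar (Additive C) ℂ with ψ⁻¹ ≠ ψ,
        cyclicMultiplicity ρ ψ • zeroExtend C (fun a => ψ (.ofMul a)) +
      (linearMultiplicity ρ e₁ • ⇑e₁ + linearMultiplicity ρ e₂ • ⇑e₂ +
        linearMultiplicity ρ e₃ • (⇑e₃ + ⇑e₄)) := by
  have h₁ := h.two_mul_linearMultiplicity hc hy he₁
  have h₂ := h.two_mul_linearMultiplicity hc hy he₂
  have h₃ := h.two_mul_linearMultiplicity hc hy he₃
  simp only [if_true, if_neg hs, add_zero] at h₁ h₂ h₃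
  funext x
  simp only [Pi.add_apply, Finset.sum_apply, Pi.smul_apply]
  simp only [nsmul_eq_mul]
  by_cases hx : x ∈ C
  · lift x to C using hx
    simp only [zeroExtend_coe, character_eq_sum_filter_add hs hreal, he₁.apply_coe, he₂.apply_coe,
      he₃.apply_coe, he₄.apply_coe, AddChar.one_apply]
    linear_combination -(h₁ + h₂) / 2 - s (.ofMul x) * h₃
  · have hyx : y⁻¹ * x ∈ C := by
      simp [h.mul_mem_iff, hy, hx]
    obtain ⟨a, rfl⟩ : ∃ a : C, x = y * a := ⟨⟨_, hyx⟩, by group⟩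
    simp only [zeroExtend_of_notMem _ hx, hc _ hx, map_mul, he₁.apply_eq, he₂.apply_eq,
      he₃.apply_eq, he₄.apply_eq, he₁.apply_coe, he₂.apply_coe, he₃.apply_coe, he₄.apply_coe,
      AddChar.one_apply, mul_zero, Finset.sum_const_zero]
    linear_combination (h₂ - h₁) / 2

theorem linearMultiplicity_eq_or (h : IsDicyclic C z) (hc : ∀ y ∉ C, ρ.character y = c)
    (hc2 : ‖c‖ ≤ 2) (hy : y ∉ C)
    (heven : Even (cyclicMultiplicity ρ (1 : AddChar (Additive C) ℂ) + cyclicMultiplicity ρ s))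
    (hs : s ≠ 1) (hs0 : c ≠ 0 → cyclicMultiplicity ρ s ≠ 0)
    (he₁ : IsSignExtension (1 : AddChar (Additive C) ℂ) y 1 e₁)
    (he₂ : IsSignExtension (1 : AddChar (Additive C) ℂ) y (-1) e₂)
    (he₃ : IsSignExtension s y 1 e₃) :
    linearMultiplicity ρ e₁ = linearMultiplicity ρ e₂ ∨
      (linearMultiplicity ρ e₁ = linearMultiplicity ρ e₂ + 2 ∨
        linearMultiplicity ρ e₂ = linearMultiplicity ρ e₁ + 2) ∧ linearMultiplicity ρ e₃ ≠ 0 := by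
  have h₁ := h.two_mul_linearMultiplicity hc hy he₁
  have h₂ := h.two_mul_linearMultiplicity hc hy he₂
  have h₃ := h.two_mul_linearMultiplicity hc hy he₃
  simp only [if_true, if_neg hs, add_zero] at h₁ h₂ h₃
  have hdiff : c = ((linearMultiplicity ρ e₁ - linearMultiplicity ρ e₂ : ℤ) : ℂ) := by
    push_cast
    linear_combination (h₂ - h₁) / 2
  have hsum : linearMultiplicity ρ e₁ + linearMultiplicity ρ e₂ =
      cyclicMultiplicity ρ (1 : AddChar (Additive C) ℂ) := by
    apply Nat.cast_injective (R := ℂ)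
    push_cast
    linear_combination (h₁ + h₂) / 2
  have hthree : 2 * linearMultiplicity ρ e₃ = cyclicMultiplicity ρ s := by exact_mod_cast h₃
  rcases eq_or_ne c 0 with rfl | hc0
  · left
    exact_mod_cast sub_eq_zero.1 (Int.cast_eq_zero.1 hdiff.symm)
  have hbound : |(linearMultiplicity ρ e₁ - linearMultiplicity ρ e₂ : ℤ)| ≤ 2 := by
    rw [hdiff, Complex.norm_intCast] at hc2
    exact_mod_cast hc2
  have hs0 := hs0 hc0
  rw [abs_le] at hbound
  obtain ⟨k, hk⟩ := heven
  omega

theorem character_mem_inducedSums_two (h : IsDicyclic C z) (hsqrt : ∃ i ∈ C, i * i = z)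
    (hc : ∀ y ∉ C, ρ.character y = c) (hc2 : ‖c‖ ≤ 2) (hd : Even (Module.finrank ℂ V)) {ζ : ℂ}
    (hz : ∀ x, ρ.character (z * x) = ζ * ρ.character x)
    (hsum : ∑ a : C with a ≠ 1 ∧ a ≠ ⟨z, h.mem⟩, ‖ρ.character (a : P)‖ <
      2 * Module.finrank ℂ V) :
    ρ.character ∈ inducedSums P 2 := by
  obtain ⟨y, hy⟩ := h.exists_notMem
  obtain ⟨i, hiC, hi⟩ := hsqrt
  lift i to C using hiC
  have hcard : 2 ∣ Fintype.card (Additive C) := by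
    rw [Fintype.card_additive]
    have hz2 : orderOf (⟨z, h.mem⟩ : C) = 2 :=
      orderOf_eq_prime (Subtype.ext (by simpa [pow_two] using h.sq_eq_one))
        (by simpa [Subtype.ext_iff] using h.ne_one)
    exact hz2 ▸ orderOf_dvd_card
  obtain ⟨s, hs, hreal⟩ := exists_addChar_forall_inv_eq_self hcard
  have hsinv : s⁻¹ = s := (hreal s).2 (.inr rfl)
  obtain ⟨e₁, he₁⟩ := h.exists_isSignExtension hy inv_one hi (mul_one 1)
  obtain ⟨e₂, he₂⟩ := h.exists_isSignExtension hy inv_one hi (t := -1) (by norm_num)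
  obtain ⟨e₃, he₃⟩ := h.exists_isSignExtension hy hsinv hi (mul_one 1)
  obtain ⟨e₄, he₄⟩ := h.exists_isSignExtension hy hsinv hi (t := -1) (by norm_num)
  have hsz : s (.ofMul ⟨z, h.mem⟩) = 1 := by
    rw [show (⟨z, h.mem⟩ : C) = i ^ 2 from Subtype.ext (by simp [pow_two, hi]), ← he₃.apply_coe,
      C.coe_pow, map_pow, he₃.sq_eq_one]
  have hs0 (hc0 : c ≠ 0) : cyclicMultiplicity ρ s ≠ 0 := by
    refine h.cyclicMultiplicity_ne_zero ?_ hsum hsz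
    have hcz := hz y
    rw [hc y hy, hc _ (by simp [h.mul_mem_iff, hy, h.mem])] at hcz
    rw [← mul_one z, hz, ← mul_right_cancel₀ hc0 ((one_mul c).trans hcz), one_mul, ρ.char_one]
  have heven := h.even_cyclicMultiplicity_add (ρ := ρ) hs hreal hd
  have hneg : (1 : ℂ) ≠ -1 := by norm_num
  rw [h.character_eq_sum_zeroExtend_add hc hy hs hreal he₁ he₂ he₃ he₄]
  refine add_mem h.sum_zeroExtend_mem_inducedSums (nsmul_add_nsmul_add_nsmul_mem
    (he₁.add_mem_inducedSums_two he₂ (.inr hneg)) (he₃.add_mem_inducedSums_two he₄ (.inr hneg))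
    (he₁.add_mem_inducedSums_two he₃ (.inl hs.symm))
    (he₁.add_mem_inducedSums_two he₄ (.inl hs.symm))
    (he₂.add_mem_inducedSums_two he₃ (.inl hs.symm))
    (he₂.add_mem_inducedSums_two he₄ (.inl hs.symm))
    (h.linearMultiplicity_eq_or hc hc2 hy heven hs hs0 he₁ he₂ he₃))

end IndexTwoSums

end IsDicyclic

theorem inv_mul_mul_eq_iff_of_mem_center {G : Type} [Group G] {z g x : G}
    (hz : z ∈ Subgroup.center G) : g⁻¹ * x * g = z ↔ x = z := by
  rw [mul_assoc, inv_mul_eq_iff_eq_mul, Subgroup.mem_center_iff.1 hz g, mul_left_inj]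

theorem exists_mul_self_eq_of_four_dvd_card {A : Type} [Group A] [IsCyclic A] [Finite A] {z : A}
    (hA : 4 ∣ Nat.card A) (hz : z * z = 1) : ∃ i : A, i * i = z := by
  obtain ⟨g, hg⟩ := IsCyclic.exists_monoid_generator (α := A)
  obtain ⟨k, rfl⟩ := hg z
  obtain ⟨m, hm⟩ := hA
  have hdvd : 4 * m ∣ k + k := by
    rw [← hm, ← orderOf_eq_card_of_forall_mem_powers hg]
    exact orderOf_dvd_of_pow_eq_one (by simpa [pow_add] using hz)
  obtain ⟨j, hj⟩ := hdvd
  exact ⟨g ^ (m * j), by simp only [← pow_add]; congr 1; linarith⟩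

theorem IsDicyclic.comap {P H : Type} [Group P] [Group H] {C : Subgroup H} {z : H}
    (h : IsDicyclic C z) {φ : P →* H} (hφ : Function.Injective φ) {y : P} (hy : φ y ∉ C) :
    IsDicyclic (C.comap φ) (y * y) where
  index_eq_two := Subgroup.index_eq_two_iff'.2 ⟨y, fun b => by
    simp only [Subgroup.mem_comap, map_mul, h.mul_mem_iff, hy, false_iff]
    exact (em _).symm.imp (fun hb => ⟨hb, hb⟩) fun hb => ⟨hb, not_not.2 hb⟩⟩
  conj_eq_inv x hx a ha := hφ (by simpa using h.conj_eq_inv (φ x) hx (φ a) ha)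
  mul_self x hx := hφ (by rw [map_mul, map_mul, h.mul_self _ hx, h.mul_self _ hy])
  ne_one hyy := h.ne_one (by rw [← h.mul_self _ hy, ← map_mul, hyy, map_one])

section InvertedExtension

variable {G : Type} [Group G] {T : Subgroup G} {w : G}

theorem mul_eq_inv_mul_of_conj_eq_inv (hinv : ∀ t ∈ T, w * t * w⁻¹ = t⁻¹) {t : G} (ht : t ∈ T) :
    w * t = t⁻¹ * w :=
  mul_inv_eq_iff_eq_mul.1 (hinv t ht)

/-- The subgroup `T ∪ wT` generated by `T` and an element `w` that inverts `T` and whose square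
lies in `T`. -/
def invertedExtension (hsq : w * w ∈ T) (hinv : ∀ t ∈ T, w * t * w⁻¹ = t⁻¹) : Subgroup G where
  carrier := {g | g ∈ T ∨ ∃ t ∈ T, g = w * t}
  one_mem' := .inl T.one_mem
  mul_mem' := by
    rintro _ _ (ha | ⟨s, hs, rfl⟩) (hb | ⟨t, ht, rfl⟩)
    · exact .inl (T.mul_mem ha hb)
    · refine .inr ⟨_, T.mul_mem (T.inv_mem ha) ht, ?_⟩
      rw [← mul_assoc, ← mul_assoc, mul_eq_inv_mul_of_conj_eq_inv hinv (T.inv_mem ha), inv_inv]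
    · exact .inr ⟨_, T.mul_mem hs hb, mul_assoc _ _ _⟩
    · refine .inl ?_
      rw [mul_eq_inv_mul_of_conj_eq_inv hinv hs, mul_assoc, ← mul_assoc w]
      exact T.mul_mem (T.inv_mem hs) (T.mul_mem hsq ht)
  inv_mem' := by
    rintro _ (ha | ⟨t, ht, rfl⟩)
    · exact .inl (T.inv_mem ha)
    · refine .inr ⟨_, T.mul_mem (T.inv_mem hsq) ht, ?_⟩
      rw [mul_eq_inv_mul_of_conj_eq_inv hinv ht]
      group

theorem isDicyclic_subgroupOf_invertedExtension [IsMulCommutative T] (hw : w ∉ T)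
    (hsq : w * w ∈ T) (hne : w * w ≠ 1) (hinv : ∀ t ∈ T, w * t * w⁻¹ = t⁻¹) :
    IsDicyclic (T.subgroupOf (invertedExtension hsq hinv)) ⟨w * w, .inl hsq⟩ := by
  have hcomm {s t : G} (hs : s ∈ T) (ht : t ∈ T) : s * t = t * s :=
    congrArg Subtype.val (mul_comm' (⟨s, hs⟩ : T) ⟨t, ht⟩)
  have hout {y : invertedExtension hsq hinv} (hy : y ∉ T.subgroupOf (invertedExtension hsq hinv)) :
      ∃ t ∈ T, (y : G) = w * t :=
    y.2.resolve_left hy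
  refine ⟨?_, fun y hy a ha => ?_, fun y hy => ?_, by simpa [Subtype.ext_iff] using hne⟩
  · refine Subgroup.index_eq_two_iff'.2 ⟨⟨w, .inr ⟨1, T.one_mem, (mul_one w).symm⟩⟩, ?_⟩
    rintro ⟨_, hb | ⟨t, ht, rfl⟩⟩ <;> simp only [Subgroup.mem_subgroupOf, Subgroup.coe_mul]
    · exact .inr ⟨hb, by rwa [T.mul_mem_cancel_right hb]⟩
    · exact .inl ⟨by rw [← mul_assoc]; exact T.mul_mem hsq ht, by rwa [T.mul_mem_cancel_right ht]⟩
  · obtain ⟨t, ht, hyt⟩ := hout hy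
    apply Subtype.ext
    rw [Subgroup.coe_mul, Subgroup.coe_mul, Subgroup.coe_inv, Subgroup.coe_inv, hyt,
      mul_assoc w, hcomm ht (t := a) ha, ← hinv a ha]
    group
  · obtain ⟨t, ht, hyt⟩ := hout hy
    apply Subtype.ext
    rw [Subgroup.coe_mul, hyt]
    nth_rw 1 [mul_eq_inv_mul_of_conj_eq_inv hinv ht]
    rw [mul_assoc, ← mul_assoc w, hcomm hsq ht, inv_mul_cancel_left]

end InvertedExtension

/-- A cyclic subgroup `T` of `G` that contains the central involution `z`, is inverted by some `w`
with `w * w = z`, and for which the group generated by `T` and `w` has odd index in `G`. These are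
the maximal tori of `SL₂(q)` that carry its Sylow `2`-subgroup, with `z = -1`. -/
structure IsDicyclicTorus {G : Type} [Group G] (T : Subgroup G) (z : G) : Prop where
  isCyclic : IsCyclic T
  mem : z ∈ T
  mem_center : z ∈ Subgroup.center G
  ne_one : z ≠ 1
  exists_conj_eq_inv : ∃ w ∉ T, w * w = z ∧ ∀ t ∈ T, w * t * w⁻¹ = t⁻¹
  four_dvd_card : 4 ∣ Nat.card T
  card_eq : ∃ r, ¬ 2 ∣ r ∧ Nat.card G = 2 * Nat.card T * r

namespace IsDicyclicTorus

section SylowTwoSubgroup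

variable {G : Type} [Group G] {T : Subgroup G} {z : G}

theorem exists_isDicyclic_subgroupOf (h : IsDicyclicTorus T z) :
    ∃ (H : Subgroup G) (hz : z ∈ H), T ≤ H ∧ IsDicyclic (T.subgroupOf H) ⟨z, hz⟩ := by
  obtain ⟨w, hw, rfl, hinv⟩ := h.exists_conj_eq_inv
  have hcomm : IsMulCommutative T := h.isCyclic.isMulCommutative
  exact ⟨invertedExtension h.mem hinv, .inl h.mem, fun t ht => .inl ht,
    isDicyclic_subgroupOf_invertedExtension hw h.mem h.ne_one hinv⟩

/-- The part of the subgroup `P` that conjugation by `g⁻¹` moves into `T`. -/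
def conjComap (P T : Subgroup G) (g : G) : Subgroup P :=
  T.comap ((MulAut.conj g⁻¹).toMonoidHom.comp P.subtype)

theorem mem_conjComap {P : Subgroup G} {g : G} {x : P} :
    x ∈ conjComap P T g ↔ g⁻¹ * x * g ∈ T := by
  simp [conjComap]

theorem injective_conj_subtype (P : Subgroup G) (g : G) :
    Function.Injective ((MulAut.conj g⁻¹).toMonoidHom.comp P.subtype) :=
  (MulAut.conj g⁻¹).injective.comp P.subtype_injective

/-- Conjugation by `g⁻¹`, as an embedding of `conjComap P T g` into `T`. -/
def conjComapHom (P T : Subgroup G) (g : G) : conjComap P T g →* T :=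
  ((MulAut.conj g⁻¹).toMonoidHom.comp P.subtype).subgroupComap T

theorem conjComapHom_apply (P : Subgroup G) (g : G) (x : conjComap P T g) :
    (conjComapHom P T g x : G) = g⁻¹ * x * g := by
  change g⁻¹ * x * g⁻¹⁻¹ = g⁻¹ * x * g
  rw [inv_inv]

theorem injective_conjComapHom (P : Subgroup G) (g : G) :
    Function.Injective (conjComapHom P T g) := fun _ _ hxy =>
  Subtype.ext (injective_conj_subtype P g (congrArg Subtype.val hxy))

theorem isCyclic_conjComap (h : IsDicyclicTorus T z) (P : Subgroup G) (g : G) :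
    IsCyclic (conjComap P T g) :=
  have := h.isCyclic
  isCyclic_of_injective _ (injective_conjComapHom P g)

variable [Finite G]

theorem two_mul_card_sylow_part (h : IsDicyclicTorus T z) (P : Sylow 2 G) :
    2 * 2 ^ (Nat.card T).factorization 2 = Nat.card P := by
  obtain ⟨r, hr, hcard⟩ := h.card_eq
  have hr0 : r ≠ 0 := by
    rintro rfl
    simp at hr
  rw [P.card_eq_multiplicity, hcard, Nat.factorization_mul (by simp [Nat.card_pos.ne']) hr0,
    Nat.factorization_mul two_ne_zero Nat.card_pos.ne']
  simp [Nat.factorization_eq_zero_of_not_dvd hr, pow_add, Nat.prime_two.factorization_self]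

theorem exists_isDicyclic_sylow (h : IsDicyclicTorus T z) (P : Sylow 2 G) :
    ∃ (g : G) (hz : z ∈ P), IsDicyclic (conjComap P T g) ⟨z, hz⟩ := by
  obtain ⟨H, hzH, hTH, hdic⟩ := h.exists_isDicyclic_subgroupOf
  have hindex : ¬ 2 ∣ H.index := by
    obtain ⟨r, hr, hcard⟩ := h.card_eq
    have hT := T.index_mul_card
    rw [← Subgroup.relIndex_mul_index hTH, Subgroup.relIndex, hdic.index_eq_two, hcard,
      mul_right_comm] at hT
    rwa [Nat.eq_of_mul_eq_mul_left (by simp [Nat.card_pos]) hT]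
  obtain ⟨g, hg⟩ := exists_conj_mem_of_not_dvd_index P.isPGroup' hindex
  let φ : P →* H := ((MulAut.conj g⁻¹).toMonoidHom.comp (P : Subgroup G).subtype).codRestrict H
    fun x => by simpa using hg x x.2
  have hφ : Function.Injective φ := fun x y hxy =>
    injective_conj_subtype (P : Subgroup G) g (congrArg Subtype.val hxy)
  obtain ⟨y, hy⟩ : ∃ y, φ y ∉ T.subgroupOf H := by
    by_contra! hle
    have htop : conjComap (P : Subgroup G) T g = ⊤ := eq_top_iff.2 fun x _ => hle x
    have hdvd := Subgroup.card_dvd_of_injective _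
      (injective_conjComapHom (T := T) (P : Subgroup G) g)
    rw [htop, Subgroup.card_top, ← h.two_mul_card_sylow_part P, ← pow_succ',
      Nat.prime_two.pow_dvd_iff_le_factorization Nat.card_pos.ne'] at hdvd
    exact Nat.not_succ_le_self _ hdvd
  have hyy : (y * y : G) = z := by
    have hconj : g⁻¹ * (y * y) * g = z := by
      simpa [φ, mul_assoc] using congrArg Subtype.val (hdic.mul_self _ hy)
    exact (inv_mul_mul_eq_iff_of_mem_center h.mem_center).1 hconj
  have hzP : z ∈ P := hyy ▸ (y * y).2
  have hyy' : y * y = ⟨z, hzP⟩ := Subtype.ext hyy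
  exact ⟨g, hzP, hyy' ▸ hdic.comap hφ hy⟩

theorem card_conjComap (h : IsDicyclicTorus T z) {P : Sylow 2 G} {g : G} {z' : P}
    (hC : IsDicyclic (conjComap P T g) z') :
    Nat.card (conjComap (P : Subgroup G) T g) = 2 ^ (Nat.card T).factorization 2 := by
  have hmul := (conjComap (P : Subgroup G) T g).index_mul_card
  rw [hC.index_eq_two] at hmul
  exact Nat.eq_of_mul_eq_mul_left two_pos (hmul.trans (h.two_mul_card_sylow_part P).symm)

theorem exists_mul_self_eq (h : IsDicyclicTorus T z) {P : Sylow 2 G} {g : G} {z' : P}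
    (hC : IsDicyclic (conjComap P T g) z') : ∃ i ∈ conjComap (P : Subgroup G) T g, i * i = z' := by
  have := h.isCyclic_conjComap P g
  have hcard : 4 ∣ Nat.card (conjComap (P : Subgroup G) T g) := by
    rw [h.card_conjComap hC, show 4 = 2 ^ 2 from rfl]
    exact pow_dvd_pow 2 ((Nat.prime_two.pow_dvd_iff_le_factorization Nat.card_pos.ne').1
      h.four_dvd_card)
  obtain ⟨i, hi⟩ := exists_mul_self_eq_of_four_dvd_card hcard
    (z := ⟨z', hC.mem⟩) (Subtype.ext (by simpa [pow_two] using hC.sq_eq_one))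
  exact ⟨i, i.2, congrArg Subtype.val hi⟩

end SylowTwoSubgroup

section SylowTwoRestriction

variable {G : Type} [Group G] {T : Subgroup G} {z : G} {V : Type} [AddCommGroup V] [Module ℂ V]
  {ρ : Representation ℂ G V}

theorem character_eq_zero_sylow (hzc : z ∈ Subgroup.center G) {P : Subgroup G} {g : G}
    (hzP : z ∈ P) (hC : IsDicyclic (conjComap P T g) ⟨z, hzP⟩)
    (hT : ∀ t ∈ T, t ≠ 1 → t ≠ z → ρ.character t = 0) (hroot : ∀ y, y * y = z → ρ.character y = 0)
    (x : P) (hx1 : x ≠ 1) (hxz : x ≠ ⟨z, hzP⟩) : ρ.character x = 0 := by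
  by_cases hx : x ∈ conjComap P T g
  · rw [← ρ.char_conj (x : G) g⁻¹, inv_inv]
    refine hT _ (mem_conjComap.1 hx) ?_ ?_
    · rwa [Ne, inv_mul_mul_eq_iff_of_mem_center (Subgroup.center G).one_mem, ← P.coe_one,
        ← Subtype.ext_iff]
    · rwa [Ne, inv_mul_mul_eq_iff_of_mem_center hzc, ← Subtype.coe_mk z hzP, ← Subtype.ext_iff]
  · exact hroot x (congrArg Subtype.val (hC.mul_self x hx))

variable [Fintype G]

theorem sum_conjComap_le (h : IsDicyclicTorus T z) {P : Subgroup G} {g : G} (hzP : z ∈ P)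
    (hC : IsDicyclic (conjComap P T g) ⟨z, hzP⟩) :
    ∑ a : conjComap P T g with a ≠ 1 ∧ a ≠ ⟨⟨z, hzP⟩, hC.mem⟩, ‖ρ.character (a : P)‖ ≤
      ∑ t : T with t ≠ 1 ∧ t ≠ ⟨z, h.mem⟩, ‖ρ.character (t : G)‖ := by
  set φ := conjComapHom P T g
  have hφ : Function.Injective φ := injective_conjComapHom P g
  have hφz : φ ⟨⟨z, hzP⟩, hC.mem⟩ = ⟨z, h.mem⟩ := Subtype.ext <|
    (conjComapHom_apply P g _).trans ((inv_mul_mul_eq_iff_of_mem_center h.mem_center).2 rfl)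
  have hchar (a : conjComap P T g) : ρ.character (φ a : G) = ρ.character (a : G) := by
    rw [conjComapHom_apply, ← ρ.char_conj (a : G) g⁻¹, inv_inv]
  simp only [← hchar]
  rw [← Finset.sum_image (f := fun t : T => ‖ρ.character (t : G)‖) hφ.injOn]
  refine Finset.sum_le_sum_of_subset_of_nonneg ?_ fun _ _ _ => norm_nonneg _
  intro t ht
  obtain ⟨a, ha, rfl⟩ := Finset.mem_image.1 ht
  rw [Finset.mem_filter_univ, ← hφz, ← map_one φ, hφ.ne_iff, hφ.ne_iff]
  exact (Finset.mem_filter_univ a).1 ha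

theorem sum_norm_character_le (h : IsDicyclicTorus T z) {C : ℝ} (hC : 0 ≤ C)
    (hT : ∀ t ∈ T, t ≠ 1 → t ≠ z → ‖ρ.character t‖ ≤ C) :
    ∑ t : T with t ≠ 1 ∧ t ≠ ⟨z, h.mem⟩, ‖ρ.character (t : G)‖ ≤ Nat.card T * C := by
  rw [Nat.card_eq_fintype_card, ← nsmul_eq_mul, ← Finset.card_univ, ← Finset.sum_const]
  refine (Finset.sum_le_sum fun t ht => ?_).trans
    (Finset.sum_le_univ_sum_of_nonneg fun _ => hC)
  have ht' := (Finset.mem_filter_univ t).1 ht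
  exact hT t t.2 (fun h1 => ht'.1 (Subtype.ext h1)) fun hz => ht'.2 (Subtype.ext hz)

variable [FiniteDimensional ℂ V] {ζ : ℂ}

theorem sumInducedProperty_of_character_eq_zero (h : IsDicyclicTorus T z) (P : Sylow 2 G)
    (hd : Module.finrank ℂ V = Nat.card T ∨ 2 * Module.finrank ℂ V = Nat.card T)
    (hζ : ζ = 1 ∨ ζ = -1) (hz : ρ.character z = ζ * Module.finrank ℂ V)
    (hT : ∀ t ∈ T, t ≠ 1 → t ≠ z → ρ.character t = 0)
    (hroot : ∀ y, y * y = z → ρ.character y = 0) :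
    SumInducedProperty 2 (P : Subgroup G) ρ.character (Module.finrank ℂ V) := by
  obtain ⟨g, hzP, hC⟩ := h.exists_isDicyclic_sylow P
  have hzero := character_eq_zero_sylow h.mem_center hzP hC hT hroot
  have hcard := h.card_conjComap hC
  set σ : Representation ℂ P V := ρ.comp (P : Subgroup G).subtype
  apply sumInducedProperty_of_mem_inducedSums
  rcases hd with hd | hd
  · have hmem := hC.character_mem_inducedSums_card (ρ := σ) hζ hz hzero
      (by rw [hcard, hd]; exact Nat.ordProj_dvd _ _)
    rwa [hcard, ← hd] at hmem
  · have hd0 : Module.finrank ℂ V ≠ 0 := fun h0 => Nat.card_pos.ne' (hd.symm.trans (by rw [h0]))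
    refine hC.character_mem_inducedSums_half_card (ρ := σ) (h.exists_mul_self_eq hC) hζ hz hzero
      (m := 2 ^ (Module.finrank ℂ V).factorization 2) ?_ (Nat.ordProj_dvd _ _) fun hdvd => ?_
    · rw [hcard, ← hd, Nat.factorization_mul two_ne_zero hd0]
      simp [pow_add, Nat.prime_two.factorization_self]
    · rw [← pow_succ', Nat.prime_two.pow_dvd_iff_le_factorization hd0] at hdvd
      exact Nat.not_succ_le_self _ hdvd

theorem sumInducedProperty_of_norm_le_two (h : IsDicyclicTorus T z) (P : Sylow 2 G)
    (hd : Module.finrank ℂ V % 4 = 2) (hz : ∀ x, ρ.character (z * x) = ζ * ρ.character x) {c : ℂ}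
    (hroot : ∀ y, y * y = z → ρ.character y = c) (hc : ‖c‖ ≤ 2)
    (hsum : ∑ t : T with t ≠ 1 ∧ t ≠ ⟨z, h.mem⟩, ‖ρ.character (t : G)‖ <
      2 * Module.finrank ℂ V) :
    SumInducedProperty 2 (P : Subgroup G) ρ.character (Module.finrank ℂ V) := by
  obtain ⟨g, hzP, hC⟩ := h.exists_isDicyclic_sylow P
  have := h.isCyclic_conjComap P g
  set σ : Representation ℂ P V := ρ.comp (P : Subgroup G).subtype
  apply sumInducedProperty_of_mem_inducedSums
  have hfac : (Module.finrank ℂ V).factorization 2 = 1 := by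
    obtain ⟨k, hk⟩ : ∃ k, Module.finrank ℂ V = 2 * (2 * k + 1) :=
      ⟨Module.finrank ℂ V / 4, by omega⟩
    rw [hk, Nat.factorization_mul two_ne_zero (by omega)]
    simp [Nat.prime_two.factorization_self, Nat.factorization_eq_zero_of_not_dvd]
  rw [hfac, pow_one]
  refine hC.character_mem_inducedSums_two (ρ := σ) (h.exists_mul_self_eq hC)
    (fun y hy => hroot y (congrArg Subtype.val (hC.mul_self y hy))) hc
    (Nat.even_iff.2 (by omega)) (fun x => hz x) ?_
  refine lt_of_eq_of_lt (Finset.sum_congr ?_ fun _ _ => rfl)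
    ((h.sum_conjComap_le (ρ := ρ) hzP hC).trans_lt hsum)
  congr!

end SylowTwoRestriction

end IsDicyclicTorus

/-! ### The prime two -/

section QuarterTurn

variable {F : Type} [Field F]

/-- The matrix `!![0, -1; 1, 0]`, the standard square root of `-1`. -/
def quarterTurn (F : Type) [Field F] : SL2 F := ⟨!![0, -1; 1, 0], by simp⟩

@[simp]
theorem coe_quarterTurn : (quarterTurn F : Matrix (Fin 2) (Fin 2) F) = !![0, -1; 1, 0] := rfl

theorem quarterTurn_mul_self : quarterTurn F * quarterTurn F = -1 := by
  apply eq_of_entries_eq <;> simp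

theorem neg_one_ne_one (hF : ringChar F ≠ 2) : (-1 : SL2 F) ≠ 1 := fun h =>
  Ring.neg_one_ne_one_of_char_ne_two hF (by simpa using congrArg (fun g : SL2 F => g 0 0) h)

theorem trace_eq_zero_of_mul_self_eq_neg_one {g : SL2 F} (hg : g * g = -1) :
    g 0 0 + g 1 1 = 0 := by
  have hdet := entries_det g
  have h00 : g 0 0 * g 0 0 + g 0 1 * g 1 0 = -1 := by
    simpa using congrArg (fun g : SL2 F => g 0 0) hg
  have h01 : g 0 0 * g 0 1 + g 0 1 * g 1 1 = 0 := by
    simpa using congrArg (fun g : SL2 F => g 0 1) hg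
  have htr00 : (g 0 0 + g 1 1) * g 0 0 = 0 := by linear_combination h00 + hdet
  have htr01 : (g 0 0 + g 1 1) * g 0 1 = 0 := by linear_combination h01
  linear_combination -(g 0 0 + g 1 1) * hdet + g 1 1 * htr00 - g 1 0 * htr01

variable [Finite F]

theorem exists_sq_add_sq_eq (hF : ringChar F ≠ 2) (x : F) : ∃ a b : F, a ^ 2 + b ^ 2 = x := by
  have := Fintype.ofFinite F
  obtain ⟨a, b, hab⟩ := FiniteField.exists_root_sum_quadratic (f := Polynomial.X ^ 2)
    (g := Polynomial.X ^ 2 - Polynomial.C x) (Polynomial.degree_X_pow 2)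
    (Polynomial.degree_X_pow_sub_C two_pos x) (FiniteField.odd_card_of_char_ne_two hF)
  refine ⟨a, b, sub_eq_zero.1 ?_⟩
  simpa [add_sub_assoc] using hab

theorem exists_quadraticForm_eq_one (hF : ringChar F ≠ 2) {a b c : F} (hdet : a * a + b * c = -1) :
    ∃ u v : F, u * (c * u - a * v) - (a * u + b * v) * v = 1 := by
  have htwo : (2 : F) ≠ 0 := Ring.two_ne_zero hF
  by_cases hc : c = 0
  · subst hc
    have ha : a ≠ 0 := by
      rintro rfl
      simp at hdet
    exact ⟨-(1 + b) / (2 * a), 1, by field_simp; ring⟩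
  · obtain ⟨s, t, hst⟩ := exists_sq_add_sq_eq hF c
    exact ⟨(s + a * t) / c, t, by field_simp; linear_combination hst - t ^ 2 * hdet⟩

theorem exists_conj_quarterTurn (hF : ringChar F ≠ 2) {g : SL2 F} (hg : g * g = -1) :
    ∃ k : SL2 F, k * quarterTurn F * k⁻¹ = g := by
  have h11 : g 1 1 = -g 0 0 := by
    linear_combination trace_eq_zero_of_mul_self_eq_neg_one hg
  have hdet : g 0 0 * g 0 0 + g 0 1 * g 1 0 = -1 := by
    linear_combination g 0 0 * h11 - entries_det g
  -- `k` has columns `e` and `g e`, where `e = (u, v)` is chosen so that `det k = 1`.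
  obtain ⟨u, v, huv⟩ := exists_quadraticForm_eq_one hF hdet
  obtain ⟨k, hk⟩ : ∃ k : SL2 F, (k : Matrix (Fin 2) (Fin 2) F) =
      !![u, g 0 0 * u + g 0 1 * v; v, g 1 0 * u - g 0 0 * v] :=
    ⟨⟨_, by simpa using huv⟩, rfl⟩
  refine ⟨k, mul_inv_eq_iff_eq_mul.2 ?_⟩
  apply eq_of_entries_eq <;> simp [hk, h11]
  · linear_combination -u * hdet
  · ring
  · linear_combination -v * hdet

theorem character_eq_character_quarterTurn (hF : ringChar F ≠ 2) {V : Type} [AddCommGroup V]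
    [Module ℂ V] (ρ : Representation ℂ (SL2 F) V) {g : SL2 F} (hg : g * g = -1) :
    ρ.character g = ρ.character (quarterTurn F) := by
  obtain ⟨k, rfl⟩ := exists_conj_quarterTurn hF hg
  rw [ρ.char_conj]

end QuarterTurn

theorem ringChar_ne_two_of_odd_card {F : Type} [Field F] [Fintype F] (hq : Fintype.card F % 2 = 1) :
    ringChar F ≠ 2 := fun hF => by
  have := FiniteField.even_card_of_char_two hF
  omega

section SplitTorus

variable {F : Type} [Field F]

theorem sq_ne_one_of_diagonal_ne {a : Fˣ} (h1 : diagonal a ≠ 1) (hneg : diagonal a ≠ -1) :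
    a ^ 2 ≠ 1 := fun ha => by
  rcases eq_one_or_eq_neg_one_of_sq_eq_one ha with rfl | rfl
  · exact h1 (map_one diagonalHom)
  · exact hneg diagonal_neg_one

variable [Fintype F]

theorem isDicyclicTorus_range_diagonalHom (hq : Fintype.card F % 4 = 1) :
    IsDicyclicTorus (diagonalHom (F := F)).range (-1) where
  isCyclic := isCyclic_of_surjective diagonalHom.rangeRestrict diagonalHom.rangeRestrict_surjective
  mem := ⟨-1, diagonal_neg_one⟩
  mem_center := neg_one_mem_center
  ne_one := neg_one_ne_one (ringChar_ne_two_of_odd_card (by omega))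
  exists_conj_eq_inv := by
    refine ⟨quarterTurn F, ?_, quarterTurn_mul_self, ?_⟩
    · rintro ⟨a, ha⟩
      simpa [diagonalHom] using congrArg (fun g : SL2 F => g 1 0) ha
    · rintro _ ⟨a, rfl⟩
      apply eq_of_entries_eq <;> simp [diagonalHom, Matrix.adjugate_fin_two]
  four_dvd_card := by
    rw [card_range_diagonalHom]
    omega
  card_eq := by
    obtain ⟨m, hm⟩ : ∃ m, Fintype.card F = 4 * m + 1 := ⟨Fintype.card F / 4, by omega⟩
    refine ⟨(2 * m + 1) * (4 * m + 1), ?_, ?_⟩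
    · exact Nat.prime_two.prime.not_dvd_mul (by omega) (by omega)
    · rw [natCard_SL2, card_range_diagonalHom, hm, Nat.add_sub_cancel]
      ring

theorem exists_diagonal_mul_self_eq_neg_one (hq : Fintype.card F % 4 = 1) :
    ∃ a : Fˣ, a ^ 2 ≠ 1 ∧ diagonal a * diagonal a = -1 := by
  have hF : ringChar F ≠ 2 := ringChar_ne_two_of_odd_card (by omega)
  obtain ⟨i, hi⟩ := FiniteField.isSquare_neg_one_iff.2 (show Fintype.card F % 4 ≠ 3 by omega)
  have hi0 : i ≠ 0 := by
    rintro rfl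
    simp at hi
  have hsq : Units.mk0 i hi0 ^ 2 = -1 := Units.ext (by simp [sq, hi])
  refine ⟨Units.mk0 i hi0, ?_, ?_⟩
  · rw [hsq, Ne, Units.ext_iff]
    exact Ring.neg_one_ne_one_of_char_ne_two hF
  · rw [← diagonal_neg_one, ← hsq, sq]
    exact (map_mul diagonalHom _ _).symm

variable {V : Type} [AddCommGroup V] [Module ℂ V] [FiniteDimensional ℂ V]
  {ρ : Representation ℂ (SL2 F) V} [ρ.IsIrreducible] (P : Sylow 2 (SL2 F))

theorem IsCuspidal.sumInducedProperty_of_card_mod_four_eq_one (hρ : IsCuspidal ρ)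
    (hq : Fintype.card F % 4 = 1) :
    SumInducedProperty 2 (P : Subgroup (SL2 F)) ρ.character (Module.finrank ℂ V) := by
  obtain ⟨ζ, hζ, hneg⟩ := exists_sign_character_neg ρ
  refine (isDicyclicTorus_range_diagonalHom hq).sumInducedProperty_of_character_eq_zero P ?_ hζ
    (by rw [hneg, ρ.char_one]) ?_ fun y hy => ?_
  · rw [card_range_diagonalHom]
    exact hρ.finrank.imp id And.right
  · rintro _ ⟨a, rfl⟩ h1 hz
    exact hρ.character_diagonal a (sq_ne_one_of_diagonal_ne h1 hz)
  · have hF : ringChar F ≠ 2 := ringChar_ne_two_of_odd_card (by omega)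
    obtain ⟨i, hi, hroot⟩ := exists_diagonal_mul_self_eq_neg_one hq
    rw [character_eq_character_quarterTurn hF ρ hy,
      ← character_eq_character_quarterTurn hF ρ hroot, hρ.character_diagonal i hi]

theorem IsPrincipalSeries.sumInducedProperty_of_card_mod_four_eq_one (hρ : IsPrincipalSeries ρ)
    (hq : Fintype.card F % 4 = 1) (hd : 2 ∣ Module.finrank ℂ V) :
    SumInducedProperty 2 (P : Subgroup (SL2 F)) ρ.character (Module.finrank ℂ V) := by
  have hF : ringChar F ≠ 2 := ringChar_ne_two_of_odd_card (by omega)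
  have hdim : Module.finrank ℂ V = Fintype.card F + 1 := hρ.finrank.resolve_right (by omega)
  have hT := isDicyclicTorus_range_diagonalHom hq
  obtain ⟨ζ, -, hneg⟩ := exists_sign_character_neg ρ
  obtain ⟨i, hi, hroot⟩ := exists_diagonal_mul_self_eq_neg_one hq
  refine hT.sumInducedProperty_of_norm_le_two P (by omega)
    (fun x => by rw [neg_one_mul, hneg]) (fun y hy => character_eq_character_quarterTurn hF ρ hy)
    ?_ ?_
  · rw [← character_eq_character_quarterTurn hF ρ hroot]
    exact hρ.norm_character_diagonal_le i hi
  · refine (hT.sum_norm_character_le zero_le_two ?_).trans_lt ?_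
    · rintro _ ⟨a, rfl⟩ h1 hz
      exact hρ.norm_character_diagonal_le a (sq_ne_one_of_diagonal_ne h1 hz)
    · have hlt : Fintype.card F - 1 < Fintype.card F + 1 := by omega
      rw [card_range_diagonalHom, hdim, mul_comm]
      gcongr

end SplitTorus

section NonsplitTorus

variable {F : Type} [Field F]

/-- The elements of norm `1` in the quadratic algebra `F[i]`, `i² = -1`. -/
abbrev normOneSubgroup (F : Type) [Field F] : Subgroup (QuadraticAlgebra F (-1) 0)ˣ :=
  (Units.map QuadraticAlgebra.norm).ker

/-- The rotation matrix `!![x, y; -y, x]` attached to an element `x + y i` of norm `1`. -/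
def rotationMatrix (u : normOneSubgroup F) : SL2 F :=
  ⟨!![u.1.1.re, u.1.1.im; -u.1.1.im, u.1.1.re], by
    have hnorm : u.1.1.norm = 1 := congrArg Units.val u.2
    rw [QuadraticAlgebra.norm_def] at hnorm
    rw [Matrix.det_fin_two_of]
    linear_combination hnorm⟩

@[simp]
theorem coe_rotationMatrix (u : normOneSubgroup F) :
    (rotationMatrix u : Matrix (Fin 2) (Fin 2) F) =
      !![u.1.1.re, u.1.1.im; -u.1.1.im, u.1.1.re] := rfl

/-- The homomorphism from the elements of norm `1` in `F[i]` to the rotation matrices. -/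
def rotationHom : normOneSubgroup F →* SL2 F where
  toFun := rotationMatrix
  map_one' := by apply eq_of_entries_eq <;> simp [QuadraticAlgebra.re_one, QuadraticAlgebra.im_one]
  map_mul' u v := by
    apply eq_of_entries_eq <;> simp
    all_goals ring

theorem rotationHom_injective : Function.Injective (rotationHom (F := F)) := fun u v huv => by
  have hre : u.1.1.re = v.1.1.re := by
    simpa [rotationHom] using congrArg (fun g : SL2 F => g 0 0) huv
  have him : u.1.1.im = v.1.1.im := by
    simpa [rotationHom] using congrArg (fun g : SL2 F => g 0 1) huv
  exact Subtype.ext (Units.ext (QuadraticAlgebra.ext hre him))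

/-- The group of rotation matrices `!![x, y; -y, x]`, which is a nonsplit maximal torus when `-1`
is not a square in `F`. -/
def rotationSubgroup (F : Type) [Field F] : Subgroup (SL2 F) := rotationHom.range

theorem mem_rotationSubgroup {g : SL2 F} :
    g ∈ rotationSubgroup F ↔ g 1 1 = g 0 0 ∧ g 1 0 = -g 0 1 := by
  refine ⟨by rintro ⟨u, rfl⟩; simp [rotationHom], fun ⟨h11, h10⟩ => ?_⟩
  have hnorm : (⟨g 0 0, g 0 1⟩ : QuadraticAlgebra F (-1) 0).norm = 1 := by
    rw [QuadraticAlgebra.norm_def]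
    linear_combination entries_det g - g 0 0 * h11 + g 0 1 * h10
  have hunit : IsUnit (⟨g 0 0, g 0 1⟩ : QuadraticAlgebra F (-1) 0) :=
    QuadraticAlgebra.isUnit_iff_norm_isUnit.2 (by rw [hnorm]; exact isUnit_one)
  refine ⟨⟨hunit.unit, Units.ext hnorm⟩, ?_⟩
  apply eq_of_entries_eq <;> simp [rotationHom, h11, h10]

theorem entry_ne_zero_of_mem_rotationSubgroup {g : SL2 F} (hg : g ∈ rotationSubgroup F)
    (h1 : g ≠ 1) (hneg : g ≠ -1) : g 0 1 ≠ 0 := by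
  obtain ⟨h11, h10⟩ := mem_rotationSubgroup.1 hg
  intro h01
  have hsq : g 0 0 * g 0 0 = 1 := by
    linear_combination entries_det g - g 0 0 * h11 + g 1 0 * h01
  rcases mul_self_eq_one_iff.1 hsq with h00 | h00
  · exact h1 (by apply eq_of_entries_eq <;> simp [h00, h01, h10, h11])
  · exact hneg (by apply eq_of_entries_eq <;> simp [h00, h01, h10, h11])

theorem sq_ne_of_not_isSquare_neg_one (hi : ¬ IsSquare (-1 : F)) (r : F) : r ^ 2 ≠ -1 + 0 * r :=
  fun hr => hi ⟨r, by linear_combination -hr⟩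

theorem isElliptic_of_mem_rotationSubgroup (hi : ¬ IsSquare (-1 : F)) {g : SL2 F}
    (hg : g ∈ rotationSubgroup F) (h1 : g ≠ 1) (hneg : g ≠ -1) : IsElliptic g := by
  have h01 := entry_ne_zero_of_mem_rotationSubgroup hg h1 hneg
  obtain ⟨h11, h10⟩ := mem_rotationSubgroup.1 hg
  intro x
  induction x using Projectivization.ind with | h v hv =>
  rw [Projectivization.smul_mk, Ne, Projectivization.mk_eq_mk_iff']
  rintro ⟨c, hc⟩
  have hc0 : c * v 0 = g 0 0 * v 0 + g 0 1 * v 1 := by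
    simpa [Matrix.SpecialLinearGroup.smul_def, Matrix.mulVec, dotProduct] using congrFun hc 0
  have hc1 : c * v 1 = -g 0 1 * v 0 + g 0 0 * v 1 := by
    simpa [Matrix.SpecialLinearGroup.smul_def, Matrix.mulVec, dotProduct, h11, h10] using
      congrFun hc 1
  have hsum : v 0 * v 0 + v 1 * v 1 = 0 := by
    refine (mul_eq_zero.1 ?_).resolve_left h01
    linear_combination v 0 * hc1 - v 1 * hc0
  have : Fact (∀ r : F, r ^ 2 ≠ -1 + 0 * r) := ⟨sq_ne_of_not_isSquare_neg_one hi⟩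
  have hzero : (⟨v 0, v 1⟩ : QuadraticAlgebra F (-1) 0) = 0 := by
    rw [← QuadraticAlgebra.norm_eq_zero_iff_eq_zero, QuadraticAlgebra.norm_def]
    linear_combination hsum
  refine hv (funext fun j => ?_)
  fin_cases j
  · exact congrArg QuadraticAlgebra.re hzero
  · exact congrArg QuadraticAlgebra.im hzero

theorem unitsMap_norm_surjective [Finite F] (hF : ringChar F ≠ 2) :
    Function.Surjective (Units.map (QuadraticAlgebra.norm (R := F) (a := -1) (b := 0))) := by
  intro c
  obtain ⟨x, y, hxy⟩ := exists_sq_add_sq_eq hF (c : F)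
  have hnorm : (⟨x, y⟩ : QuadraticAlgebra F (-1) 0).norm = c := by
    rw [QuadraticAlgebra.norm_def]
    linear_combination hxy
  have hunit : IsUnit (⟨x, y⟩ : QuadraticAlgebra F (-1) 0) :=
    QuadraticAlgebra.isUnit_iff_norm_isUnit.2 (by rw [hnorm]; exact c.isUnit)
  exact ⟨hunit.unit, Units.ext hnorm⟩

theorem isCyclic_rotationSubgroup [Finite F] (hi : ¬ IsSquare (-1 : F)) :
    IsCyclic (rotationSubgroup F) := by
  have : Fact (∀ r : F, r ^ 2 ≠ -1 + 0 * r) := ⟨sq_ne_of_not_isSquare_neg_one hi⟩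
  have : Finite (QuadraticAlgebra F (-1) 0) :=
    Finite.of_equiv _ (QuadraticAlgebra.equivProd _ _).symm
  exact isCyclic_of_surjective rotationHom.rangeRestrict rotationHom.rangeRestrict_surjective

theorem exists_entries_eq_and_mul_self_eq_neg_one [Finite F] (hF : ringChar F ≠ 2) :
    ∃ w : SL2 F, w 1 1 = -w 0 0 ∧ w 1 0 = w 0 1 ∧ w * w = -1 := by
  obtain ⟨a, b, hab⟩ := exists_sq_add_sq_eq hF (-1)
  obtain ⟨w, hw⟩ : ∃ w : SL2 F, (w : Matrix (Fin 2) (Fin 2) F) = !![a, b; b, -a] :=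
    ⟨⟨_, by rw [Matrix.det_fin_two_of]; linear_combination -hab⟩, rfl⟩
  refine ⟨w, by simp [hw], by simp [hw], ?_⟩
  apply eq_of_entries_eq <;> simp [hw]
  · linear_combination hab
  · ring
  · ring
  · linear_combination hab

theorem exists_conj_eq_inv_rotationSubgroup [Finite F] (hF : ringChar F ≠ 2) :
    ∃ w ∉ rotationSubgroup F, w * w = -1 ∧ ∀ t ∈ rotationSubgroup F, w * t * w⁻¹ = t⁻¹ := by
  obtain ⟨w, hw11, hw10, hsq⟩ := exists_entries_eq_and_mul_self_eq_neg_one hF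
  refine ⟨w, fun hw => ?_, hsq, fun t ht => mul_inv_eq_iff_eq_mul.2 ?_⟩
  · obtain ⟨h11, h10⟩ := mem_rotationSubgroup.1 hw
    have htwo : (2 : F) ≠ 0 := Ring.two_ne_zero hF
    have h00 : w 0 0 = 0 := by
      apply (mul_eq_zero.1 _).resolve_left htwo
      linear_combination hw11 - h11
    have h01 : w 0 1 = 0 := by
      apply (mul_eq_zero.1 _).resolve_left htwo
      linear_combination h10 - hw10
    simpa [h00, h01] using entries_det w
  · obtain ⟨h11, h10⟩ := mem_rotationSubgroup.1 ht
    apply eq_of_entries_eq <;> simp [Matrix.adjugate_fin_two, h11, h10, hw11, hw10] <;> ring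

variable [Fintype F]

theorem natCard_units_quadraticAlgebra (hi : ¬ IsSquare (-1 : F)) :
    Nat.card (QuadraticAlgebra F (-1) 0)ˣ = (Fintype.card F - 1) * (Fintype.card F + 1) := by
  have : Fact (∀ r : F, r ^ 2 ≠ -1 + 0 * r) := ⟨sq_ne_of_not_isSquare_neg_one hi⟩
  have hcard : Nat.card (QuadraticAlgebra F (-1) 0) = Fintype.card F * Fintype.card F := by
    rw [Nat.card_congr (QuadraticAlgebra.equivProd _ _), Nat.card_prod, Nat.card_eq_fintype_card]
  rw [Nat.card_units, hcard, mul_comm (Fintype.card F - 1), ← Nat.mul_self_sub_mul_self_eq, mul_one]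

theorem natCard_rotationSubgroup (hF : ringChar F ≠ 2) (hi : ¬ IsSquare (-1 : F)) :
    Nat.card (rotationSubgroup F) = Fintype.card F + 1 := by
  have hcard := (normOneSubgroup F).index_mul_card
  rw [Subgroup.index_ker, MonoidHom.range_eq_top.2 (unitsMap_norm_surjective hF),
    Subgroup.card_top, Nat.card_eq_fintype_card, Fintype.card_units,
    natCard_units_quadraticAlgebra hi] at hcard
  rw [rotationSubgroup, ← Nat.card_congr (MonoidHom.ofInjective rotationHom_injective).toEquiv]
  exact Nat.eq_of_mul_eq_mul_left (Nat.sub_pos_of_lt Fintype.one_lt_card) hcard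

theorem not_isSquare_neg_one (hq : Fintype.card F % 4 = 3) : ¬ IsSquare (-1 : F) := fun hi =>
  FiniteField.isSquare_neg_one_iff.1 hi hq

theorem isDicyclicTorus_rotationSubgroup (hq : Fintype.card F % 4 = 3) :
    IsDicyclicTorus (rotationSubgroup F) (-1) where
  isCyclic := isCyclic_rotationSubgroup (not_isSquare_neg_one hq)
  mem := mem_rotationSubgroup.2 (by simp)
  mem_center := neg_one_mem_center
  ne_one := neg_one_ne_one (ringChar_ne_two_of_odd_card (by omega))
  exists_conj_eq_inv := exists_conj_eq_inv_rotationSubgroup (ringChar_ne_two_of_odd_card (by omega))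
  four_dvd_card := by
    rw [natCard_rotationSubgroup (ringChar_ne_two_of_odd_card (by omega)) (not_isSquare_neg_one hq)]
    omega
  card_eq := by
    obtain ⟨m, hm⟩ : ∃ m, Fintype.card F = 4 * m + 3 := ⟨Fintype.card F / 4, by omega⟩
    refine ⟨(2 * m + 1) * (4 * m + 3), ?_, ?_⟩
    · exact Nat.prime_two.prime.not_dvd_mul (by omega) (by omega)
    · rw [natCard_SL2, natCard_rotationSubgroup (ringChar_ne_two_of_odd_card (by omega))
        (not_isSquare_neg_one hq), hm, show 4 * m + 3 - 1 = 2 * (2 * m + 1) by omega]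
      ring

end NonsplitTorus

theorem card_mul_sum_le_mul_sum_of_card_conj_le {G : Type} [Group G] [Fintype G] {n : G → ℝ}
    (hn : ∀ g, 0 ≤ n g) (hconj : ∀ g k, n (k * g * k⁻¹) = n g) {S E : G → Prop}
    [DecidablePred S] [DecidablePred E] (hSE : ∀ s, S s → ∀ k, E (k * s * k⁻¹)) {c : ℕ}
    (hc : ∀ s, S s → Finset.card {k | S (k * s * k⁻¹)} ≤ c) :
    Fintype.card G * ∑ s with S s, n s ≤ c * ∑ g with E g, n g := by
  have hcount (g : G) : Finset.card {k | S (k⁻¹ * g * k)} ≤ c := by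
    by_cases hex : ∃ k₀, S (k₀⁻¹ * g * k₀)
    · obtain ⟨k₀, hk₀⟩ := hex
      refine le_of_eq_of_le (Finset.card_equiv ((Equiv.inv G).trans (Equiv.mulRight k₀))
        fun k => ?_) (hc _ hk₀)
      simp [mul_assoc]
    · simp_all
  have hsum (k : G) : ∑ s with S s, n s = ∑ g with E g, if S (k⁻¹ * g * k) then n g else 0 := by
    rw [← Finset.sum_filter]
    refine Finset.sum_nbij' (fun s => k * s * k⁻¹) (fun g => k⁻¹ * g * k) (fun s hs => ?_)
      (by simp +contextual) (by simp [mul_assoc]) (by simp [mul_assoc]) (by simp [hconj])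
    have hs' := (Finset.mem_filter_univ s).1 hs
    simpa [mul_assoc, hs'] using hSE s hs' k
  calc Fintype.card G * ∑ s with S s, n s
      = ∑ k : G, ∑ g with E g, if S (k⁻¹ * g * k) then n g else 0 := by
        rw [← Finset.sum_congr rfl fun k _ => hsum k, Finset.sum_const, Finset.card_univ,
          nsmul_eq_mul]
    _ = ∑ g with E g, Finset.card {k | S (k⁻¹ * g * k)} * n g := by
        rw [Finset.sum_comm]
        simp_rw [← Finset.sum_filter, Finset.sum_const, nsmul_eq_mul]
    _ ≤ ∑ g with E g, c * n g := by
        gcongr with g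
        · exact hn g
        · exact_mod_cast hcount g
    _ = c * ∑ g with E g, n g := (Finset.mul_sum ..).symm

section NonsplitTorusCharacter

variable {F : Type} [Field F]

theorem IsElliptic.conj {g : SL2 F} (hg : IsElliptic g) (k : SL2 F) : IsElliptic (k * g * k⁻¹) :=
  fun x hx => hg (k⁻¹ • x) (eq_inv_smul_iff.2 (by rwa [← mul_smul, ← mul_smul]))

theorem trace_conj (g k : SL2 F) : (k * g * k⁻¹) 0 0 + (k * g * k⁻¹) 1 1 = g 0 0 + g 1 1 := by
  have htrace := Matrix.trace_mul_comm (k * g : SL2 F).1 (k⁻¹ : SL2 F).1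
  rw [← Matrix.SpecialLinearGroup.coe_mul, ← Matrix.SpecialLinearGroup.coe_mul,
    inv_mul_cancel_left] at htrace
  simpa only [Matrix.trace_fin_two] using htrace

theorem conj_entries_of_mem_rotationSubgroup (hF : ringChar F ≠ 2) {t k : SL2 F}
    (ht : t ∈ rotationSubgroup F) (hk : k * t * k⁻¹ ∈ rotationSubgroup F) :
    (k * t * k⁻¹) 0 0 = t 0 0 ∧
      ((k * t * k⁻¹) 0 1 = t 0 1 ∨ (k * t * k⁻¹) 0 1 = -t 0 1) := by
  have htrace := trace_conj t k
  have hdet := entries_det t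
  have hdet' := entries_det (k * t * k⁻¹)
  generalize k * t * k⁻¹ = s at *
  rw [mem_rotationSubgroup] at ht hk
  rw [ht.1, ht.2] at hdet
  rw [hk.1, hk.2] at hdet'
  have h00 : s 0 0 = t 0 0 := by
    refine mul_left_cancel₀ (Ring.two_ne_zero hF) ?_
    linear_combination htrace + ht.1 - hk.1
  refine ⟨h00, sq_eq_sq_iff_eq_or_eq_neg.1 ?_⟩
  rw [h00] at hdet'
  linear_combination hdet' - hdet

theorem mem_or_mul_mem_of_conj_mem_rotationSubgroup (hF : ringChar F ≠ 2) {w : SL2 F}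
    (hw11 : w 1 1 = -w 0 0) (hw10 : w 1 0 = w 0 1) {t k : SL2 F} (ht : t ∈ rotationSubgroup F)
    (h1 : t ≠ 1) (hneg : t ≠ -1) (hk : k * t * k⁻¹ ∈ rotationSubgroup F) :
    k ∈ rotationSubgroup F ∨ w * k ∈ rotationSubgroup F := by
  have h01 := entry_ne_zero_of_mem_rotationSubgroup ht h1 hneg
  obtain ⟨hs00, hs01⟩ := conj_entries_of_mem_rotationSubgroup hF ht hk
  obtain ⟨s, hs⟩ : ∃ s, k * t * k⁻¹ = s := ⟨_, rfl⟩
  rw [hs] at hs00 hs01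
  rw [mul_inv_eq_iff_eq_mul] at hs
  have e00 := congrArg (fun g : SL2 F => g 0 0) hs
  have e01 := congrArg (fun g : SL2 F => g 0 1) hs
  obtain ⟨ht11, ht10⟩ := mem_rotationSubgroup.1 ht
  simp only [mul_entry, ht11, ht10, hs00] at e00 e01
  simp only [mem_rotationSubgroup]
  rcases hs01 with hs01 | hs01 <;> rw [hs01] at e00 e01
  · exact .inl ⟨mul_left_cancel₀ h01 (by linear_combination -e01),
      mul_left_cancel₀ h01 (by linear_combination -e00)⟩
  · have hk11 : k 1 1 = -k 0 0 := mul_left_cancel₀ h01 (by linear_combination e01)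
    have hk10 : k 1 0 = k 0 1 := mul_left_cancel₀ h01 (by linear_combination e00)
    right
    simp only [mul_entry, hw11, hw10, hk11, hk10]
    exact ⟨by ring, by ring⟩

theorem quarterTurn_mem_rotationSubgroup : quarterTurn F ∈ rotationSubgroup F :=
  mem_rotationSubgroup.2 (by simp)

theorem quarterTurn_ne_one : quarterTurn F ≠ 1 := fun h => by
  simpa using congrArg (fun g : SL2 F => g 1 0) h

theorem quarterTurn_ne_neg_one : quarterTurn F ≠ -1 := fun h => by
  simpa using congrArg (fun g : SL2 F => g 1 0) h

end NonsplitTorusCharacter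

section NonsplitTorusCharacterSum

variable {F : Type} [Field F] [Fintype F]

theorem card_conj_mem_rotationSubgroup_le (hF : ringChar F ≠ 2) (hi : ¬ IsSquare (-1 : F))
    {t : SL2 F} (ht : t ∈ rotationSubgroup F) (h1 : t ≠ 1) (hneg : t ≠ -1) :
    Finset.card {k | k * t * k⁻¹ ∈ rotationSubgroup F} ≤ 2 * (Fintype.card F + 1) := by
  obtain ⟨w, hw11, hw10, -⟩ := exists_entries_eq_and_mul_self_eq_neg_one hF
  have hcard : Finset.card {k | k ∈ rotationSubgroup F} = Fintype.card F + 1 := by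
    rw [← natCard_rotationSubgroup hF hi, Nat.card_eq_fintype_card, Fintype.card_subtype]
  have hcoset : Finset.card {k | w * k ∈ rotationSubgroup F} = Fintype.card F + 1 := by
    rw [← hcard]
    exact Finset.card_equiv (Equiv.mulLeft w) fun k => by simp
  calc Finset.card {k | k * t * k⁻¹ ∈ rotationSubgroup F}
      ≤ Finset.card {k | k ∈ rotationSubgroup F ∨ w * k ∈ rotationSubgroup F} :=
        Finset.card_le_card <| Finset.monotone_filter_right _ fun k _ hk =>
          mem_or_mul_mem_of_conj_mem_rotationSubgroup hF hw11 hw10 ht h1 hneg hk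
    _ ≤ 2 * (Fintype.card F + 1) := by
        rw [Finset.filter_or, two_mul]
        exact (Finset.card_union_le _ _).trans_eq (by rw [hcard, hcoset])

variable {V : Type} [AddCommGroup V] [Module ℂ V]
  {ρ : Representation ℂ (SL2 F) V}

theorem card_mul_sum_norm_sq_rotationSubgroup_le (hF : ringChar F ≠ 2) (hi : ¬ IsSquare (-1 : F)) :
    Fintype.card (SL2 F) * ∑ t with t ∈ rotationSubgroup F ∧ t ≠ 1 ∧ t ≠ -1, ‖ρ.character t‖ ^ 2 ≤
      2 * (Fintype.card F + 1) * ellipticNormSq ρ := by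
  have hle := card_mul_sum_le_mul_sum_of_card_conj_le (n := fun g => ‖ρ.character g‖ ^ 2)
    (S := fun t => t ∈ rotationSubgroup F ∧ t ≠ 1 ∧ t ≠ -1)
    (fun g => sq_nonneg _) (fun g k => by rw [ρ.char_conj])
    (fun s ⟨hs, h1, hneg⟩ => (isElliptic_of_mem_rotationSubgroup hi hs h1 hneg).conj)
    (fun s ⟨hs, h1, hneg⟩ => (Finset.card_le_card
      (Finset.monotone_filter_right _ fun k _ hk => hk.1)).trans
        (card_conj_mem_rotationSubgroup_le hF hi hs h1 hneg))
  push_cast at hle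
  exact hle

theorem sum_norm_sq_rotationSubgroup_eq (hz : (-1 : SL2 F) ∈ rotationSubgroup F) :
    ∑ t : rotationSubgroup F with t ≠ 1 ∧ t ≠ ⟨-1, hz⟩, ‖ρ.character (t : SL2 F)‖ ^ 2 =
      ∑ t with t ∈ rotationSubgroup F ∧ t ≠ 1 ∧ t ≠ -1, ‖ρ.character t‖ ^ 2 := by
  have hiff (t : rotationSubgroup F) :
      (t ≠ 1 ∧ t ≠ ⟨-1, hz⟩) ↔ (t : SL2 F) ≠ 1 ∧ (t : SL2 F) ≠ -1 := by
    rw [Ne, Ne, Subtype.ext_iff, Subtype.ext_iff]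
    rfl
  refine Finset.sum_nbij (↑) (fun t ht => ?_) Subtype.val_injective.injOn (fun t ht => ?_)
    fun _ _ => rfl
  · exact (Finset.mem_filter_univ _).2 ⟨t.2, (hiff t).1 ((Finset.mem_filter_univ t).1 ht)⟩
  · obtain ⟨hmem, hne⟩ := (Finset.mem_filter_univ t).1 ht
    exact ⟨⟨t, hmem⟩, (Finset.mem_filter_univ _).2 ((hiff ⟨t, hmem⟩).2 hne), rfl⟩

namespace IsCuspidal

theorem sum_norm_sq_rotationSubgroup_le (hρ : IsCuspidal ρ) (hq : Fintype.card F % 4 = 3)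
    (hd : Module.finrank ℂ V = Fintype.card F - 1) (hz : (-1 : SL2 F) ∈ rotationSubgroup F) :
    ∑ t : rotationSubgroup F with t ≠ 1 ∧ t ≠ ⟨-1, hz⟩, ‖ρ.character (t : SL2 F)‖ ^ 2 ≤
      2 * (Fintype.card F - 3) := by
  have hF : ringChar F ≠ 2 := ringChar_ne_two_of_odd_card (by omega)
  have hle := card_mul_sum_norm_sq_rotationSubgroup_le (ρ := ρ) hF (not_isSquare_neg_one hq)
  have hcard : (Fintype.card (SL2 F) : ℝ) =
      (Fintype.card F + 1) * ((Fintype.card F - 1) * Fintype.card F) := by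
    rw [card_SL2]
    push_cast [Nat.cast_sub Fintype.card_pos]
    ring
  rw [sum_norm_sq_rotationSubgroup_eq]
  refine le_of_mul_le_mul_left ?_ (Nat.cast_pos.2 (Fintype.card_pos (α := SL2 F)))
  calc _ ≤ 2 * (Fintype.card F + 1) * ellipticNormSq ρ := hle
    _ ≤ 2 * (Fintype.card F + 1) *
          (Fintype.card F * (Fintype.card F - 1) * (Fintype.card F - 3)) := by
        gcongr
        exact hρ.ellipticNormSq_le hF hd
    _ = Fintype.card (SL2 F) * (2 * (Fintype.card F - 3)) := by
        rw [hcard]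
        ring

theorem sum_norm_rotationSubgroup_lt (hρ : IsCuspidal ρ) (hq : Fintype.card F % 4 = 3)
    (hd : Module.finrank ℂ V = Fintype.card F - 1) (hz : (-1 : SL2 F) ∈ rotationSubgroup F) :
    ∑ t : rotationSubgroup F with t ≠ 1 ∧ t ≠ ⟨-1, hz⟩, ‖ρ.character (t : SL2 F)‖ <
      2 * Module.finrank ℂ V := by
  have hq3 : (3 : ℝ) ≤ Fintype.card F := Nat.ofNat_le_cast.2 (by omega)
  have hcard : (Finset.card {t : rotationSubgroup F | t ≠ 1 ∧ t ≠ ⟨-1, hz⟩} : ℝ) ≤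
      Fintype.card F + 1 := by
    rw [← Nat.cast_add_one, ← natCard_rotationSubgroup (ringChar_ne_two_of_odd_card (by omega))
      (not_isSquare_neg_one hq), Nat.card_eq_fintype_card]
    exact Nat.cast_le.2 (Finset.card_le_univ _)
  refine lt_of_pow_lt_pow_left₀ 2 (by positivity) (sq_sum_le_card_mul_sum_sq.trans_lt ?_)
  calc _ ≤ ((Fintype.card F : ℝ) + 1) * (2 * (Fintype.card F - 3)) :=
        mul_le_mul hcard (hρ.sum_norm_sq_rotationSubgroup_le hq hd hz) (by positivity)
          (by positivity)
    _ < (2 * (Fintype.card F - 1)) ^ 2 := by nlinarith [hq3]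
    _ = (2 * Module.finrank ℂ V) ^ 2 := by rw [hd, Nat.cast_pred Fintype.card_pos]

variable [FiniteDimensional ℂ V] [ρ.IsIrreducible]

open scoped IsMulCommutative in
theorem norm_character_quarterTurn_le (hρ : IsCuspidal ρ) (hq : Fintype.card F % 4 = 3)
    (hd : Module.finrank ℂ V = Fintype.card F - 1) :
    ‖ρ.character (quarterTurn F)‖ ≤ 2 := by
  have hF : ringChar F ≠ 2 := ringChar_ne_two_of_odd_card (by omega)
  have hT := isDicyclicTorus_rotationSubgroup hq
  have := hT.isCyclic.isMulCommutative
  obtain ⟨ζ, hζ, hneg⟩ := exists_sign_character_neg ρ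
  have hcard : Fintype.card (rotationSubgroup F) = Fintype.card F + 1 := by
    rw [← Nat.card_eq_fintype_card, natCard_rotationSubgroup hF (not_isSquare_neg_one hq)]
  have hchar_one : ρ.character 1 = Fintype.card F - 1 := by
    rw [ρ.char_one, hd, Nat.cast_pred Fintype.card_pos]
  refine norm_le_two_of_intCast_finiteFourierCoeff (A := Additive (rotationSubgroup F))
    (f := fun t => ρ.character (t.toMul : SL2 F)) (fun ψ => ?_) (z := .ofMul ⟨-1, hT.mem⟩)
    ?_ ?_ hζ ?_ ?_ ?_ (a := .ofMul ⟨quarterTurn F, quarterTurn_mem_rotationSubgroup⟩) ?_ ?_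
  · obtain ⟨m, hm⟩ := exists_finiteFourierCoeff_character_eq_natCast ρ
      (rotationSubgroup F).subtype ψ
    exact ⟨m, by exact_mod_cast hm⟩
  · exact fun h => hT.ne_one (congrArg Subtype.val (Additive.ofMul.injective h))
  · exact congrArg Additive.ofMul (Subtype.ext (neg_mul_neg (1 : SL2 F) 1 |>.trans (one_mul 1)))
  · rw [Fintype.card_additive, hcard, toMul_zero, Subgroup.coe_one, hchar_one]
    push_cast
    ring
  · exact hneg 1
  · rw [Fintype.card_additive, hcard]
    refine le_trans (le_of_eq ?_) ((hρ.sum_norm_sq_rotationSubgroup_le hq hd hT.mem).trans_eq ?_)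
    · exact Finset.sum_equiv Additive.toMul (fun t => by simp only [Finset.mem_filter_univ]; rfl)
        fun _ _ => rfl
    · push_cast
      ring
  · exact fun h => quarterTurn_ne_one (congrArg Subtype.val (Additive.ofMul.injective h))
  · exact fun h => quarterTurn_ne_neg_one (congrArg Subtype.val (Additive.ofMul.injective h))

theorem sumInducedProperty_of_card_mod_four_eq_three (P : Sylow 2 (SL2 F))
    (hρ : IsCuspidal ρ) (hq : Fintype.card F % 4 = 3) (hd : 2 ∣ Module.finrank ℂ V) :
    SumInducedProperty 2 (P : Subgroup (SL2 F)) ρ.character (Module.finrank ℂ V) := by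
  have hF : ringChar F ≠ 2 := ringChar_ne_two_of_odd_card (by omega)
  have hdim : Module.finrank ℂ V = Fintype.card F - 1 := hρ.finrank.resolve_right (by omega)
  obtain ⟨ζ, -, hneg⟩ := exists_sign_character_neg ρ
  have hT := isDicyclicTorus_rotationSubgroup hq
  refine hT.sumInducedProperty_of_norm_le_two P (by omega)
    (fun x => by rw [neg_one_mul, hneg]) (fun y hy => character_eq_character_quarterTurn hF ρ hy)
    (hρ.norm_character_quarterTurn_le hq hdim) ?_
  convert hρ.sum_norm_rotationSubgroup_lt hq hdim hT.mem

end IsCuspidal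

theorem IsPrincipalSeries.sumInducedProperty_of_card_mod_four_eq_three [FiniteDimensional ℂ V]
    [ρ.IsIrreducible] (P : Sylow 2 (SL2 F)) (hρ : IsPrincipalSeries ρ)
    (hq : Fintype.card F % 4 = 3) :
    SumInducedProperty 2 (P : Subgroup (SL2 F)) ρ.character (Module.finrank ℂ V) := by
  have hF : ringChar F ≠ 2 := ringChar_ne_two_of_odd_card (by omega)
  have hi := not_isSquare_neg_one hq
  obtain ⟨ζ, hζ, hneg⟩ := exists_sign_character_neg ρ
  refine (isDicyclicTorus_rotationSubgroup hq).sumInducedProperty_of_character_eq_zero P ?_ hζ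
    (by rw [hneg, ρ.char_one]) (fun t ht h1 hz => ?_) fun y hy => ?_
  · rw [natCard_rotationSubgroup hF hi]
    exact hρ.finrank.imp id And.right
  · exact hρ.character_elliptic t (isElliptic_of_mem_rotationSubgroup hi ht h1 hz)
  · rw [character_eq_character_quarterTurn hF ρ hy]
    exact hρ.character_elliptic _ (isElliptic_of_mem_rotationSubgroup hi
      quarterTurn_mem_rotationSubgroup quarterTurn_ne_one quarterTurn_ne_neg_one)

end NonsplitTorusCharacterSum

section AllPrimes

variable {p : ℕ} [Fact p.Prime] {F : Type} [Field F] [Fintype F] {V : Type} [AddCommGroup V]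
  [Module ℂ V] [FiniteDimensional ℂ V] {ρ : Representation ℂ (SL2 F) V} [ρ.IsIrreducible]
  (P : Sylow p (SL2 F))

theorem IsCuspidal.sumInducedProperty (hρ : IsCuspidal ρ) (hp : p ∣ Module.finrank ℂ V) :
    SumInducedProperty p (P : Subgroup (SL2 F)) ρ.character (Module.finrank ℂ V) := by
  obtain rfl | hp2 := eq_or_ne p 2
  · have hpred : 2 ∣ Fintype.card F - 1 := hp.trans hρ.finrank_dvd_pred
    have hpos := Fintype.card_pos (α := F)
    obtain hq | hq : Fintype.card F % 4 = 1 ∨ Fintype.card F % 4 = 3 := by omega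
    · exact hρ.sumInducedProperty_of_card_mod_four_eq_one P hq
    · exact hρ.sumInducedProperty_of_card_mod_four_eq_three P hq hp
  · exact hρ.sumInducedProperty_of_ne_two P hp2 hp

theorem IsPrincipalSeries.sumInducedProperty (hρ : IsPrincipalSeries ρ)
    (hp : p ∣ Module.finrank ℂ V) :
    SumInducedProperty p (P : Subgroup (SL2 F)) ρ.character (Module.finrank ℂ V) := by
  obtain rfl | hp2 := eq_or_ne p 2
  · have hsucc : 2 ∣ Fintype.card F + 1 := hp.trans hρ.finrank_dvd_succ
    obtain hq | hq : Fintype.card F % 4 = 1 ∨ Fintype.card F % 4 = 3 := by omega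
    · exact hρ.sumInducedProperty_of_card_mod_four_eq_one P hq hp
    · exact hρ.sumInducedProperty_of_card_mod_four_eq_three P hq
  · exact hρ.sumInducedProperty_of_ne_two P hp2 hp

end AllPrimes

theorem strong_form_for_SL2
    (q : ℕ) (hq : IsPrimePow q)
    (F : Type) [Field F] [Fintype F] (hF : Fintype.card F = q)
    (p : ℕ) [Fact p.Prime]
    (P : Sylow p (Matrix.SpecialLinearGroup (Fin 2) F)) :
    ∀ (V : FDRep ℂ (Matrix.SpecialLinearGroup (Fin 2) F)), CategoryTheory.Simple V →
      SumInducedProperty p (P : Subgroup (Matrix.SpecialLinearGroup (Fin 2) F))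
        V.character (Module.finrank ℂ V) := by
  intro V hV
  have := isIrreducible_of_simple V
  by_cases hp : p ∣ Module.finrank ℂ V
  · obtain hd | hρ | hρ | hρ := finrank_eq_one_or_isCuspidal_or_isSteinberg_or_isPrincipalSeries V.ρ
    · exact absurd (hd ▸ hp) (Fact.out : p.Prime).not_dvd_one
    · exact hρ.sumInducedProperty P hp
    · exact hρ.sumInducedProperty P hp
    · exact hρ.sumInducedProperty P hp
  · exact sumInducedProperty_of_not_dvd V.ρ P hp
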